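/- arXiv:math/9912143 — 2 statements merged into one kernel-verified Lean document; each statement's English description precedes it below -/
import Mathlib

section
/- Let ℓ ≥ 1 be an integer and let ε be either of the two signs. Define f(x) := x · d/dx [ log E_{O_ε(ℓ+1)} e^{x·tr M} ]. Then for every x ∈ ℝ the second-order equation, quadratic in f′′, holds: (x²/4)(f′′)² = −( x(f′)² − (4x² + ℓ²/4)·f′ + x(ℓ² − 1) )·f′ + ( (f′)² − 8x·f′ + ℓ² − 1 )·f + 4f². -/
/-!
The generating function `τ(x) = E_{O_ε(m)} e^{x tr M}`, `m = ℓ + 1`, is computed without the Weyl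
integration formula, by characterising a whole vector of averages through a linear ODE system.

*Group side.* Let `J_k(x)` be the average of `c_k(M) e^{x tr M}` over the component `det M = ε`,
where `c_k` is the `k`-th coefficient of the characteristic polynomial. Left invariance gives
`∫ D_X H = 0` for the derivative of any smooth `H` along `M ↦ exp(tX) M`, `X` antisymmetric. Taking
`H(M) = det(z - M) tr(M (z - M)⁻¹ X) e^{x tr M}` and summing over the generators
`X = E_ij - E_ji` produces a second-order differential expression in `z` of the characteristic
polynomial (`integral_balance_eval`), whose coefficients in `z` are the system
`x J_k' = -k (m - k) J_k - x ((k + 1) J_{k+1} + (m + 1 - k) J_{k-1})` (`hasDerivAt_moment`).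
Here `J_m = τ` (up to the normalising factor `2`), and at `x = 0` only `J_0` and `J_m` survive.

*Integrable side.* Starting from a ratio of Bessel integrals, the Szegő recursion
`Φ_{n+1} = z Φ_n + r_{n+1} Φ_n^*` together with the discrete Painlevé II equation for the reflection
coefficients `p = r_n`, `q = r_{n+1}` builds polynomials `Φ_n`, `Φ_n^*` satisfying a Lax pair in `x`
and `z` (`LaxAt`, `LaxAt.step`, `exists_laxFamily`). With `n = ℓ` and `s = (-1)^m ε`,
the coefficients `Q_k` of `z Φ_n + s Φ_n^*` satisfy the same system as `J_k` up to the
extra term `-σ Q_k`, where `σ = x² (1 - p²) (1 - q²) - n x p q - s x p` (`LaxAt.para`).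

*Comparison.* `D_k = J_k - τ Q_k` vanishes at `0` and solves a homogeneous system, singular at `0`
with a dissipative singular part, so an energy estimate gives `D = 0` near `0⁺` (`system_unique`).
Hence `x τ' / τ = σ` there (`LaxFamily.moment_eq`). The first-order equations for `p`, `q` express
`f`, `f'`, `x f''` as polynomials in `x, p, q`, and the claimed equation becomes a polynomial identity
(`painleve_identity`). Since `τ` is positive and real analytic on `ℝ`, the equation extends from an
interval `(0, δ)` to all of `ℝ`.
-/

open MeasureTheory Matrix

noncomputable section

instance (m : ℕ) : MeasurableSpace (Matrix.orthogonalGroup (Fin m) ℝ) := borel _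

/-- Expectation over the component of the orthogonal group `O(m)` where the determinant
equals `e` (with `e = ±1`): `E_{O_ε(m)} f = 2 ∫_{O(m)} f(M)·𝟙[det M = e] dμ(M)`, where `μ`
is the normalized Haar probability measure on `O(m)`. -/
noncomputable def expO (m : ℕ) (μ : Measure (Matrix.orthogonalGroup (Fin m) ℝ)) (e : ℝ)
    (f : Matrix.orthogonalGroup (Fin m) ℝ → ℝ) : ℝ :=
  2 * ∫ M, (if (M : Matrix (Fin m) (Fin m) ℝ).det = e then f M else 0) ∂μ

open scoped Topology

/-! ### The Lax pair and the Szegő recursion -/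

/-- The Lax pair at the point `x`. The functions `u k` and `v k` are the coefficients of `z ^ k` in the
Szegő polynomials `Φ_n` and `Φ_n^*` (indexed by `ℤ`, to be extended by zero), and `p`, `q` are the
reflection coefficients `r_n`, `r_{n+1}`. The fields `hp`, `hq` are the Riccati-type equations for
`p`, `q`; `hu`, `hv` are the equations in `x`; `hzu`, `hzv` are the equations in `z`, which read as
recurrences once the powers of `z` are compared. -/
structure LaxAt (n : ℕ) (p q : ℝ → ℝ) (u v : ℤ → ℝ → ℝ) (x : ℝ) : Prop where
  hp : HasDerivAt p ((n * p x + 2 * x * q x * (1 - p x ^ 2)) / x) x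
  hq : HasDerivAt q ((-(n + 1) * q x - 2 * x * p x * (1 - q x ^ 2)) / x) x
  hu : ∀ k, HasDerivAt (u k)
    (q x * (v k x - p x * u k x) - (u (k + 1) x - p x * v (k + 1) x)) x
  hv : ∀ k, HasDerivAt (v k)
    (q x * (u k x - p x * v k x) - (v (k - 1) x - p x * u (k - 1) x)) x
  hzu : ∀ k : ℤ, ((k : ℝ) - n) * u k x =
    x * (u (k + 1) x - p x * v (k + 1) x) + x * q x * (v k x - p x * u k x)
  hzv : ∀ k : ℤ, (k : ℝ) * v k x =
    -(x * (v (k - 1) x - p x * u (k - 1) x)) - x * q x * (u k x - p x * v k x)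

/-- The Szegő recursion `Φ_{n+1} = z Φ_n + q Φ_n^*`, `Φ_{n+1}^* = Φ_n^* + q z Φ_n` preserves the Lax pair,
provided the next reflection coefficient `r` solves the discrete Painlevé II equation
`x (p + r) (1 - q²) = -(n + 1) q`. -/
theorem LaxAt.step {n : ℕ} {p q r : ℝ → ℝ} {u v : ℤ → ℝ → ℝ} {x : ℝ}
    (h : LaxAt n p q u v x) (hx : x ≠ 0) (hq1 : 1 - q x ^ 2 ≠ 0)
    (hr : r =ᶠ[𝓝 x] fun y => -p y - (n + 1) * (q y / y) / (1 - q y ^ 2)) :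
    LaxAt (n + 1) q r (fun k y => u (k - 1) y + q y * v k y)
      (fun k y => v k y + q y * u (k - 1) y) x := by
  have hrx : r x = -p x - (n + 1) * (q x / x) / (1 - q x ^ 2) := hr.eq_of_nhds
  have hrx' : x * r x * (1 - q x ^ 2) = -(x * p x) * (1 - q x ^ 2) - (n + 1) * q x := by
    rw [hrx]; field_simp
  have key : (-(n + 1) * q x - 2 * x * p x * (1 - q x ^ 2)) / x
      = (1 - q x ^ 2) * (r x - p x) := by
    rw [div_eq_iff hx]; linear_combination -hrx'
  refine ⟨?_, ?_, ?_, ?_, ?_, ?_⟩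
  · convert h.hq using 1
    rw [key, div_eq_iff hx]; push_cast; linear_combination hrx'
  · have h1 : HasDerivAt (fun y => -p y - (n + 1) * (q y / y) / (1 - q y ^ 2)) _ x :=
      (h.hp.neg).sub ((((h.hq.div (hasDerivAt_id x) hx).const_mul ((n : ℝ) + 1))).div
        ((h.hq.pow 2).const_sub 1) hq1)
    refine (h1.congr_of_eventuallyEq hr).congr_deriv ?_
    simp only [Pi.div_apply, id]
    rw [hrx]
    push_cast
    field_simp
    ring
  · intro k
    refine ((h.hu (k - 1)).add (h.hq.mul (h.hv k))).congr_deriv ?_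
    rw [key]
    simp only [sub_add_cancel, add_sub_cancel_right]
    ring
  · intro k
    refine ((h.hv k).add (h.hq.mul (h.hu (k - 1)))).congr_deriv ?_
    rw [key]
    simp only [sub_add_cancel]
    ring
  · intro k
    have e1 := h.hzu (k - 1)
    have e2 := h.hzv k
    simp only [sub_add_cancel, add_sub_cancel_right] at e1 e2 ⊢
    push_cast at e1 e2 ⊢
    linear_combination e1 + q x * e2 - v k x * hrx'
  · intro k
    have e1 := h.hzu (k - 1)
    have e2 := h.hzv k
    simp only [sub_add_cancel] at e1 e2 ⊢
    push_cast at e1 e2 ⊢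
    linear_combination e2 + q x * e1 + u (k - 1) x * hrx'

/-- A solution of the Lax pair on some interval `(0, δ)`, with `p`, `q` analytic at `0`, with `Φ_n` monic
and supported in degrees `0, …, n`, and with the initial values `Φ_n = z ^ n`, `Φ_n^* = 1` at `x = 0`.
The condition `p0` is written with a factor `n` because `p = r_0 = 1` when `n = 0`. -/
structure LaxFamily (n : ℕ) (p q : ℝ → ℝ) (u v : ℤ → ℝ → ℝ) : Prop where
  ap : AnalyticAt ℝ p 0
  aq : AnalyticAt ℝ q 0
  q0 : q 0 = 0
  p0 : n * p 0 = 0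
  cu : ∀ k, ContinuousAt (u k) 0
  cv : ∀ k, ContinuousAt (v k) 0
  u0 : ∀ k, u k 0 = if k = n then 1 else 0
  v0 : ∀ k, v k 0 = if k = 0 then 1 else 0
  usupp : ∀ k, (k < 0 ∨ (n : ℤ) < k) → ∀ x, u k x = 0
  vsupp : ∀ k, (k < 0 ∨ (n : ℤ) < k) → ∀ x, v k x = 0
  un : ∀ x, u n x = 1
  lax : ∀ᶠ x in 𝓝[>] (0 : ℝ), LaxAt n p q u v x

/-- The next reflection coefficient `r` is defined by the discrete Painlevé II equation; it is analytic at
`0` because `q 0 = 0` makes `q y / y` a removable singularity there. -/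
theorem LaxFamily.step {n : ℕ} {p q : ℝ → ℝ} {u v : ℤ → ℝ → ℝ} (h : LaxFamily n p q u v) :
    ∃ r, LaxFamily (n + 1) q r (fun k y => u (k - 1) y + q y * v k y)
      (fun k y => v k y + q y * u (k - 1) y) := by
  have ad : AnalyticAt ℝ (dslope q 0) 0 := by
    obtain ⟨P, hP⟩ := h.aq
    exact ⟨_, hP.has_fpower_series_dslope_fslope⟩
  have hds : ∀ y ≠ 0, dslope q 0 y = q y / y := fun y hy => by
    rw [dslope_of_ne _ hy, slope_def_field, h.q0]; simp
  have hne : 1 - q 0 ^ 2 ≠ 0 := by rw [h.q0]; norm_num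
  refine ⟨fun y => -p y - (n + 1) * dslope q 0 y / (1 - q y ^ 2), ?_⟩
  constructor
  · exact h.aq
  · exact (h.ap.neg).sub (((analyticAt_const).mul ad).div
      (analyticAt_const.sub (h.aq.pow 2)) hne)
  -- The limit of the equation for `q` at `0⁺`, combined with `n * p 0 = 0`, forces `(n + 2) * r 0 = 0`.
  · have h1 : Filter.Tendsto (fun y => deriv q y) (𝓝[>] 0) (𝓝 (deriv q 0)) :=
      (h.aq.deriv.continuousAt.tendsto).mono_left nhdsWithin_le_nhds
    have h2 : Filter.Tendsto (fun y => -(n + 1) * dslope q 0 y - 2 * p y * (1 - q y ^ 2))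
        (𝓝[>] 0) (𝓝 (-(n + 1) * dslope q 0 0 - 2 * p 0 * (1 - q 0 ^ 2))) := by
      have : ContinuousAt (fun y => -((n : ℝ) + 1) * dslope q 0 y - 2 * p y * (1 - q y ^ 2)) 0 :=
        (continuousAt_const.mul ad.continuousAt).sub
          ((continuousAt_const.mul h.ap.continuousAt).mul
            (continuousAt_const.sub (h.aq.continuousAt.pow 2)))
      exact this.tendsto.mono_left nhdsWithin_le_nhds
    have h3 : deriv q 0 = -(n + 1) * dslope q 0 0 - 2 * p 0 * (1 - q 0 ^ 2) := by
      refine tendsto_nhds_unique_of_eventuallyEq h1 h2 ?_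
      filter_upwards [h.lax, self_mem_nhdsWithin] with y hy hy0
      have hy0 : y ≠ 0 := ne_of_gt hy0
      rw [hy.hq.deriv, hds y hy0]
      field_simp
    rw [dslope_same, h.q0] at h3
    simp only [dslope_same, h.q0]
    have hn : (n : ℝ) + 2 ≠ 0 := by positivity
    have hp0 := h.p0
    have : ((n : ℝ) + 2) * (-p 0 - (n + 1) * deriv q 0 / (1 - 0 ^ 2)) = 0 := by
      linear_combination (-(n + 1 : ℝ)) * h3 + hp0
    exact (mul_eq_zero.mp this).resolve_left hn
  · rw [h.q0, mul_zero]
  · exact fun k => (h.cu _).add (h.aq.continuousAt.mul (h.cv k))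
  · exact fun k => (h.cv _).add (h.aq.continuousAt.mul (h.cu _))
  · intro k
    simp only [h.u0, h.q0]
    push_cast
    simp [sub_eq_iff_eq_add]
  · intro k
    simp [h.v0, h.q0]
  · intro k hk x
    push_cast at hk
    simp [h.usupp (k - 1) (by omega) x, h.vsupp k (by omega) x]
  · intro k hk x
    push_cast at hk
    simp [h.usupp (k - 1) (by omega) x, h.vsupp k (by omega) x]
  · intro x
    push_cast
    simp [h.un, h.vsupp ((n : ℤ) + 1) (by omega)]
  · have hev : ∀ᶠ y in 𝓝[>] (0 : ℝ), 1 - q y ^ 2 ≠ 0 :=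
      ((continuousAt_const.sub (h.aq.continuousAt.pow 2)).eventually_ne hne).filter_mono
        nhdsWithin_le_nhds
    filter_upwards [h.lax, hev, self_mem_nhdsWithin] with x hx hx1 hx0
    have hx0 : x ≠ 0 := ne_of_gt hx0
    refine hx.step hx0 hx1 ?_
    filter_upwards [isOpen_ne.mem_nhds hx0] with y hy
    rw [hds y hy]

/-! ### Uniqueness for the singular linear system -/

/-- Grönwall: a nonnegative `E` with `E 0 = 0` and derivative at most `C * E` on `(0, δ)` vanishes
there, because `E x * exp (-C x)` is antitone. -/
theorem gronwall_zero {E E' : ℝ → ℝ} {C δ : ℝ} (hE : ∀ x, 0 ≤ E x)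
    (h0 : E 0 = 0) (hc : ContinuousWithinAt E (Set.Ici 0) 0)
    (hd : ∀ x ∈ Set.Ioo 0 δ, HasDerivAt E (E' x) x)
    (hb : ∀ x ∈ Set.Ioo 0 δ, E' x ≤ C * E x) : ∀ x ∈ Set.Ioo 0 δ, E x = 0 := by
  have hanti : AntitoneOn (fun x => E x * Real.exp (-(C * x))) (Set.Ico 0 δ) := by
    apply antitoneOn_of_hasDerivWithinAt_nonpos (convex_Ico 0 δ)
      (f' := fun x => E' x * Real.exp (-(C * x)) + E x * (Real.exp (-(C * x)) * (-C)))
    · intro x hx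
      refine ContinuousWithinAt.mul ?_ (by fun_prop)
      rcases eq_or_lt_of_le hx.1 with h | h
      · rw [← h]; exact hc.mono Set.Ico_subset_Ici_self
      · exact (hd x ⟨h, hx.2⟩).continuousAt.continuousWithinAt
    · intro x hx
      rw [interior_Ico] at hx
      refine (HasDerivAt.mul (hd x hx) ?_).hasDerivWithinAt
      have : HasDerivAt (fun x => -(C * x)) (-C) x := by
        simpa using ((hasDerivAt_id x).const_mul C).fun_neg
      exact this.exp
    · intro x hx
      rw [interior_Ico] at hx
      have := hb x hx
      have h3 : 0 < Real.exp (-(C * x)) := Real.exp_pos _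
      nlinarith
  intro x hx
  have h1 := hanti (a := 0) (b := x) ⟨le_rfl, hx.1.trans hx.2⟩ ⟨hx.1.le, hx.2⟩ hx.1.le
  simp only [h0, zero_mul] at h1
  have h3 : 0 < Real.exp (-(C * x)) := Real.exp_pos _
  have := hE x
  nlinarith

/-- Uniqueness for the system satisfied by the comparison functions `D k = J k - τ * Q k`. The energy
`∑ D k ^ 2` obeys a Grönwall inequality: the only singular coefficient, `-k (m - k) / x`, is
nonpositive for `0 ≤ k ≤ m`, so it can be dropped from the estimate. -/
theorem system_unique {m : ℕ} {δ B : ℝ} (D : ℤ → ℝ → ℝ) (Q : ℤ → ℝ → ℝ)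
    (hsupp : ∀ k : ℤ, (k < 0 ∨ (m : ℤ) < k) → ∀ x, D k x = 0)
    (h0 : ∀ k, D k 0 = 0) (hc : ∀ k, ContinuousAt (D k) 0)
    (hQ : ∀ k, ∀ x ∈ Set.Ioo 0 δ, |Q k x| ≤ B)
    (hD : ∀ x ∈ Set.Ioo 0 δ, ∀ k : ℤ, HasDerivAt (D k)
      ((-((k : ℝ) * (m - k)) * D k x - x * ((k + 1) * D (k + 1) x + (m + 1 - k) * D (k - 1) x)
        + x * D (m - 1) x * Q k x) / x) x) :
    ∀ x ∈ Set.Ioo 0 δ, ∀ k, D k x = 0 := by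
  set S : Finset ℤ := Finset.Icc 0 (m : ℤ) with hS
  set E : ℝ → ℝ := fun x => ∑ k ∈ S, D k x ^ 2 with hE
  have hEnn : ∀ x, 0 ≤ E x := fun x => Finset.sum_nonneg fun _ _ => sq_nonneg _
  have hle : ∀ x k, D k x ^ 2 ≤ E x := by
    intro x k
    by_cases hk : k ∈ S
    · exact Finset.single_le_sum (f := fun k => D k x ^ 2) (fun _ _ => sq_nonneg _) hk
    · rw [hsupp k (by simp [hS] at hk; omega) x]; simpa using hEnn x
  have hprod : ∀ x k j, |D k x * D j x| ≤ E x := by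
    intro x k j
    rw [abs_le]
    constructor <;> nlinarith [hle x k, hle x j, sq_nonneg (D k x - D j x),
      sq_nonneg (D k x + D j x)]
  have hzero : ∀ x ∈ Set.Ioo 0 δ, E x = 0 := by
    refine gronwall_zero (C := ∑ k ∈ S, 2 * ((m + 1) + (m + 1) + B)) hEnn ?_ ?_
      (fun x hx => HasDerivAt.fun_sum fun k _ => (hD x hx k).fun_pow 2) ?_
    · simp [hE, h0]
    · refine ContinuousAt.continuousWithinAt ?_
      exact tendsto_finsetSum _ fun k _ => (hc k).pow 2
    · intro x hx
      rw [Finset.sum_mul]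
      refine Finset.sum_le_sum fun k hk => ?_
      have hk' : 0 ≤ k ∧ k ≤ m := by simpa [hS] using hk
      have hk0 : (0 : ℝ) ≤ k := by exact_mod_cast hk'.1
      have hkm : (k : ℝ) ≤ m := by exact_mod_cast hk'.2
      have hx0 : x ≠ 0 := hx.1.ne'
      have e : ((2 : ℕ) : ℝ) * D k x ^ (2 - 1) *
          ((-((k : ℝ) * (m - k)) * D k x - x * ((k + 1) * D (k + 1) x + (m + 1 - k) * D (k - 1) x)
        + x * D (m - 1) x * Q k x) / x) =
          2 * (-((k : ℝ) * (m - k) / x * D k x ^ 2) - (k + 1) * (D k x * D (k + 1) x)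
            - (m + 1 - k) * (D k x * D (k - 1) x) + (D k x * D (m - 1) x) * Q k x) := by
        push_cast; field_simp; ring
      rw [e]
      have a1 : 0 ≤ (k : ℝ) * (m - k) / x * D k x ^ 2 := by
        have := hx.1
        have : (0 : ℝ) ≤ m - k := by linarith
        positivity
      have a2 : -((k + 1) * (D k x * D (k + 1) x)) ≤ (m + 1) * E x := by
        have := abs_le.mp (hprod x k (k + 1))
        nlinarith [hEnn x]
      have a3 : -((m + 1 - k) * (D k x * D (k - 1) x)) ≤ (m + 1) * E x := by
        have := abs_le.mp (hprod x k (k - 1))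
        nlinarith [hEnn x]
      have a4 : (D k x * D (m - 1) x) * Q k x ≤ B * E x := by
        refine (le_abs_self _).trans ?_
        rw [abs_mul, mul_comm]
        exact mul_le_mul (hQ k x hx) (hprod x k _) (abs_nonneg _)
          ((abs_nonneg _).trans (hQ k x hx))
      linarith
  intro x hx k
  have := hle x k
  rw [hzero x hx] at this
  nlinarith [sq_nonneg (D k x)]

/-! ### Existence of the Lax family -/

/-- The coefficients `Q k = u (k - 1) + s * v k` of `z Φ_n + s Φ_n^*` satisfy the system obeyed by the
group averages (`hasDerivAt_moment`, with `m = n + 1`), up to a multiple of `Q k` that does not depend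
on `k`. The multiple is `sigmaForm`. -/
theorem LaxAt.para {n : ℕ} {p q : ℝ → ℝ} {u v : ℤ → ℝ → ℝ} {x s : ℝ}
    (h : LaxAt n p q u v x) (hx : x ≠ 0) (hs : s = 1 ∨ s = -1) (k : ℤ) :
    HasDerivAt (fun y => u (k - 1) y + s * v k y)
      ((-((k : ℝ) * ((n + 1 : ℝ) - k)) * (u (k - 1) x + s * v k x)
        - x * ((k + 1) * (u k x + s * v (k + 1) x)
          + ((n + 1 : ℝ) + 1 - k) * (u (k - 2) x + s * v (k - 1) x))
        - (x ^ 2 * (1 - p x ^ 2) * (1 - q x ^ 2) - n * x * p x * q x - s * x * p x)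
          * (u (k - 1) x + s * v k x)) / x) x := by
  refine ((h.hu (k - 1)).add ((h.hv k).const_mul s)).congr_deriv ?_
  rw [eq_div_iff hx]
  have a0 := h.hzu (k - 2)
  have a1 := h.hzu (k - 1)
  have a2 := h.hzu k
  have b1 := h.hzv (k - 1)
  have b2 := h.hzv k
  have b3 := h.hzv (k + 1)
  have e1 : k - 2 + 1 = k - 1 := by ring
  have e2 : k - 1 - 1 = k - 2 := by ring
  simp only [sub_add_cancel, add_sub_cancel_right, e1, e2] at a0 a1 a2 b1 b2 b3 ⊢
  push_cast at a0 a1 a2 b1 b2 b3 ⊢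
  rcases hs with rfl | rfl
  · linear_combination -((k : ℝ) * (a1 + b2) - (n + 1) * b2
      + x * (1 - q x) * (a2 - p x * b2 - (b1 - p x * a1)) - x * (a2 + b3) + x * (a0 + b1))
  · linear_combination -((k : ℝ) * (a1 - b2) + (n + 1) * b2
      + x * (1 + q x) * (a2 - p x * b2 + (b1 - p x * a1)) - x * (a2 - b3) + x * (a0 - b1))

/-- The first reflection coefficient `r_1`, the value of `q` for `n = 0`, `p = r_0 = 1`. It is minus one half
of the logarithmic derivative of the Bessel integral `B x = ∫ θ in 0..π, exp (2 x cos θ)`, and the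
Bessel equation `x B'' + B' = 4 x B` turns into the Riccati equation stated here. -/
theorem exists_seed : ∃ q : ℝ → ℝ, AnalyticAt ℝ q 0 ∧ q 0 = 0 ∧
    ∀ᶠ x in 𝓝[>] (0 : ℝ), HasDerivAt q ((-q x - 2 * x * (1 - q x ^ 2)) / x) x := by
  set ν : Measure ℝ := volume.restrict (Set.Ioc 0 Real.pi) with hν
  set X : ℝ → ℝ := fun θ => 2 * Real.cos θ with hX
  have hIntg : ProbabilityTheory.integrableExpSet X ν = Set.univ := by
    ext t
    simp only [Set.mem_univ, iff_true]
    refine ProbabilityTheory.integrable_exp_mul_of_mem_Icc (a := -2) (b := 2) (by fun_prop)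
      (Filter.Eventually.of_forall fun θ => ?_)
    have := Real.cos_le_one θ
    have := Real.neg_one_le_cos θ
    simp only [hX, Set.mem_Icc]
    constructor <;> linarith
  have hmem : ∀ t, t ∈ interior (ProbabilityTheory.integrableExpSet X ν) := by simp [hIntg]
  set B : ℝ → ℝ := ProbabilityTheory.mgf X ν with hB
  have hBa : ∀ t, AnalyticAt ℝ B t := fun t => ProbabilityTheory.analyticAt_mgf (hmem t)
  have hii : ∀ n t, Integrable (fun ω => X ω ^ n * Real.exp (t * X ω)) ν := fun n t =>
    ProbabilityTheory.integrable_pow_mul_exp_of_mem_interior_integrableExpSet (hmem t) n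
  have hB1 : ∀ t, deriv B t = ∫ θ, X θ * Real.exp (t * X θ) ∂ν := fun t =>
    ProbabilityTheory.deriv_mgf (hmem t)
  have hB2 : ∀ t, deriv (deriv B) t = ∫ θ, X θ ^ 2 * Real.exp (t * X θ) ∂ν := fun t => by
    have := ProbabilityTheory.iteratedDeriv_mgf (hmem t) 2
    rw [iteratedDeriv_succ, iteratedDeriv_one] at this
    exact this
  -- The integrand of the Bessel equation is the `θ`-derivative of `2 sin θ exp (2 t cos θ)`.
  have hode : ∀ t, t * deriv (deriv B) t + deriv B t = 4 * t * B t := by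
    intro t
    have e : t * deriv (deriv B) t + deriv B t - 4 * t * B t =
        ∫ θ, (t * (X θ ^ 2 * Real.exp (t * X θ)) + X θ ^ 1 * Real.exp (t * X θ)
          - 4 * t * (X θ ^ 0 * Real.exp (t * X θ))) ∂ν := by
      have i2 : Integrable (fun θ => t * (X θ ^ 2 * Real.exp (t * X θ))
          + X θ ^ 1 * Real.exp (t * X θ)) ν := ((hii 2 t).const_mul t).add (hii 1 t)
      rw [integral_sub i2 ((hii 0 t).const_mul _),
        integral_add ((hii 2 t).const_mul t) (hii 1 t), integral_const_mul, integral_const_mul,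
        hB1, hB2]
      simp [hB, ProbabilityTheory.mgf]
    have e2 : ∫ θ, (t * (X θ ^ 2 * Real.exp (t * X θ)) + X θ ^ 1 * Real.exp (t * X θ)
          - 4 * t * (X θ ^ 0 * Real.exp (t * X θ))) ∂ν = 0 := by
      rw [hν, ← intervalIntegral.integral_of_le Real.pi_pos.le]
      rw [intervalIntegral.integral_eq_sub_of_hasDerivAt
        (f := fun θ => 2 * Real.sin θ * Real.exp (t * X θ))]
      · simp
      · intro θ _
        have h1 : HasDerivAt (fun θ => t * X θ) (t * (2 * (-Real.sin θ))) θ :=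
          ((Real.hasDerivAt_cos θ).const_mul 2).const_mul t
        refine (((Real.hasDerivAt_sin θ).const_mul 2).mul h1.exp).congr_deriv ?_
        simp only [hX]
        have := Real.sin_sq_add_cos_sq θ
        linear_combination (-4 * t * Real.exp (t * (2 * Real.cos θ))) * this
      · apply Continuous.intervalIntegrable
        fun_prop
    linarith [e.trans e2]
  have hB0 : B 0 ≠ 0 := by
    simp [hB, ProbabilityTheory.mgf_zero', hν, measureReal_def, Real.pi_pos.le, Real.pi_ne_zero]
  have hB'0 : deriv B 0 = 0 := by simpa using hode 0
  refine ⟨fun x => -deriv B x / (2 * B x), ?_, by simp [hB'0], ?_⟩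
  · exact ((hBa 0).deriv.neg).div (analyticAt_const.mul (hBa 0)) (by simpa using hB0)
  · filter_upwards [((hBa 0).continuousAt.eventually_ne hB0).filter_mono nhdsWithin_le_nhds,
      self_mem_nhdsWithin] with x hx hx0
    have hx0 : x ≠ 0 := ne_of_gt hx0
    have d1 : HasDerivAt B (deriv B x) x := (hBa x).differentiableAt.hasDerivAt
    have d2 : HasDerivAt (deriv B) (deriv (deriv B) x) x :=
      (hBa x).deriv.differentiableAt.hasDerivAt
    refine ((d2.fun_neg).fun_div (d1.const_mul 2) (by simpa using hx)).congr_deriv ?_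
    have h2 : deriv (deriv B) x = (4 * x * B x - deriv B x) / x := by
      rw [eq_div_iff hx0]; linarith [hode x]
    rw [h2]
    field_simp
    ring

/-- Induction along the Szegő recursion, starting from `Φ_0 = Φ_0^* = 1`. -/
theorem exists_laxFamily (n : ℕ) : ∃ p q u v, LaxFamily n p q u v := by
  induction n with
  | zero =>
    obtain ⟨q, hqa, hq0, hq⟩ := exists_seed
    refine ⟨fun _ => 1, q, fun k _ => if k = 0 then 1 else 0, fun k _ => if k = 0 then 1 else 0,
      analyticAt_const, hqa, hq0, by simp, fun k => continuousAt_const,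
      fun k => continuousAt_const, by simp, by simp, ?_, ?_, by simp, ?_⟩
    · intro k hk x
      simp at hk
      simp [hk]
    · intro k hk x
      simp at hk
      simp [hk]
    · filter_upwards [hq] with x hx
      refine ⟨?_, ?_, ?_, ?_, ?_, ?_⟩
      · simpa using hasDerivAt_const x (1 : ℝ)
      · simpa using hx
      · intro k
        simpa using hasDerivAt_const x (if k = 0 then (1 : ℝ) else 0)
      · intro k
        simpa using hasDerivAt_const x (if k = 0 then (1 : ℝ) else 0)
      · intro k
        by_cases h : k = 0 <;> simp [h]
      · intro k
        by_cases h : k = 0 <;> simp [h]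
  | succ n ih =>
    obtain ⟨p, q, u, v, h⟩ := ih
    obtain ⟨r, hr⟩ := h.step
    exact ⟨_, _, _, _, hr⟩

/-! ### Calculus on the orthogonal group -/

instance orthogonalGroup_borelSpace (m : ℕ) : BorelSpace (Matrix.orthogonalGroup (Fin m) ℝ) := ⟨rfl⟩

instance orthogonalGroup_compactSpace (m : ℕ) :
    CompactSpace (Matrix.orthogonalGroup (Fin m) ℝ) := by
  have hK : IsCompact (Set.univ.pi fun _ => Set.univ.pi fun _ => Set.Icc (-1 : ℝ) 1 :
      Set (Fin m → Fin m → ℝ)) :=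
    isCompact_univ_pi fun _ => isCompact_univ_pi fun _ => isCompact_Icc
  refine isCompact_iff_compactSpace.mp (IsCompact.of_isClosed_subset hK ?_ ?_)
  · have : (Matrix.orthogonalGroup (Fin m) ℝ : Set (Matrix (Fin m) (Fin m) ℝ))
        = {M | M * Mᵀ = 1} := by
      ext M; exact mem_orthogonalGroup_iff _ _
    rw [this]
    exact isClosed_eq (by fun_prop) continuous_const
  · intro M hM i _ j _
    have := entry_norm_bound_of_unitary hM i j
    rw [Real.norm_eq_abs, abs_le] at this
    exact this

section
attribute [local instance] Matrix.linftyOpNormedRing Matrix.linftyOpNormedAlgebra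

variable {m : ℕ}

theorem hasDerivAt_matrix_inv {N : ℝ → Matrix (Fin m) (Fin m) ℝ} {Y : Matrix (Fin m) (Fin m) ℝ}
    {t : ℝ} (hN : HasDerivAt N Y t) (hu : (N t).det ≠ 0) :
    HasDerivAt (fun s => (N s)⁻¹) (-((N t)⁻¹ * Y * (N t)⁻¹)) t := by
  obtain ⟨U, hU⟩ := (Matrix.isUnit_iff_isUnit_det (N t)).mpr (isUnit_iff_ne_zero.mpr hu)
  have h1 := hasFDerivAt_ringInverse (𝕜 := ℝ) U
  rw [hU] at h1
  have h2 := h1.comp_hasDerivAt t hN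
  have e : ((U⁻¹ : (Matrix (Fin m) (Fin m) ℝ)ˣ) : Matrix (Fin m) (Fin m) ℝ) = (N t)⁻¹ := by
    rw [← hU, Matrix.coe_units_inv]
  simp only [Function.comp_def, ← Matrix.nonsing_inv_eq_ringInverse] at h2
  refine h2.congr_deriv ?_
  simp [e]

theorem differentiable_det : Differentiable ℝ (fun N : Matrix (Fin m) (Fin m) ℝ => N.det) := by
  have hent : ∀ i j, Differentiable ℝ (fun N : Matrix (Fin m) (Fin m) ℝ => N i j) := fun i j =>
    (LinearMap.toContinuousLinearMap (Matrix.entryLinearMap ℝ ℝ i j)).differentiable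
  simp only [Matrix.det_apply']
  refine Differentiable.fun_sum fun σ _ => ?_
  refine Differentiable.const_mul ?_ _
  exact fun N => (HasFDerivAt.finsetProd fun i _ => (hent (σ i) i N).hasFDerivAt).differentiableAt

/-- The Jacobi formula, at an invertible matrix. -/
theorem hasDerivAt_matrix_det {N : ℝ → Matrix (Fin m) (Fin m) ℝ} {Y : Matrix (Fin m) (Fin m) ℝ}
    {t : ℝ} (hN : HasDerivAt N Y t) (hu : (N t).det ≠ 0) :
    HasDerivAt (fun s => (N s).det) ((N t).det * ((N t)⁻¹ * Y).trace) t := by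
  have h1 := (differentiable_det (N t)).hasFDerivAt.comp_hasDerivAt t hN
  refine h1.congr_deriv ?_
  have h2 : HasDerivAt (fun s : ℝ => N t + s • Y) Y 0 := by
    have := ((hasDerivAt_id (0 : ℝ)).smul_const Y).const_add (N t)
    rw [one_smul] at this
    exact this
  have h3 := (differentiable_det (N t + (0 : ℝ) • Y)).hasFDerivAt.comp_hasDerivAt (0 : ℝ) h2
  rw [zero_smul, add_zero] at h3
  refine h3.unique ?_
  set Z := (N t)⁻¹ * Y with hZ
  have h4 : ∀ s : ℝ, (N t + s • Y).det = (N t).det * ((1 + (Polynomial.X : Polynomial ℝ) •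
      Z.map Polynomial.C).det).eval s := by
    intro s
    have e1 : N t + s • Y = N t * (1 + s • Z) := by
      rw [hZ, mul_add, mul_one, mul_smul_comm, Matrix.mul_nonsing_inv_cancel_left _ _
        (isUnit_iff_ne_zero.mpr hu)]
    rw [e1, Matrix.det_mul, ← Polynomial.coe_evalRingHom, RingHom.map_det]
    congr 2
    ext i j
    simp [Matrix.one_apply, apply_ite]
    ring
  have h5 := (((1 + (Polynomial.X : Polynomial ℝ) • Z.map Polynomial.C).det).hasDerivAt
    (0 : ℝ)).const_mul (N t).det
  rw [Matrix.derivative_det_one_add_X_smul] at h5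
  exact h5.congr_of_eventuallyEq (Filter.Eventually.of_forall h4)

/-- The one-parameter group `exp (t X)` of rotations generated by an antisymmetric matrix `X`. -/
def rot (X : Matrix (Fin m) (Fin m) ℝ) (hX : Xᵀ = -X) (t : ℝ) :
    Matrix.orthogonalGroup (Fin m) ℝ :=
  ⟨NormedSpace.exp (t • X), by
    rw [mem_orthogonalGroup_iff, ← Matrix.exp_transpose, transpose_smul, hX, smul_neg, Matrix.exp_neg]
    exact Matrix.mul_nonsing_inv _ ((Matrix.isUnit_iff_isUnit_det _).mp (Matrix.isUnit_exp _))⟩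

theorem coe_rot (X : Matrix (Fin m) (Fin m) ℝ) (hX : Xᵀ = -X) (t : ℝ) :
    (rot X hX t : Matrix (Fin m) (Fin m) ℝ) = NormedSpace.exp (t • X) := rfl

theorem rot_add (X : Matrix (Fin m) (Fin m) ℝ) (hX : Xᵀ = -X) (s t : ℝ) :
    rot X hX (s + t) = rot X hX s * rot X hX t := by
  apply Subtype.ext
  rw [Submonoid.coe_mul, coe_rot, coe_rot, coe_rot, add_smul]
  exact Matrix.exp_add_of_commute _ _ (((Commute.refl X).smul_left s).smul_right t)

theorem rot_zero (X : Matrix (Fin m) (Fin m) ℝ) (hX : Xᵀ = -X) : rot X hX 0 = 1 := by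
  apply Subtype.ext
  rw [coe_rot, zero_smul, NormedSpace.exp_zero]; rfl

theorem det_rot (X : Matrix (Fin m) (Fin m) ℝ) (hX : Xᵀ = -X) (t : ℝ) :
    (rot X hX t : Matrix (Fin m) (Fin m) ℝ).det = 1 := by
  have h : rot X hX t = rot X hX (t / 2) * rot X hX (t / 2) := by
    rw [← rot_add, add_halves]
  have h2 := (mem_orthogonalGroup_iff (Fin m) ℝ).mp (rot X hX (t / 2)).2
  rw [h, Submonoid.coe_mul, det_mul]
  have h3 := congrArg Matrix.det h2
  rw [det_mul, det_transpose, det_one] at h3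
  exact h3

theorem hasDerivAt_rot (X : Matrix (Fin m) (Fin m) ℝ) (hX : Xᵀ = -X) :
    HasDerivAt (fun t => (rot X hX t : Matrix (Fin m) (Fin m) ℝ)) X 0 := by
  have := hasDerivAt_exp_smul_const (𝕂 := ℝ) X (0 : ℝ)
  simp only [zero_smul, NormedSpace.exp_zero, one_mul] at this
  exact this

/-- Integration by parts: the derivative of a function along the flow `M ↦ exp (t X) M` integrates to
zero over each component, since the flow preserves both the measure and the determinant. -/
theorem integral_deriv_rot_eq_zero (μ : Measure (Matrix.orthogonalGroup (Fin m) ℝ))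
    [IsProbabilityMeasure μ] [μ.IsMulLeftInvariant] (ε : ℝ)
    (X : Matrix (Fin m) (Fin m) ℝ) (hX : Xᵀ = -X)
    (H D : Matrix.orthogonalGroup (Fin m) ℝ → ℝ) (hH : Continuous H) (hD : Continuous D)
    (hHD : ∀ M, HasDerivAt (fun t => H (rot X hX t * M)) (D M) 0) :
    ∫ M in {M : Matrix.orthogonalGroup (Fin m) ℝ | (M : Matrix (Fin m) (Fin m) ℝ).det = ε},
      D M ∂μ = 0 := by
  set S := {M : Matrix.orthogonalGroup (Fin m) ℝ | (M : Matrix (Fin m) (Fin m) ℝ).det = ε} with hS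
  have hSm : MeasurableSet S :=
    (isClosed_eq (by fun_prop) continuous_const).measurableSet
  have hinv : ∀ t, ∫ M in S, H (rot X hX t * M) ∂μ = ∫ M in S, H M ∂μ := by
    intro t
    rw [← integral_indicator hSm, ← integral_indicator hSm,
      ← integral_mul_left_eq_self (μ := μ) (S.indicator H) (rot X hX t)]
    congr 1
    ext M
    have : rot X hX t * M ∈ S ↔ M ∈ S := by
      simp only [hS, Set.mem_ofPred_eq, Submonoid.coe_mul, det_mul, det_rot, one_mul]
    by_cases h : M ∈ S
    · rw [Set.indicator_of_mem h, Set.indicator_of_mem (this.mpr h)]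
    · rw [Set.indicator_of_notMem h, Set.indicator_of_notMem (fun h' => h (this.mp h'))]
  have hder : ∀ M t, HasDerivAt (fun s => H (rot X hX s * M)) (D (rot X hX t * M)) t := by
    intro M t
    have h1 := hHD (rot X hX t * M)
    rw [← sub_self t] at h1
    have h2 := h1.comp_sub_const t t
    refine h2.congr_of_eventuallyEq (Filter.Eventually.of_forall fun s => ?_)
    simp only [← mul_assoc, ← rot_add, sub_add_cancel]
  obtain ⟨C, hC⟩ : ∃ C, ∀ M, ‖D M‖ ≤ C := by
    obtain ⟨C, hC⟩ := isCompact_univ.exists_bound_of_continuousOn hD.continuousOn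
    exact ⟨C, fun M => hC M (Set.mem_univ _)⟩
  have hIntg : ∀ K : Matrix.orthogonalGroup (Fin m) ℝ → ℝ, Continuous K → Integrable K (μ.restrict S) :=
    fun K hK => hK.integrable_of_hasCompactSupport (HasCompactSupport.of_compactSpace _)
  have key := hasDerivAt_integral_of_dominated_loc_of_deriv_le (μ := μ.restrict S) (𝕜 := ℝ)
    (F := fun t M => H (rot X hX t * M)) (F' := fun t M => D (rot X hX t * M)) (x₀ := 0)
    (s := Set.univ) (bound := fun _ => C) Filter.univ_mem
    (Filter.Eventually.of_forall fun t => (hIntg _ (by fun_prop)).aestronglyMeasurable)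
    (hIntg _ (by fun_prop)) (hIntg _ (by fun_prop)).aestronglyMeasurable
    (Filter.Eventually.of_forall fun M t _ => hC _) (integrable_const _)
    (Filter.Eventually.of_forall fun M t _ => hder M t)
  have h0 := key.2
  simp only [hinv, rot_zero, one_mul] at h0
  exact h0.unique (hasDerivAt_const _ _)

/-- An orthogonal matrix has no eigenvalue `z > 1`, so the resolvent `(z - M)⁻¹` is defined there. -/
theorem det_sub_ne_zero (M : Matrix.orthogonalGroup (Fin m) ℝ) {z : ℝ} (hz : 1 < z) :
    (z • (1 : Matrix (Fin m) (Fin m) ℝ) - M).det ≠ 0 := by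
  intro h
  obtain ⟨v, hv, hv0⟩ := Matrix.exists_mulVec_eq_zero_iff.mpr h
  have h1 : (M : Matrix (Fin m) (Fin m) ℝ) *ᵥ v = z • v := by
    rw [sub_mulVec, smul_mulVec, one_mulVec, sub_eq_zero] at hv0
    exact hv0.symm
  have h2 : ((M : Matrix (Fin m) (Fin m) ℝ) *ᵥ v) ⬝ᵥ ((M : Matrix (Fin m) (Fin m) ℝ) *ᵥ v) = v ⬝ᵥ v := by
    have := (mem_orthogonalGroup_iff' (Fin m) ℝ).mp M.2
    rw [dotProduct_mulVec, vecMul_mulVec, this, vecMul_one]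
  rw [h1, smul_dotProduct, dotProduct_smul, smul_eq_mul, smul_eq_mul] at h2
  have h3 : v ⬝ᵥ v ≠ 0 := fun h => hv (dotProduct_self_eq_zero.mp h)
  have h4 : (z * z - 1) * (v ⬝ᵥ v) = 0 := by linarith
  rcases mul_eq_zero.mp h4 with h | h
  · nlinarith
  · exact h3 h

theorem continuous_resolvent {z : ℝ} (hz : 1 < z) :
    Continuous (fun M : Matrix.orthogonalGroup (Fin m) ℝ =>
      (z • (1 : Matrix (Fin m) (Fin m) ℝ) - M)⁻¹) := by
  simp only [Matrix.inv_def, Ring.inverse_eq_inv']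
  refine Continuous.smul (Continuous.inv₀ (by fun_prop) fun M => det_sub_ne_zero M hz) ?_
  exact Continuous.matrix_adjugate (by fun_prop)

theorem hasDerivAt_trace_mul {N : ℝ → Matrix (Fin m) (Fin m) ℝ} {Y : Matrix (Fin m) (Fin m) ℝ}
    {t : ℝ} (hN : HasDerivAt N Y t) (X : Matrix (Fin m) (Fin m) ℝ) :
    HasDerivAt (fun s => (N s * X).trace) (Y * X).trace t := by
  have h := (LinearMap.toContinuousLinearMap
    ((Matrix.traceLinearMap (Fin m) ℝ ℝ).comp (LinearMap.mulRight ℝ X))).hasFDerivAt.comp_hasDerivAt t hN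
  exact h

/-- The test function `det (z - M) * tr (M (z - M)⁻¹ X) * exp (x tr M)`. -/
def testFn (z x : ℝ) (X : Matrix (Fin m) (Fin m) ℝ) (M : Matrix (Fin m) (Fin m) ℝ) : ℝ :=
  (z • (1 : Matrix (Fin m) (Fin m) ℝ) - M).det *
    (M * (z • (1 : Matrix (Fin m) (Fin m) ℝ) - M)⁻¹ * X).trace * Real.exp (x * M.trace)

/-- The derivative of `testFn z x X` at `M` along `t ↦ exp (t X) M`, see `hasDerivAt_testFn`. -/
def testDeriv (z x : ℝ) (X : Matrix (Fin m) (Fin m) ℝ) (M : Matrix (Fin m) (Fin m) ℝ) : ℝ :=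
  let A := M * (z • (1 : Matrix (Fin m) (Fin m) ℝ) - M)⁻¹
  (z • (1 : Matrix (Fin m) (Fin m) ℝ) - M).det * Real.exp (x * M.trace) *
    (-(A * X).trace ^ 2 + (X * A * X).trace + (A * X * A * X).trace
      + x * (A * X).trace * (M * X).trace)

theorem hasDerivAt_testFn {z : ℝ} (hz : 1 < z) (x : ℝ) (X : Matrix (Fin m) (Fin m) ℝ)
    (hX : Xᵀ = -X) (M : Matrix.orthogonalGroup (Fin m) ℝ) :
    HasDerivAt (fun t => testFn z x X (rot X hX t * M : Matrix.orthogonalGroup (Fin m) ℝ))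
      (testDeriv z x X M) 0 := by
  have hR : HasDerivAt (fun t => ((rot X hX t * M : Matrix.orthogonalGroup (Fin m) ℝ) :
      Matrix (Fin m) (Fin m) ℝ)) (X * M) 0 := (hasDerivAt_rot X hX).mul_const _
  have hN := hR.const_sub (z • (1 : Matrix (Fin m) (Fin m) ℝ))
  have hM0 : ((rot X hX 0 * M : Matrix.orthogonalGroup (Fin m) ℝ) :
      Matrix (Fin m) (Fin m) ℝ) = M := by rw [rot_zero, one_mul]
  have hdet : (z • (1 : Matrix (Fin m) (Fin m) ℝ) -
      (rot X hX 0 * M : Matrix.orthogonalGroup (Fin m) ℝ)).det ≠ 0 := det_sub_ne_zero _ hz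
  have hF := hasDerivAt_matrix_det hN hdet
  have hI := hasDerivAt_matrix_inv hN hdet
  have hA := hasDerivAt_trace_mul (hR.mul hI) X
  have hT := ((hasDerivAt_trace_mul hR 1).const_mul x).exp
  have hall := (hF.mul hA).mul hT
  simp only [mul_one] at hall
  refine hall.congr_deriv ?_
  simp only [Pi.mul_apply, hM0, testDeriv]
  set W := (z • (1 : Matrix (Fin m) (Fin m) ℝ) - (M : Matrix (Fin m) (Fin m) ℝ))⁻¹
  set N := (M : Matrix (Fin m) (Fin m) ℝ)
  have e1 : (W * -(X * N)).trace = -(N * W * X).trace := by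
    rw [mul_neg, trace_neg, ← mul_assoc, trace_mul_comm, mul_assoc]
  have e2 : (X * N).trace = (N * X).trace := trace_mul_comm _ _
  have e3 : ((X * N * W + N * -(W * -(X * N) * W)) * X).trace
      = (X * (N * W) * X).trace + (N * W * X * (N * W) * X).trace := by
    rw [← trace_add]
    congr 1
    noncomm_ring
  rw [e1, e2, e3]
  ring

theorem continuous_testFn {z : ℝ} (hz : 1 < z) (x : ℝ) (X : Matrix (Fin m) (Fin m) ℝ) :
    Continuous (fun M : Matrix.orthogonalGroup (Fin m) ℝ => testFn z x X M) := by
  have := continuous_resolvent (m := m) hz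
  unfold testFn
  fun_prop

theorem continuous_testDeriv {z : ℝ} (hz : 1 < z) (x : ℝ) (X : Matrix (Fin m) (Fin m) ℝ) :
    Continuous (fun M : Matrix.orthogonalGroup (Fin m) ℝ => testDeriv z x X M) := by
  have := continuous_resolvent (m := m) hz
  unfold testDeriv
  fun_prop

/-- The generator `E_ij - E_ji` of the antisymmetric matrices (zero when `i = j`). -/
def gen (i j : Fin m) : Matrix (Fin m) (Fin m) ℝ := Matrix.single i j 1 - Matrix.single j i 1

theorem gen_transpose (i j : Fin m) : (gen i j : Matrix (Fin m) (Fin m) ℝ)ᵀ = -gen i j := by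
  simp [gen]

theorem trace_mul_single' (A : Matrix (Fin m) (Fin m) ℝ) (i j : Fin m) :
    (A * Matrix.single i j 1).trace = A j i := by
  rw [Matrix.trace_mul_comm]; simp [Matrix.trace_single_mul]

/-- The Casimir-type sum over all generators of the bracket in `testDeriv`, for arbitrary `A` in place of
`M (z - M)⁻¹` and `B` in place of `M`. Each unordered pair `i ≠ j` occurs twice, whence the factor `2`. -/
theorem sum_testDeriv_gen (A B : Matrix (Fin m) (Fin m) ℝ) (x : ℝ) :
    ∑ i, ∑ j, (-(A * gen i j).trace ^ 2 + (gen i j * A * gen i j).trace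
      + (A * gen i j * A * gen i j).trace + x * (A * gen i j).trace * (B * gen i j).trace)
    = 2 * ((A * A).trace - A.trace ^ 2 + (1 - m) * A.trace
      + x * ((A * Bᵀ).trace - (A * B).trace)) := by
  have h1 : ∀ (C : Matrix (Fin m) (Fin m) ℝ) i j, (C * gen i j).trace = C j i - C i j := by
    intro C i j
    rw [gen, mul_sub, trace_sub, trace_mul_single', trace_mul_single']
  have h2 : ∀ i j, (gen i j * A * gen i j).trace
      = -A i i - A j j + (if i = j then 2 * A i i else 0) := by
    intro i j
    rw [h1]
    simp only [gen, sub_mul, Matrix.sub_apply]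
    by_cases h : i = j
    · subst h; simp; ring
    · have h' : j ≠ i := fun e => h e.symm
      simp [h, h']
  have h3 : ∀ i j, (A * gen i j * A * gen i j).trace = A j i ^ 2 + A i j ^ 2 - 2 * (A i i * A j j) := by
    intro i j
    rw [h1]
    have : ∀ k l, (A * gen i j * A) k l = A k i * A j l - A k j * A i l := by
      intro k l
      rw [gen, mul_sub, sub_mul, Matrix.sub_apply]
      simp [Matrix.mul_apply, Matrix.single_apply, ite_and]
    rw [this, this]; ring
  have t1 : ∀ C D : Matrix (Fin m) (Fin m) ℝ, (C * D).trace = ∑ i, ∑ j, C i j * D j i := by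
    intro C D
    simp [Matrix.trace, Matrix.mul_apply]
  have t2 : A.trace ^ 2 = ∑ i, A i i * ∑ j, A j j := by
    rw [pow_two, ← Finset.sum_mul]; rfl
  have t3 : (m : ℝ) * A.trace = ∑ i : Fin m, ∑ _j : Fin m, A i i := by
    simp [Matrix.trace, Finset.mul_sum]
  have t3' : (m : ℝ) * A.trace = ∑ _i : Fin m, ∑ j : Fin m, A j j := by
    simp [Matrix.trace]
  have t4 : A.trace = ∑ i, ∑ j, (if i = j then A i i else 0) := by
    simp [Matrix.trace]
  have s1 : ∑ i, ∑ j, A j i * B j i = ∑ i, ∑ j, A i j * B i j := Finset.sum_comm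
  have s2 : ∑ i, ∑ j, A j i * B i j = ∑ i, ∑ j, A i j * B j i := Finset.sum_comm
  calc _ = ∑ i, ∑ j, (2 * (A i j * A j i) - 2 * (A i i * A j j) - A i i - A j j
        + 2 * (if i = j then A i i else 0)
        + x * (A j i * B j i + A i j * B i j - A j i * B i j - A i j * B j i)) := by
        refine Finset.sum_congr rfl fun i _ => Finset.sum_congr rfl fun j _ => ?_
        rw [h2, h3, h1, h1]
        split_ifs <;> ring
    _ = 2 * (A * A).trace - 2 * A.trace ^ 2 - m * A.trace - m * A.trace + 2 * A.trace
        + x * ((A * Bᵀ).trace + (A * Bᵀ).trace - (A * B).trace - (A * B).trace) := by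
        simp only [Finset.sum_add_distrib, Finset.sum_sub_distrib, ← Finset.mul_sum]
        rw [s1, s2, ← t3, ← t3', ← t4, ← t2, t1, t1, t1]
        rfl
    _ = _ := by ring

open Polynomial in
/-- A second-order differential expression in the characteristic polynomial of `M`. Its average against
`exp (x tr M)` vanishes (`integral_balance_coeff`), and its coefficients (`coeff_balance`) yield the
linear system for the moments. -/
def balance (x : ℝ) (M : Matrix (Fin m) (Fin m) ℝ) : Polynomial ℝ :=
  X * (X * derivative (derivative M.charpoly)) + C (1 - (m : ℝ)) * (X * derivative M.charpoly)
    - C x * (derivative M.charpoly - X * (X * derivative M.charpoly)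
      + C (m : ℝ) * (X * M.charpoly) + C M.trace * M.charpoly)

theorem eval_charpoly_smul (M : Matrix (Fin m) (Fin m) ℝ) (z : ℝ) :
    M.charpoly.eval z = (z • (1 : Matrix (Fin m) (Fin m) ℝ) - M).det := by
  rw [Matrix.eval_charpoly, Matrix.scalar_apply, Matrix.smul_one_eq_diagonal]

theorem hasDerivAt_pencil (M : Matrix (Fin m) (Fin m) ℝ) (z : ℝ) :
    HasDerivAt (fun y : ℝ => y • (1 : Matrix (Fin m) (Fin m) ℝ) - M) 1 z := by
  have := ((hasDerivAt_id z).smul_const (1 : Matrix (Fin m) (Fin m) ℝ)).sub_const M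
  rw [one_smul] at this
  exact this

theorem eval_derivative_charpoly (M : Matrix.orthogonalGroup (Fin m) ℝ) {z : ℝ} (hz : 1 < z) :
    (M : Matrix (Fin m) (Fin m) ℝ).charpoly.derivative.eval z
      = (z • (1 : Matrix (Fin m) (Fin m) ℝ) - M).det
        * ((z • (1 : Matrix (Fin m) (Fin m) ℝ) - M)⁻¹).trace := by
  have h1 := (M : Matrix (Fin m) (Fin m) ℝ).charpoly.hasDerivAt z
  have h2 := hasDerivAt_matrix_det (hasDerivAt_pencil (M : Matrix (Fin m) (Fin m) ℝ) z)
    (det_sub_ne_zero M hz)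
  rw [mul_one] at h2
  refine h1.unique (h2.congr_of_eventuallyEq (Filter.Eventually.of_forall fun y => ?_))
  exact eval_charpoly_smul _ _

theorem eval_derivative2_charpoly (M : Matrix.orthogonalGroup (Fin m) ℝ) {z : ℝ} (hz : 1 < z) :
    (M : Matrix (Fin m) (Fin m) ℝ).charpoly.derivative.derivative.eval z
      = (z • (1 : Matrix (Fin m) (Fin m) ℝ) - M).det
        * (((z • (1 : Matrix (Fin m) (Fin m) ℝ) - M)⁻¹).trace ^ 2
          - ((z • (1 : Matrix (Fin m) (Fin m) ℝ) - M)⁻¹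
            * (z • (1 : Matrix (Fin m) (Fin m) ℝ) - M)⁻¹).trace) := by
  have h1 := (M : Matrix (Fin m) (Fin m) ℝ).charpoly.derivative.hasDerivAt z
  have hp := hasDerivAt_pencil (M : Matrix (Fin m) (Fin m) ℝ) z
  have h2 := hasDerivAt_matrix_det hp (det_sub_ne_zero M hz)
  have h3 := hasDerivAt_trace_mul (hasDerivAt_matrix_inv hp (det_sub_ne_zero M hz)) 1
  have h4 := h2.mul h3
  simp only [mul_one] at h4
  refine (h1.unique (h4.congr_of_eventuallyEq ?_)).trans ?_
  · filter_upwards [lt_mem_nhds hz] with y hy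
    exact eval_derivative_charpoly M hy
  · rw [trace_neg]; ring

/-- Orthogonality of `M` enters here, through `tr (M (z - M)⁻¹ Mᵀ) = tr (z - M)⁻¹`; it reduces the sum of
derivatives to traces of powers of the resolvent, i.e. to derivatives of the characteristic
polynomial. -/
theorem sum_testDeriv_eq (M : Matrix.orthogonalGroup (Fin m) ℝ) {z : ℝ} (hz : 1 < z) (x : ℝ) :
    ∑ i, ∑ j, testDeriv z x (gen i j) (M : Matrix (Fin m) (Fin m) ℝ)
      = -2 * (Real.exp (x * (M : Matrix (Fin m) (Fin m) ℝ).trace)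
        * (balance x (M : Matrix (Fin m) (Fin m) ℝ)).eval z) := by
  have hs := sum_testDeriv_gen ((M : Matrix (Fin m) (Fin m) ℝ)
    * (z • (1 : Matrix (Fin m) (Fin m) ℝ) - M)⁻¹) (M : Matrix (Fin m) (Fin m) ℝ) x
  simp only [testDeriv, ← Finset.mul_sum]
  rw [hs]
  simp only [balance, Polynomial.eval_add, Polynomial.eval_sub, Polynomial.eval_mul,
    Polynomial.eval_C, Polynomial.eval_X, eval_derivative_charpoly M hz,
    eval_derivative2_charpoly M hz, eval_charpoly_smul]
  have hd := isUnit_iff_ne_zero.mpr (det_sub_ne_zero M hz)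
  have hMM := (mem_orthogonalGroup_iff (Fin m) ℝ).mp M.2
  have hr := Matrix.mul_nonsing_inv _ hd
  have hl := Matrix.nonsing_inv_mul _ hd
  set R := (z • (1 : Matrix (Fin m) (Fin m) ℝ) - (M : Matrix (Fin m) (Fin m) ℝ))⁻¹
  set N := (M : Matrix (Fin m) (Fin m) ℝ)
  have a1 : N * R = z • R - 1 := by
    rw [sub_mul, smul_mul_assoc, one_mul] at hr
    rw [← hr]; abel
  have a2 : R * N = z • R - 1 := by
    rw [mul_sub, mul_smul_comm, mul_one] at hl
    rw [← hl]; abel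
  have b1 : (N * R).trace = z * R.trace - m := by
    rw [a1, trace_sub, trace_smul, smul_eq_mul, trace_one, Fintype.card_fin]
  have b2 : (N * R * (N * R)).trace = z ^ 2 * (R * R).trace - 2 * z * R.trace + m := by
    have : N * R * (N * R) = (z ^ 2) • (R * R) - (2 * z) • R + 1 := by
      rw [a1, sub_mul, mul_sub, smul_mul_assoc, mul_smul_comm, smul_smul, one_mul, mul_one]
      module
    rw [this, trace_add, trace_sub, trace_smul, trace_smul, smul_eq_mul, smul_eq_mul, trace_one,
      Fintype.card_fin]
  have b3 : (N * R * Nᵀ).trace = R.trace := by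
    rw [a1, ← a2, mul_assoc, hMM, mul_one]
  have b4 : (N * R * N).trace = z ^ 2 * R.trace - z * m - N.trace := by
    have : N * R * N = (z ^ 2) • R - z • 1 - N := by
      rw [a1, sub_mul, smul_mul_assoc, a2, one_mul]
      module
    rw [this, trace_sub, trace_sub, trace_smul, trace_smul, smul_eq_mul, smul_eq_mul, trace_one,
      Fintype.card_fin]
  rw [b1, b2, b3, b4]
  ring

/-! ### Averages of characteristic polynomial coefficients -/

/-- The part of `O(m)` where the determinant is `ε`. -/
def component (m : ℕ) (ε : ℝ) : Set (Matrix.orthogonalGroup (Fin m) ℝ) :=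
  {M | (M : Matrix (Fin m) (Fin m) ℝ).det = ε}

theorem integrable_component (μ : Measure (Matrix.orthogonalGroup (Fin m) ℝ))
    [IsProbabilityMeasure μ] (ε : ℝ) {K : Matrix.orthogonalGroup (Fin m) ℝ → ℝ}
    (hK : Continuous K) : Integrable K (μ.restrict (component m ε)) :=
  hK.integrable_of_hasCompactSupport (HasCompactSupport.of_compactSpace _)

/-- The coefficient of `z ^ k` in the characteristic polynomial of `M`, extended by zero to negative `k` so
that index shifts need no case distinction. -/
def ccoef (M : Matrix (Fin m) (Fin m) ℝ) (k : ℤ) : ℝ :=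
  if k < 0 then 0 else M.charpoly.coeff k.toNat

theorem continuous_coeff_charpoly (k : ℕ) :
    Continuous (fun M : Matrix (Fin m) (Fin m) ℝ => M.charpoly.coeff k) := by
  have h : ∀ M : Matrix (Fin m) (Fin m) ℝ, M.charpoly.coeff k
      = MvPolynomial.eval (fun ij : Fin m × Fin m => M ij.1 ij.2)
        ((Matrix.charpoly.univ ℝ (Fin m)).coeff k) := by
    intro M
    exact (Matrix.charpoly.univ_coeff_eval₂Hom (Fin m) (RingHom.id ℝ)
      (fun ij : Fin m × Fin m => M ij.1 ij.2) k).symm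
  simp only [h]
  exact (MvPolynomial.continuous_eval _).comp (by fun_prop)

theorem continuous_ccoef (k : ℤ) :
    Continuous (fun M : Matrix (Fin m) (Fin m) ℝ => ccoef M k) := by
  unfold ccoef
  split_ifs
  · exact continuous_const
  · exact continuous_coeff_charpoly _

theorem ccoef_natCast (M : Matrix (Fin m) (Fin m) ℝ) (k : ℕ) :
    ccoef M k = M.charpoly.coeff k := by simp [ccoef]

theorem ccoef_supp (M : Matrix (Fin m) (Fin m) ℝ) {k : ℤ} (hk : k < 0 ∨ (m : ℤ) < k) :
    ccoef M k = 0 := by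
  unfold ccoef
  split_ifs with h
  · rfl
  · refine Polynomial.coeff_eq_zero_of_natDegree_lt ?_
    rw [Matrix.charpoly_natDegree_eq_dim, Fintype.card_fin]
    omega

theorem coeff_balance (x : ℝ) (M : Matrix (Fin m) (Fin m) ℝ) (k : ℕ) :
    (balance x M).coeff k = -(k * (m - k)) * ccoef M k
      - x * ((k + 1) * ccoef M (k + 1) + (m + 1 - k) * ccoef M (k - 1))
      - x * (M.trace * ccoef M k) := by
  rcases k with _ | _ | k
  · have h1 : ccoef M ((0 : ℕ) - 1 : ℤ) = 0 := ccoef_supp M (Or.inl (by norm_num))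
    have h2 : ccoef M ((0 : ℕ) + 1 : ℤ) = M.charpoly.coeff 1 := ccoef_natCast M 1
    rw [h1, h2, ccoef_natCast]
    simp only [balance, Polynomial.coeff_add, Polynomial.coeff_sub, Polynomial.coeff_C_mul,
      Polynomial.coeff_X_mul_zero, Polynomial.coeff_derivative]
    push_cast
    ring
  · have h1 : ccoef M ((0 + 1 : ℕ) - 1 : ℤ) = M.charpoly.coeff 0 := ccoef_natCast M 0
    have h2 : ccoef M ((0 + 1 : ℕ) + 1 : ℤ) = M.charpoly.coeff 2 := ccoef_natCast M 2
    rw [h1, h2, ccoef_natCast]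
    simp only [balance, Polynomial.coeff_add, Polynomial.coeff_sub, Polynomial.coeff_C_mul,
      Polynomial.coeff_X_mul, Polynomial.coeff_X_mul_zero, Polynomial.coeff_derivative]
    push_cast
    ring
  · have h1 : ccoef M ((k + 1 + 1 : ℕ) - 1 : ℤ) = M.charpoly.coeff (k + 1) := by
      rw [← ccoef_natCast]; congr 1; push_cast; ring
    have h2 : ccoef M ((k + 1 + 1 : ℕ) + 1 : ℤ) = M.charpoly.coeff (k + 3) := by
      rw [← ccoef_natCast]; congr 1
    rw [h1, h2, ccoef_natCast]
    simp only [balance, Polynomial.coeff_add, Polynomial.coeff_sub, Polynomial.coeff_C_mul,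
      Polynomial.coeff_X_mul, Polynomial.coeff_derivative]
    push_cast
    ring

theorem integral_balance_eval (μ : Measure (Matrix.orthogonalGroup (Fin m) ℝ))
    [IsProbabilityMeasure μ] [μ.IsMulLeftInvariant] (ε x : ℝ) {z : ℝ} (hz : 1 < z) :
    ∫ M in component m ε, Real.exp (x * (M : Matrix (Fin m) (Fin m) ℝ).trace)
        * (balance x (M : Matrix (Fin m) (Fin m) ℝ)).eval z ∂μ = 0 := by
  have h : ∫ M in component m ε, ∑ i, ∑ j, testDeriv z x (gen i j)
      (M : Matrix (Fin m) (Fin m) ℝ) ∂μ = 0 := by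
    have hc : ∀ i j, Integrable (fun M : Matrix.orthogonalGroup (Fin m) ℝ =>
        testDeriv z x (gen i j) (M : Matrix (Fin m) (Fin m) ℝ)) (μ.restrict (component m ε)) :=
      fun i j => integrable_component μ ε (continuous_testDeriv hz x _)
    rw [integral_finsetSum _ fun i _ => integrable_finsetSum _ fun j _ => hc i j]
    refine Finset.sum_eq_zero fun i _ => ?_
    rw [integral_finsetSum _ fun j _ => hc i j]
    refine Finset.sum_eq_zero fun j _ => ?_
    exact integral_deriv_rot_eq_zero μ ε (gen i j) (gen_transpose i j)
      (fun M => testFn z x (gen i j) M) _ (continuous_testFn hz x _) (continuous_testDeriv hz x _)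
      (hasDerivAt_testFn hz x _ _)
  simp only [sum_testDeriv_eq _ hz] at h
  rw [integral_const_mul] at h
  linarith

/-- The averaged polynomial vanishes at every `z > 1` by `integral_balance_eval`, hence all its
coefficients do. -/
theorem integral_balance_coeff (μ : Measure (Matrix.orthogonalGroup (Fin m) ℝ))
    [IsProbabilityMeasure μ] [μ.IsMulLeftInvariant] (ε x : ℝ) (k : ℕ) :
    ∫ M in component m ε, Real.exp (x * (M : Matrix (Fin m) (Fin m) ℝ).trace)
        * (balance x (M : Matrix (Fin m) (Fin m) ℝ)).coeff k ∂μ = 0 := by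
  have hz0 : ∀ (M : Matrix (Fin m) (Fin m) ℝ) (k : ℕ), m + 2 ≤ k → (balance x M).coeff k = 0 := by
    intro M k hk
    rw [coeff_balance, ccoef_supp M (k := k), ccoef_supp M (k := k + 1),
      ccoef_supp M (k := k - 1)]
    · ring
    all_goals right; omega
  have hdeg : ∀ M : Matrix (Fin m) (Fin m) ℝ, (balance x M).natDegree < m + 2 := by
    intro M
    have : (balance x M).natDegree ≤ m + 1 :=
      Polynomial.natDegree_le_iff_coeff_eq_zero.mpr fun k hk => hz0 M k hk
    omega
  have hcont : ∀ k : ℕ, Continuous (fun M : Matrix.orthogonalGroup (Fin m) ℝ =>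
      Real.exp (x * (M : Matrix (Fin m) (Fin m) ℝ).trace)
        * (balance x (M : Matrix (Fin m) (Fin m) ℝ)).coeff k) := by
    intro k
    simp only [coeff_balance]
    have h := fun k => (continuous_ccoef (m := m) k).comp
      (continuous_subtype_val (p := fun M => M ∈ Matrix.orthogonalGroup (Fin m) ℝ))
    simp only [Function.comp_def] at h
    have := h k
    have := h (k + 1)
    have := h (k - 1)
    fun_prop
  set I : ℕ → ℝ := fun k => ∫ M in component m ε,
    Real.exp (x * (M : Matrix (Fin m) (Fin m) ℝ).trace)
        * (balance x (M : Matrix (Fin m) (Fin m) ℝ)).coeff k ∂μ with hI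
  show I k = 0
  by_cases hk : k < m + 2
  · have hq : (∑ k ∈ Finset.range (m + 2), Polynomial.monomial k (I k)) = 0 := by
      refine Polynomial.eq_zero_of_infinite_isRoot _ ((Set.Ioi_infinite (1 : ℝ)).mono ?_)
      intro z hz
      show Polynomial.eval z _ = 0
      rw [Polynomial.eval_finsetSum]
      simp only [Polynomial.eval_monomial]
      rw [← integral_balance_eval μ ε x (Set.mem_Ioi.mp hz)]
      simp only [fun M : Matrix (Fin m) (Fin m) ℝ => Polynomial.eval_eq_sum_range' (hdeg M) z,
        Finset.mul_sum, ← mul_assoc]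
      rw [integral_finsetSum _ fun i _ =>
        (integrable_component μ ε (hcont i)).mul_const _]
      refine Finset.sum_congr rfl fun i _ => ?_
      rw [integral_mul_const]
    have h2 := congrArg (fun p => Polynomial.coeff p k) hq
    simpa [Polynomial.finsetSum_coeff, Polynomial.coeff_monomial, hk] using h2
  · simp [hI, hz0 _ k (not_lt.mp hk)]

/-- The average `J_k(x)` of the `k`-th characteristic coefficient against `exp (x tr M)` over the component
`det M = ε`, without the normalising factor `2`. -/
def moment (μ : Measure (Matrix.orthogonalGroup (Fin m) ℝ)) (ε : ℝ) (k : ℤ) (x : ℝ) : ℝ :=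
  ∫ M in component m ε, ccoef (M : Matrix (Fin m) (Fin m) ℝ) k
    * Real.exp (x * (M : Matrix (Fin m) (Fin m) ℝ).trace) ∂μ

theorem continuous_ccoef_coe (k : ℤ) : Continuous (fun M : Matrix.orthogonalGroup (Fin m) ℝ =>
    ccoef (M : Matrix (Fin m) (Fin m) ℝ) k) :=
  (continuous_ccoef (m := m) k).comp continuous_subtype_val

theorem abs_trace_le (M : Matrix.orthogonalGroup (Fin m) ℝ) :
    |(M : Matrix (Fin m) (Fin m) ℝ).trace| ≤ m := by
  rw [Matrix.trace]
  refine (Finset.abs_sum_le_sum_abs _ _).trans ?_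
  refine (Finset.sum_le_sum fun i _ => ?_).trans (b := ∑ _i : Fin m, (1 : ℝ)) (by simp)
  have := entry_norm_bound_of_unitary M.2 i i
  rwa [Real.norm_eq_abs] at this

/-- Differentiation under the integral sign. -/
theorem hasDerivAt_moment' (μ : Measure (Matrix.orthogonalGroup (Fin m) ℝ))
    [IsProbabilityMeasure μ] (ε : ℝ) (k : ℤ) (x : ℝ) :
    HasDerivAt (moment μ ε k) (∫ M in component m ε, (M : Matrix (Fin m) (Fin m) ℝ).trace *
      ccoef (M : Matrix (Fin m) (Fin m) ℝ) k
        * Real.exp (x * (M : Matrix (Fin m) (Fin m) ℝ).trace) ∂μ) x := by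
  have hc := continuous_ccoef_coe (m := m) k
  refine (hasDerivAt_integral_of_dominated_loc_of_deriv_le (μ := μ.restrict (component m ε))
    (𝕜 := ℝ) (x₀ := x)
    (F := fun x (M : Matrix.orthogonalGroup (Fin m) ℝ) => ccoef (M : Matrix (Fin m) (Fin m) ℝ) k
      * Real.exp (x * (M : Matrix (Fin m) (Fin m) ℝ).trace))
    (F' := fun x (M : Matrix.orthogonalGroup (Fin m) ℝ) => (M : Matrix (Fin m) (Fin m) ℝ).trace *
      ccoef (M : Matrix (Fin m) (Fin m) ℝ) k
      * Real.exp (x * (M : Matrix (Fin m) (Fin m) ℝ).trace))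
    (s := Metric.ball x 1)
    (bound := fun M => |(M : Matrix (Fin m) (Fin m) ℝ).trace *
      ccoef (M : Matrix (Fin m) (Fin m) ℝ) k| * Real.exp ((|x| + 1) * m))
    (Metric.ball_mem_nhds x one_pos)
    (Filter.Eventually.of_forall fun t =>
      (integrable_component μ ε (by fun_prop)).aestronglyMeasurable)
    (integrable_component μ ε (by fun_prop))
    (integrable_component μ ε (by fun_prop)).aestronglyMeasurable
    (Filter.Eventually.of_forall fun M t ht => ?_)
    (integrable_component μ ε (by fun_prop))
    (Filter.Eventually.of_forall fun M t _ => ?_)).2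
  · rw [norm_mul, Real.norm_eq_abs, Real.norm_eq_abs, Real.abs_exp]
    refine mul_le_mul_of_nonneg_left (Real.exp_le_exp.mpr ?_) (abs_nonneg _)
    refine (le_abs_self _).trans ?_
    rw [abs_mul]
    refine mul_le_mul ?_ (abs_trace_le M) (abs_nonneg _) (by positivity)
    rw [Metric.mem_ball, Real.dist_eq] at ht
    have := abs_sub_abs_le_abs_sub t x
    linarith
  · have := (((hasDerivAt_id t).mul_const (M : Matrix (Fin m) (Fin m) ℝ).trace).exp).const_mul
      (ccoef (M : Matrix (Fin m) (Fin m) ℝ) k)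
    refine this.congr_deriv ?_
    simp only [id]; ring

theorem moment_supp (μ : Measure (Matrix.orthogonalGroup (Fin m) ℝ)) (ε : ℝ) {k : ℤ}
    (hk : k < 0 ∨ (m : ℤ) < k) (x : ℝ) : moment μ ε k x = 0 := by
  simp [moment, ccoef_supp _ hk]

/-- The linear system for the moments: the coefficient identities `integral_balance_coeff`, with the
factor `tr M` read as a derivative in `x`. -/
theorem hasDerivAt_moment (μ : Measure (Matrix.orthogonalGroup (Fin m) ℝ))
    [IsProbabilityMeasure μ] [μ.IsMulLeftInvariant] (ε : ℝ) (k : ℤ) {x : ℝ} (hx : x ≠ 0) :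
    HasDerivAt (moment μ ε k) ((-(k * (m - k)) * moment μ ε k x
      - x * ((k + 1) * moment μ ε (k + 1) x + (m + 1 - k) * moment μ ε (k - 1) x)) / x) x := by
  refine (hasDerivAt_moment' μ ε k x).congr_deriv ?_
  rw [eq_div_iff hx]
  rcases lt_or_ge k 0 with hk | hk
  · have e : (k + 1 : ℝ) * moment μ ε (k + 1) x = 0 := by
      rcases eq_or_ne k (-1) with h | h
      · rw [h]; simp
      · rw [moment_supp μ ε (Or.inl (by omega)), mul_zero]
    rw [e, moment_supp μ ε (Or.inl hk), moment_supp μ ε (Or.inl (by omega : k - 1 < 0))]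
    simp [ccoef_supp _ (Or.inl hk)]
  · lift k to ℕ using hk
    have h := integral_balance_coeff μ ε x k
    simp only [coeff_balance] at h
    have hi : ∀ k, Integrable (fun M : Matrix.orthogonalGroup (Fin m) ℝ =>
        ccoef (M : Matrix (Fin m) (Fin m) ℝ) k
        * Real.exp (x * (M : Matrix (Fin m) (Fin m) ℝ).trace)) (μ.restrict (component m ε)) := by
      intro k
      have := continuous_ccoef_coe (m := m) k
      exact integrable_component μ ε (by fun_prop)
    have hi' : Integrable (fun M : Matrix.orthogonalGroup (Fin m) ℝ =>
        (M : Matrix (Fin m) (Fin m) ℝ).trace * ccoef (M : Matrix (Fin m) (Fin m) ℝ) k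
        * Real.exp (x * (M : Matrix (Fin m) (Fin m) ℝ).trace)) (μ.restrict (component m ε)) := by
      have := continuous_ccoef_coe (m := m) k
      exact integrable_component μ ε (by fun_prop)
    have e : ∀ M : Matrix.orthogonalGroup (Fin m) ℝ,
      Real.exp (x * (M : Matrix (Fin m) (Fin m) ℝ).trace) *
        (-(k * (m - k)) * ccoef (M : Matrix (Fin m) (Fin m) ℝ) k
      - x * ((k + 1) * ccoef (M : Matrix (Fin m) (Fin m) ℝ) (k + 1)
        + (m + 1 - k) * ccoef (M : Matrix (Fin m) (Fin m) ℝ) (k - 1))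
      - x * ((M : Matrix (Fin m) (Fin m) ℝ).trace * ccoef (M : Matrix (Fin m) (Fin m) ℝ) k))
      = -(k * (m - k)) * (ccoef (M : Matrix (Fin m) (Fin m) ℝ) k
          * Real.exp (x * (M : Matrix (Fin m) (Fin m) ℝ).trace))
      - x * ((k + 1) * (ccoef (M : Matrix (Fin m) (Fin m) ℝ) (k + 1)
            * Real.exp (x * (M : Matrix (Fin m) (Fin m) ℝ).trace))
        + (m + 1 - k) * (ccoef (M : Matrix (Fin m) (Fin m) ℝ) (k - 1)
            * Real.exp (x * (M : Matrix (Fin m) (Fin m) ℝ).trace)))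
      - x * ((M : Matrix (Fin m) (Fin m) ℝ).trace * ccoef (M : Matrix (Fin m) (Fin m) ℝ) k
          * Real.exp (x * (M : Matrix (Fin m) (Fin m) ℝ).trace)) := fun M => by ring
    simp only [e] at h
    rw [integral_sub, integral_sub, integral_const_mul, integral_const_mul, integral_add,
      integral_const_mul, integral_const_mul, integral_const_mul] at h
    · simp only [moment, Int.cast_natCast]
      linarith
    · exact (hi _).const_mul _
    · exact (hi _).const_mul _
    · exact (hi _).const_mul _
    · exact (((hi _).const_mul _).add ((hi _).const_mul _)).const_mul _
    · exact ((hi _).const_mul _).sub ((((hi _).const_mul _).add ((hi _).const_mul _)).const_mul _)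
    · exact hi'.const_mul _

/-- At `x = 0` the coefficient identity reduces to `-k (m - k) J_k = 0`. -/
theorem moment_zero (μ : Measure (Matrix.orthogonalGroup (Fin m) ℝ))
    [IsProbabilityMeasure μ] [μ.IsMulLeftInvariant] (ε : ℝ) {k : ℤ} (h0 : 0 < k)
    (hm : k < m) : moment μ ε k 0 = 0 := by
  lift k to ℕ using h0.le
  have h := integral_balance_coeff μ ε 0 k
  simp only [coeff_balance, zero_mul, sub_zero, Real.exp_zero, one_mul] at h
  rw [integral_const_mul] at h
  have h1 : (k : ℝ) ≠ 0 := by exact_mod_cast h0.ne'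
  have h2 : (m : ℝ) - k ≠ 0 := sub_ne_zero.mpr (by exact_mod_cast hm.ne')
  have h3 : -((k : ℝ) * (m - k)) ≠ 0 := neg_ne_zero.mpr (mul_ne_zero h1 h2)
  simpa [moment] using (mul_eq_zero.mp h).resolve_left h3

theorem moment_top (μ : Measure (Matrix.orthogonalGroup (Fin m) ℝ)) (ε x : ℝ) :
    moment μ ε m x
      = ∫ M in component m ε, Real.exp (x * (M : Matrix (Fin m) (Fin m) ℝ).trace) ∂μ := by
  have h : ∀ M : Matrix (Fin m) (Fin m) ℝ, ccoef M (m : ℤ) = 1 := by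
    intro M
    have h1 := M.charpoly_monic.coeff_natDegree
    rw [Matrix.charpoly_natDegree_eq_dim, Fintype.card_fin] at h1
    rw [ccoef_natCast, h1]
  simp [moment, h]

theorem measurableSet_component (ε : ℝ) : MeasurableSet (component m ε) :=
  (isClosed_eq (by fun_prop) continuous_const).measurableSet

/-- The constant coefficient of the characteristic polynomial is `(-1) ^ m * det M`. -/
theorem moment_bottom (μ : Measure (Matrix.orthogonalGroup (Fin m) ℝ)) (ε x : ℝ) :
    moment μ ε 0 x = (-1) ^ m * ε * moment μ ε m x := by
  rw [moment_top, ← integral_const_mul, moment]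
  refine setIntegral_congr_fun (measurableSet_component ε) fun M hM => ?_
  have h1 := Matrix.det_eq_sign_charpoly_coeff (M : Matrix (Fin m) (Fin m) ℝ)
  have h2 : (M : Matrix (Fin m) (Fin m) ℝ).det = ε := hM
  have h3 : ccoef (M : Matrix (Fin m) (Fin m) ℝ) 0
      = (M : Matrix (Fin m) (Fin m) ℝ).charpoly.coeff 0 :=
    ccoef_natCast (M : Matrix (Fin m) (Fin m) ℝ) 0
  rw [h2, Fintype.card_fin] at h1
  have h4 : ((-1 : ℝ) ^ m) * (-1) ^ m = 1 := by rw [← mul_pow]; simp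
  simp only [h3]
  rw [h1, ← mul_assoc, h4, one_mul]

/-- Both components have positive measure: a reflection exchanges them, and together they cover the
group. -/
theorem component_ne_zero {n : ℕ} (μ : Measure (Matrix.orthogonalGroup (Fin (n + 1)) ℝ))
    [IsProbabilityMeasure μ] [μ.IsMulLeftInvariant] {ε : ℝ} (hε : ε = 1 ∨ ε = -1) :
    μ (component (n + 1) ε) ≠ 0 := by
  intro h0
  let d : Fin (n + 1) → ℝ := Function.update 1 0 (-1)
  have hd : d * d = 1 := by
    ext i
    by_cases hi : i = 0
    · subst hi; simp [d]
    · simp [d, hi]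
  let r : Matrix.orthogonalGroup (Fin (n + 1)) ℝ := ⟨Matrix.diagonal d, by
    rw [mem_orthogonalGroup_iff, Matrix.diagonal_transpose, Matrix.diagonal_mul_diagonal]
    exact (congrArg Matrix.diagonal hd).trans Matrix.diagonal_one⟩
  have hr : (r : Matrix (Fin (n + 1)) (Fin (n + 1)) ℝ).det = -1 := by
    show (Matrix.diagonal d).det = -1
    rw [Matrix.det_diagonal, Fin.prod_univ_succ]
    simp [d, Fin.succ_ne_zero]
  have h1 : μ (component (n + 1) (-ε)) = 0 := by
    rw [← h0, ← measure_preimage_mul μ r (component (n + 1) ε)]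
    congr 1
    ext M
    simp only [component, Set.mem_ofPred_eq, Set.mem_preimage, Submonoid.coe_mul, det_mul, hr]
    constructor <;> intro h <;> linarith
  have h2 : (Set.univ : Set (Matrix.orthogonalGroup (Fin (n + 1)) ℝ))
      ⊆ component (n + 1) ε ∪ component (n + 1) (-ε) := by
    intro M _
    have h3 := congrArg Matrix.det ((mem_orthogonalGroup_iff (Fin (n + 1)) ℝ).mp M.2)
    rw [det_mul, det_transpose, det_one, mul_self_eq_one_iff] at h3
    simp only [component, Set.mem_union, Set.mem_ofPred_eq]
    rcases hε with rfl | rfl <;> rcases h3 with h | h <;> simp [h]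
  have h4 := measure_mono_null h2 (measure_union_null h0 h1)
  rw [measure_univ] at h4
  exact one_ne_zero h4

theorem moment_top_eq_mgf (μ : Measure (Matrix.orthogonalGroup (Fin m) ℝ)) (ε : ℝ) :
    moment μ ε m = ProbabilityTheory.mgf
      (fun M : Matrix.orthogonalGroup (Fin m) ℝ => (M : Matrix (Fin m) (Fin m) ℝ).trace)
      (μ.restrict (component m ε)) := by
  ext x
  rw [moment_top]; rfl

theorem integrable_exp_trace (μ : Measure (Matrix.orthogonalGroup (Fin m) ℝ))
    [IsProbabilityMeasure μ] (ε x : ℝ) :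
    Integrable (fun M : Matrix.orthogonalGroup (Fin m) ℝ =>
      Real.exp (x * (M : Matrix (Fin m) (Fin m) ℝ).trace)) (μ.restrict (component m ε)) :=
  integrable_component μ ε (by fun_prop)

theorem moment_top_pos {n : ℕ} (μ : Measure (Matrix.orthogonalGroup (Fin (n + 1)) ℝ))
    [IsProbabilityMeasure μ] [μ.IsMulLeftInvariant] {ε : ℝ} (hε : ε = 1 ∨ ε = -1) (x : ℝ) :
    0 < moment μ ε (n + 1 : ℕ) x := by
  rw [moment_top_eq_mgf]
  refine ProbabilityTheory.mgf_pos' ?_ (integrable_exp_trace μ ε x)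
  rw [Ne, Measure.restrict_eq_zero]
  exact component_ne_zero μ hε

theorem analyticAt_moment_top (μ : Measure (Matrix.orthogonalGroup (Fin m) ℝ))
    [IsProbabilityMeasure μ] (ε x : ℝ) : AnalyticAt ℝ (moment μ ε m) x := by
  rw [moment_top_eq_mgf]
  refine ProbabilityTheory.analyticAt_mgf ?_
  have : ProbabilityTheory.integrableExpSet
      (fun M : Matrix.orthogonalGroup (Fin m) ℝ => (M : Matrix (Fin m) (Fin m) ℝ).trace)
      (μ.restrict (component m ε)) = Set.univ :=
    Set.eq_univ_of_forall fun t => integrable_exp_trace μ ε t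
  simp [this]

/-! ### Comparison and the differential equation -/

/-- The function `σ = x τ' / τ` in terms of the reflection coefficients `p = r_n`, `q = r_{n+1}`, for
`O(n + 1)` and `s = (-1) ^ (n + 1) * ε`. -/
def sigmaForm (n s x p q : ℝ) : ℝ :=
  x ^ 2 * (1 - p ^ 2) * (1 - q ^ 2) - n * x * p * q - s * x * p

/-- The comparison step: `J_k = τ Q_k` near `0⁺`. The case `k = n` gives the claim, since `τ' = -J_n`
and `σ = -x Q_n`, the latter from the equation for the constant leading coefficient `Q_{n+1} = 1`. -/
theorem LaxFamily.moment_eq {n : ℕ} {p q : ℝ → ℝ} {u v : ℤ → ℝ → ℝ} (h : LaxFamily n p q u v)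
    (μ : Measure (Matrix.orthogonalGroup (Fin (n + 1)) ℝ))
    [IsProbabilityMeasure μ] [μ.IsMulLeftInvariant] {ε s : ℝ} (hs : s = 1 ∨ s = -1)
    (hsε : s = (-1) ^ (n + 1) * ε) :
    ∃ δ > 0, ∀ x ∈ Set.Ioo 0 δ, LaxAt n p q u v x ∧
      x * deriv (moment μ ε (n + 1 : ℕ)) x
        = sigmaForm n s x (p x) (q x) * moment μ ε (n + 1 : ℕ) x := by
  set Q : ℤ → ℝ → ℝ := fun k y => u (k - 1) y + s * v k y with hQdef
  set τ : ℝ → ℝ := moment μ ε (n + 1 : ℕ) with hτ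
  have hQc : ∀ k, ContinuousAt (Q k) 0 := fun k =>
    (h.cu (k - 1)).add (continuousAt_const.mul (h.cv k))
  have hQsupp : ∀ k : ℤ, (k < 0 ∨ ((n + 1 : ℕ) : ℤ) < k) → ∀ x, Q k x = 0 := by
    intro k hk x
    simp only [hQdef]
    rw [h.usupp (k - 1) (by omega), h.vsupp k (by omega)]
    ring
  have hQ0 : ∀ k : ℤ, Q k 0 = (if k = (n + 1 : ℕ) then 1 else 0) + s * (if k = 0 then 1 else 0) := by
    intro k
    simp only [hQdef]
    rw [h.u0, h.v0]
    congr 1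
    refine if_congr ?_ rfl rfl
    omega
  have hQ0b : ∀ k, |Q k 0| < 3 := by
    intro k
    rw [hQ0]
    rcases hs with rfl | rfl <;> split_ifs <;> norm_num
  have hQtop : ∀ x, Q (n + 1 : ℕ) x = 1 := by
    intro x
    simp only [hQdef]
    rw [h.vsupp _ (by omega)]
    have := h.un x
    simp [this]
  have hev : ∀ᶠ x in 𝓝[>] (0 : ℝ), LaxAt n p q u v x ∧
      ∀ k ∈ Finset.Icc (0 : ℤ) (n + 1 : ℕ), |Q k x| < 3 := by
    refine h.lax.and ?_
    rw [Filter.eventually_all_finset]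
    intro k _
    exact ((hQc k).abs.eventually (gt_mem_nhds (hQ0b k))).filter_mono nhdsWithin_le_nhds
  obtain ⟨δ, hδ, hδs⟩ := mem_nhdsGT_iff_exists_Ioo_subset.mp hev
  have hlax : ∀ x ∈ Set.Ioo 0 δ, LaxAt n p q u v x := fun x hx => (hδs hx).1
  have hsig : ∀ x ∈ Set.Ioo 0 δ, sigmaForm n s x (p x) (q x) = -x * Q n x := by
    intro x hx
    have hx0 : x ≠ 0 := hx.1.ne'
    have h1 := (hlax x hx).para hx0 hs (n + 1 : ℕ)
    have h2 : HasDerivAt (fun y => u (((n + 1 : ℕ) : ℤ) - 1) y + s * v ((n + 1 : ℕ) : ℤ) y) 0 x := by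
      have : (fun y => u (((n + 1 : ℕ) : ℤ) - 1) y + s * v ((n + 1 : ℕ) : ℤ) y) = fun _ => 1 :=
        funext hQtop
      rw [this]; exact hasDerivAt_const _ _
    have h3 := h1.unique h2
    have t1 : u (((n + 1 : ℕ) : ℤ) - 1) x + s * v ((n + 1 : ℕ) : ℤ) x = 1 := hQtop x
    have t2 : u ((n + 1 : ℕ) : ℤ) x + s * v (((n + 1 : ℕ) : ℤ) + 1) x = 0 := by
      rw [h.usupp _ (by omega), h.vsupp _ (by omega)]; ring
    have t3 : u (((n + 1 : ℕ) : ℤ) - 2) x + s * v (((n + 1 : ℕ) : ℤ) - 1) x = Q n x := by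
      have i1 : ((n + 1 : ℕ) : ℤ) - 2 = (n : ℤ) - 1 := by omega
      have i2 : ((n + 1 : ℕ) : ℤ) - 1 = n := by omega
      simp only [hQdef, i1, i2]
    rw [t1, t2, t3, div_eq_zero_iff] at h3
    have h4 := h3.resolve_right hx0
    push_cast at h4
    rw [sigmaForm]
    linarith
  have hτd : ∀ x ∈ Set.Ioo 0 δ, HasDerivAt τ (-moment μ ε n x) x := by
    intro x hx
    have hx0 : x ≠ 0 := hx.1.ne'
    refine (hasDerivAt_moment μ ε (n + 1 : ℕ) hx0).congr_deriv ?_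
    rw [moment_supp μ ε (k := ((n + 1 : ℕ) : ℤ) + 1) (Or.inr (by omega))]
    have : ((n + 1 : ℕ) : ℤ) - 1 = n := by omega
    rw [this]
    push_cast
    field_simp
    ring
  have hDz := system_unique (m := n + 1) (δ := δ) (B := 3)
    (fun k x => moment μ ε k x - τ x * Q k x) Q ?_ ?_ ?_ ?_ ?_
  · refine ⟨δ, hδ, fun x hx => ⟨hlax x hx, ?_⟩⟩
    have h1 := hDz x hx n
    rw [(hτd x hx).deriv, hsig x hx]
    linear_combination -x * h1
  · intro k hk x
    simp only [moment_supp μ ε hk, hQsupp k hk, mul_zero, sub_zero]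
  · intro k
    show moment μ ε k 0 - τ 0 * Q k 0 = 0
    rw [hQ0]
    rcases lt_trichotomy k 0 with hk | hk | hk
    · rw [moment_supp μ ε (Or.inl hk), if_neg (by omega), if_neg (by omega)]; ring
    · subst hk
      rw [moment_bottom, if_neg (by omega), if_pos rfl, ← hsε]; ring
    · rcases lt_trichotomy k ((n + 1 : ℕ) : ℤ) with hk' | hk' | hk'
      · rw [moment_zero μ ε hk hk', if_neg (by omega), if_neg (by omega)]; ring
      · subst hk'
        rw [if_pos rfl, if_neg (by omega)]; ring
      · rw [moment_supp μ ε (Or.inr hk'), if_neg (by omega), if_neg (by omega)]; ring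
  · intro k
    exact (hasDerivAt_moment' μ ε k 0).continuousAt.sub
      ((hasDerivAt_moment' μ ε _ 0).continuousAt.mul (hQc k))
  · intro k x hx
    by_cases hk : k ∈ Finset.Icc (0 : ℤ) (n + 1 : ℕ)
    · exact ((hδs hx).2 k hk).le
    · rw [hQsupp k (by simp only [Finset.mem_Icc] at hk; omega)]; norm_num
  · intro x hx k
    have hx0 : x ≠ 0 := hx.1.ne'
    have hpara := (hlax x hx).para hx0 hs k
    have hd := (hasDerivAt_moment μ ε k hx0).sub ((hτd x hx).mul hpara)
    refine hd.congr_deriv ?_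
    have e1 : u k x + s * v (k + 1) x = Q (k + 1) x := by simp only [hQdef, add_sub_cancel_right]
    have e2 : u (k - 2) x + s * v (k - 1) x = Q (k - 1) x := by
      simp only [hQdef]; congr 2; omega
    have e3 : u (k - 1) x + s * v k x = Q k x := rfl
    have e4 : ((n + 1 : ℕ) : ℤ) - 1 = n := by omega
    have hsx := hsig x hx
    rw [sigmaForm] at hsx
    rw [e1, e2, e3, e4, hsx, eq_div_iff hx0]
    push_cast
    field_simp
    ring

/-- The differential equation in the variables `x, p, q`, where `g2` stands for `x` times the second
derivative. It is a polynomial identity modulo `s ^ 2 = 1`. -/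
theorem painleve_identity {x p q n s : ℝ} (hs : s = 1 ∨ s = -1) {f f1 g2 : ℝ}
    (hf : f = sigmaForm n s x p q)
    (h1 : f1 = 2 * x * (1 - p ^ 2) * (1 - s * q) - s * (n + 1) * p)
    (h2 : g2 = 2 * x * (1 - p ^ 2) * (1 - s * q)
      + 2 * x * (-2 * p) * (n * p + 2 * x * q * (1 - p ^ 2)) * (1 - s * q)
      + 2 * x * (1 - p ^ 2) * (-s) * (-(n + 1) * q - 2 * x * p * (1 - q ^ 2))
      - s * (n + 1) * (n * p + 2 * x * q * (1 - p ^ 2))) :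
    g2 ^ 2 / 4 = -(x * f1 ^ 2 - (4 * x ^ 2 + n ^ 2 / 4) * f1 + x * (n ^ 2 - 1)) * f1
      + (f1 ^ 2 - 8 * x * f1 + n ^ 2 - 1) * f + 4 * f ^ 2 := by
  rw [sigmaForm] at hf
  subst hf h1 h2
  rcases hs with rfl | rfl <;> ring

/-- The equations for `p` and `q` collapse the derivative of `σ` to an expression without
`1 - q ^ 2`. -/
theorem LaxAt.hasDerivAt_sigmaForm {n : ℕ} {p q : ℝ → ℝ} {u v : ℤ → ℝ → ℝ} {x s : ℝ}
    (h : LaxAt n p q u v x) (hx : x ≠ 0) (hs : s = 1 ∨ s = -1) :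
    HasDerivAt (fun y => sigmaForm n s y (p y) (q y))
      (2 * x * (1 - p x ^ 2) * (1 - s * q x) - s * (n + 1) * p x) x := by
  have hid := hasDerivAt_id x
  have h1 := ((((hid.fun_pow 2).fun_mul ((h.hp.fun_pow 2).const_sub 1)).fun_mul
    ((h.hq.fun_pow 2).const_sub 1)).fun_sub (((hid.const_mul (n : ℝ)).fun_mul h.hp).fun_mul h.hq)).fun_sub
    ((hid.const_mul s).fun_mul h.hp)
  refine h1.congr_deriv ?_
  simp only [id]
  rcases hs with rfl | rfl <;> field_simp <;> ring

theorem LaxAt.hasDerivAt_sigmaForm2 {n : ℕ} {p q : ℝ → ℝ} {u v : ℤ → ℝ → ℝ} {x s : ℝ}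
    (h : LaxAt n p q u v x) (hx : x ≠ 0) :
    HasDerivAt (fun y => 2 * y * (1 - p y ^ 2) * (1 - s * q y) - s * (n + 1) * p y)
      ((2 * x * (1 - p x ^ 2) * (1 - s * q x)
      + 2 * x * (-2 * p x) * (n * p x + 2 * x * q x * (1 - p x ^ 2)) * (1 - s * q x)
      + 2 * x * (1 - p x ^ 2) * (-s) * (-(n + 1) * q x - 2 * x * p x * (1 - q x ^ 2))
      - s * (n + 1) * (n * p x + 2 * x * q x * (1 - p x ^ 2))) / x) x := by
  have hid := hasDerivAt_id x
  have h1 := (((hid.const_mul 2).fun_mul ((h.hp.fun_pow 2).const_sub 1)).fun_mul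
    ((h.hq.const_mul s).const_sub 1)).fun_sub (h.hp.const_mul (s * (n + 1)))
  refine h1.congr_deriv ?_
  simp only [id]
  field_simp
  ring

/-- The leading characteristic coefficient is `1`, so `J_m` is the generating function up to the factor `2`. -/
theorem expO_eq_moment (μ : Measure (Matrix.orthogonalGroup (Fin m) ℝ)) (ε y : ℝ) :
    expO m μ ε (fun M => Real.exp (y * Matrix.trace (M : Matrix (Fin m) (Fin m) ℝ)))
      = 2 * moment μ ε m y := by
  rw [expO, moment_top, ← integral_indicator (measurableSet_component ε)]
  congr 2

end

theorem orthogonal_integral_painleveV_secondOrder (ℓ : ℕ) (hℓ : 1 ≤ ℓ)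
    (ε : ℝ) (hε : ε = 1 ∨ ε = -1)
    (μ : Measure (Matrix.orthogonalGroup (Fin (ℓ + 1)) ℝ)) [IsProbabilityMeasure μ]
    [μ.IsMulLeftInvariant]
    (f : ℝ → ℝ)
    (hf : ∀ x, f x = x * deriv (fun y => Real.log (expO (ℓ + 1) μ ε
      (fun M => Real.exp (y * Matrix.trace (M : Matrix (Fin (ℓ + 1)) (Fin (ℓ + 1)) ℝ))))) x) :
    ∀ x : ℝ,
      (x ^ 2 / 4) * (iteratedDeriv 2 f x) ^ 2 =
        -(x * (deriv f x) ^ 2 - (4 * x ^ 2 + (ℓ : ℝ) ^ 2 / 4) * deriv f x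
            + x * ((ℓ : ℝ) ^ 2 - 1)) * deriv f x
          + ((deriv f x) ^ 2 - 8 * x * deriv f x + (ℓ : ℝ) ^ 2 - 1) * f x + 4 * (f x) ^ 2 := by
  set τ : ℝ → ℝ := moment μ ε (ℓ + 1 : ℕ) with hτ
  have hpos : ∀ x, 0 < τ x := moment_top_pos μ hε
  have hana : ∀ x, AnalyticAt ℝ τ x := analyticAt_moment_top μ ε
  have hfτ : f = fun x => x * (deriv τ x / τ x) := by
    ext x
    rw [hf]
    congr 1
    simp only [expO_eq_moment]
    have h1 := (hana x).differentiableAt.hasDerivAt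
    have h2 := ((h1.const_mul 2).log (by have := hpos x; positivity)).deriv
    refine h2.trans ?_
    have := (hpos x).ne'
    field_simp
  have hfa : ∀ x, AnalyticAt ℝ f x := by
    intro x
    rw [hfτ]
    exact analyticAt_id.mul ((hana x).deriv.div (hana x) (hpos x).ne')
  have hit : iteratedDeriv 2 f = deriv (deriv f) := by
    rw [iteratedDeriv_succ, iteratedDeriv_one]
  obtain ⟨s, hsε, hs⟩ : ∃ s : ℝ, s = (-1) ^ (ℓ + 1) * ε ∧ (s = 1 ∨ s = -1) := by
    refine ⟨_, rfl, ?_⟩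
    rcases neg_one_pow_eq_or ℝ (ℓ + 1) with h | h <;> rcases hε with h' | h' <;> simp [h, h']
  obtain ⟨p, q, u, v, hL⟩ := exists_laxFamily ℓ
  obtain ⟨δ, hδ, hδs⟩ := hL.moment_eq μ hs hsε
  have hnhds : ∀ x ∈ Set.Ioo 0 δ, Set.Ioo 0 δ ∈ 𝓝 x := fun x hx => Ioo_mem_nhds hx.1 hx.2
  have hf0 : ∀ x ∈ Set.Ioo 0 δ, f x = sigmaForm ℓ s x (p x) (q x) := by
    intro x hx
    rw [hfτ]
    simp only
    rw [← mul_div_assoc, (hδs x hx).2, mul_div_cancel_right₀ _ (hpos x).ne']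
  have hf1 : ∀ x ∈ Set.Ioo 0 δ, deriv f x
      = 2 * x * (1 - p x ^ 2) * (1 - s * q x) - s * (ℓ + 1) * p x := by
    intro x hx
    refine HasDerivAt.deriv (((hδs x hx).1.hasDerivAt_sigmaForm hx.1.ne' hs).congr_of_eventuallyEq ?_)
    filter_upwards [hnhds x hx] with y hy using hf0 y hy
  have hlocal : ∀ x ∈ Set.Ioo 0 δ, (x ^ 2 / 4) * (deriv (deriv f) x) ^ 2 =
        -(x * (deriv f x) ^ 2 - (4 * x ^ 2 + (ℓ : ℝ) ^ 2 / 4) * deriv f x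
            + x * ((ℓ : ℝ) ^ 2 - 1)) * deriv f x
          + ((deriv f x) ^ 2 - 8 * x * deriv f x + (ℓ : ℝ) ^ 2 - 1) * f x + 4 * (f x) ^ 2 := by
    intro x hx
    have h2 := HasDerivAt.deriv (((hδs x hx).1.hasDerivAt_sigmaForm2 (s := s)
      hx.1.ne').congr_of_eventuallyEq (f₁ := deriv f) (by
        filter_upwards [hnhds x hx] with y hy using hf1 y hy))
    rw [eq_div_iff hx.1.ne'] at h2
    rw [← painleve_identity hs (hf0 x hx) (hf1 x hx) h2]
    ring
  have hd1 : ∀ x, AnalyticAt ℝ (deriv f) x := fun x => (hfa x).deriv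
  have hd2 : ∀ x, AnalyticAt ℝ (deriv (deriv f)) x := fun x => (hd1 x).deriv
  -- Both sides are real analytic on all of `ℝ`, so they agree everywhere once they agree near `δ / 2`.
  have hglobal := AnalyticOnNhd.eq_of_eventuallyEq (𝕜 := ℝ) (z₀ := δ / 2)
    (f := fun x => (x ^ 2 / 4) * (deriv (deriv f) x) ^ 2)
    (g := fun x => -(x * (deriv f x) ^ 2 - (4 * x ^ 2 + (ℓ : ℝ) ^ 2 / 4) * deriv f x
            + x * ((ℓ : ℝ) ^ 2 - 1)) * deriv f x
          + ((deriv f x) ^ 2 - 8 * x * deriv f x + (ℓ : ℝ) ^ 2 - 1) * f x + 4 * (f x) ^ 2)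
    (fun x _ => by have := hd2 x; fun_prop)
    (fun x _ => by have := hd1 x; have := hfa x; fun_prop)
    (by
      filter_upwards [hnhds (δ / 2) ⟨by linarith, by linarith⟩] with y hy using hlocal y hy)
  intro x
  rw [hit]
  exact congrFun hglobal x
end
end

section
/- Let n ≥ 1 and define, for x > 0, F(x) := log E_{U(n)}[ exp( √x · (tr M + conj(tr M)) ) ] (the integrand is a positive real number since tr M + conj(tr M) = 2·Re(tr M)), and g(x) := d/dx ( x·F′(x) ) = F′(x) + x·F′′(x). Then for every x > 0 at which g(x) ≠ 0 and g(x) ≠ 1, the Painlevé V equation holds: g′′ − (g′²/2)·( 1/(g−1) + 1/g ) + g′/x + (2/x)·g·(g−1) − (n²/(2x²))·(g−1)/g = 0. -/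
/-!
Write `t = √x`. The integral over `U(n)` equals the Toeplitz determinant
`toep n t = det [φ_{i-j}(t)]`, where `φ_k(t)` is the `k`-th Fourier coefficient of the weight
`exp (2 t cos θ)` on the circle (`integral_eq_toep`). In particular all these determinants are
positive (`toep_pos`), so the monic orthogonal polynomials `Φ_n` of the weight exist, and
`log (toep n t)` is the sum of the logarithms of their squared norms `kap j t`, `j < n`.

*From Toeplitz determinants to Painlevé V.* Let `alp n t = Φ_n(0)`. The weight `w` satisfies
`∂w/∂t = (z + z⁻¹) w` and `z ∂w/∂z = t (z - z⁻¹) w`. Carried along the Szegő recursion by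
induction on `n`, these two facts give (`flow`, `string_eq`), with `a_n = alp n t`,
`d a_n / dt = (1 - a_n²) (a_{n+1} - a_{n-1})` and `-n a_n = t (1 - a_n²) (a_{n+1} + a_{n-1})`
(the Ablowitz–Ladik flow and discrete Painlevé II). Together they form a closed first order system
for the pair `(a_n, a_{n-1})`. Moreover `d/dt log (toep n t) = -2 ∑_{j<n} a_j a_{j+1}`, and
`d/dt (t ∑_{j<n} a_j a_{j+1}) = -2 t (1 - a_n²)`, whence `g(x) = 1 - alp n (√x) ^ 2`. Differentiating
twice and eliminating `a_{n-1}` gives Painlevé V (`painleve_of_toep`).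

*From the integral to the Toeplitz determinant.* No Weyl integration formula is used. For a
polynomial `P`, the identity `∏ P(z_i) = det [∑_m P_m h_{m+i-j}(z)]` (`jacobi_trudi`), with `h_k` the
complete homogeneous symmetric functions, expresses `det P(M)` through the characters
`∏_i h_{k_i}` of `⨂_i Sym^{k_i} ℂⁿ`. Realise this representation on the polynomials in the entries
of an `n × n` matrix `Y` of degree `k_i` in the `i`-th row, `M` acting by `Y ↦ Y M`. Averaging a
polynomial against `conj (det M) ^ N` produces a semi-invariant, which agrees with a multiple of
`det Y ^ N` on `U(n)` and hence everywhere, since `U(n)` is Zariski dense (`evm_eq_zero`). So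
`E [conj (det M) ^ N ∏_i h_{k_i}]` is `1` if all `k_i = N` and `0` otherwise (`integral_symTr`),
and `E [conj (det M) ^ N det P(M)] = det [P_{N-i+j}]` (`heine`). Apply this to
`P(z) = z^K e_K(t z) e_K(t / z)` with `N = K`, where `e_K` is the truncated exponential series, and
let `K → ∞`.
-/

open MeasureTheory Matrix

noncomputable section

instance (n : ℕ) : MeasurableSpace (Matrix.unitaryGroup (Fin n) ℂ) := borel _

namespace PV

/-! ### The Fourier coefficients of the weight -/

/-- The `k`-th Fourier coefficient of the weight `exp (2 t cos θ)`, i.e. the modified Bessel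
function `I_k(2t)`. -/
def phi (k : ℤ) (t : ℝ) : ℝ :=
  (2 * Real.pi)⁻¹ * ∫ θ in (0 : ℝ)..(2 * Real.pi), Real.cos (k * θ) * Real.exp (2 * t * Real.cos θ)

lemma phi_neg (k : ℤ) (t : ℝ) : phi (-k) t = phi k t := by
  simp [phi, neg_mul, Real.cos_neg]

/-- Integration of `d/dθ (sin (k θ) exp (2 t cos θ))` over a period. -/
lemma phi_rec (k : ℤ) (t : ℝ) : (k : ℝ) * phi k t = t * (phi (k - 1) t - phi (k + 1) t) := by
  have hInt : ∀ k : ℤ, IntervalIntegrable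
      (fun θ => Real.cos (k * θ) * Real.exp (2 * t * Real.cos θ)) volume 0 (2 * Real.pi) :=
    fun k => Continuous.intervalIntegrable (by fun_prop) _ _
  have key : ∫ θ in (0 : ℝ)..(2 * Real.pi),
      ((k : ℝ) * (Real.cos (k * θ) * Real.exp (2 * t * Real.cos θ))
        - t * (Real.cos ((k - 1 : ℤ) * θ) * Real.exp (2 * t * Real.cos θ)
          - Real.cos ((k + 1 : ℤ) * θ) * Real.exp (2 * t * Real.cos θ))) = 0 := by
    rw [intervalIntegral.integral_eq_sub_of_hasDerivAt
      (f := fun θ => Real.sin (k * θ) * Real.exp (2 * t * Real.cos θ))]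
    · have : Real.sin (k * (2 * Real.pi)) = 0 := by
        have := Real.sin_int_mul_pi (2 * k)
        rw [← this]; congr 1; push_cast; ring
      simp [this]
    · intro θ _
      have h1 : HasDerivAt (fun θ : ℝ => Real.sin (k * θ)) (Real.cos (k * θ) * k) θ := by
        exact (((hasDerivAt_id θ).const_mul (k : ℝ)).sin).congr_deriv (by simp)
      have h2 : HasDerivAt (fun θ : ℝ => Real.exp (2 * t * Real.cos θ))
          (Real.exp (2 * t * Real.cos θ) * (2 * t * (-Real.sin θ))) θ :=
        ((Real.hasDerivAt_cos θ).const_mul (2 * t)).exp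
      refine (h1.mul h2).congr_deriv ?_
      have e1 : ((k - 1 : ℤ) : ℝ) * θ = k * θ - θ := by push_cast; ring
      have e2 : ((k + 1 : ℤ) : ℝ) * θ = k * θ + θ := by push_cast; ring
      rw [e1, e2, Real.cos_sub, Real.cos_add]; ring
    · exact Continuous.intervalIntegrable (by fun_prop) _ _
  rw [intervalIntegral.integral_sub ((hInt k).const_mul _)
      (((hInt (k - 1)).sub (hInt (k + 1))).const_mul _),
    intervalIntegral.integral_const_mul, intervalIntegral.integral_const_mul,
    intervalIntegral.integral_sub (hInt _) (hInt _)] at key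
  unfold phi
  linear_combination (2 * Real.pi)⁻¹ * key

lemma phi_hasDerivAt (k : ℤ) (t : ℝ) :
    HasDerivAt (fun t => phi k t) (phi (k - 1) t + phi (k + 1) t) t := by
  have hInt : ∀ k : ℤ, IntervalIntegrable
      (fun θ => Real.cos (k * θ) * Real.exp (2 * t * Real.cos θ)) volume 0 (2 * Real.pi) :=
    fun k => Continuous.intervalIntegrable (by fun_prop) _ _
  have h := intervalIntegral.hasDerivAt_integral_of_dominated_loc_of_deriv_le
    (μ := volume) (a := 0) (b := 2 * Real.pi) (x₀ := t) (s := Metric.ball t 1)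
    (F := fun t θ => Real.cos (k * θ) * Real.exp (2 * t * Real.cos θ))
    (F' := fun t θ => Real.cos (k * θ) * (Real.exp (2 * t * Real.cos θ) * (2 * Real.cos θ)))
    (bound := fun _ => Real.exp (2 * (|t| + 1)) * 2)
    (Metric.ball_mem_nhds t one_pos)
    (Filter.Eventually.of_forall fun s => (Continuous.aestronglyMeasurable (by fun_prop)))
    (hInt k) (Continuous.aestronglyMeasurable (by fun_prop))
    (Filter.Eventually.of_forall fun θ _ s hs => ?_)
    (Continuous.intervalIntegrable (by fun_prop) _ _)
    (Filter.Eventually.of_forall fun θ _ s hs => ?_)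
  · have h2 := h.2.const_mul (2 * Real.pi)⁻¹
    unfold phi
    refine h2.congr_deriv ?_
    rw [← mul_add, ← intervalIntegral.integral_add (hInt _) (hInt _)]
    congr 1
    refine intervalIntegral.integral_congr fun θ _ => ?_
    have e1 : ((k - 1 : ℤ) : ℝ) * θ = k * θ - θ := by push_cast; ring
    have e2 : ((k + 1 : ℤ) : ℝ) * θ = k * θ + θ := by push_cast; ring
    rw [e1, e2, Real.cos_sub, Real.cos_add]; ring
  · have hs' : |s| ≤ |t| + 1 := by
      rw [Metric.mem_ball, Real.dist_eq] at hs
      have := abs_sub_abs_le_abs_sub s t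
      linarith
    have hc := Real.abs_cos_le_one θ
    rw [norm_mul, norm_mul, norm_mul, Real.norm_eq_abs, Real.norm_eq_abs, Real.norm_eq_abs,
      Real.norm_eq_abs, Real.abs_exp, abs_two]
    have h1 : 2 * s * Real.cos θ ≤ 2 * (|t| + 1) := by
      have : s * Real.cos θ ≤ |s| * 1 := by
        refine (le_abs_self _).trans ?_
        rw [abs_mul]; gcongr
      linarith
    have h2 := Real.exp_le_exp.2 h1
    calc |Real.cos (k * θ)| * (Real.exp (2 * s * Real.cos θ) * (2 * |Real.cos θ|))
        ≤ 1 * (Real.exp (2 * (|t| + 1)) * (2 * 1)) := by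
          gcongr
          exact Real.abs_cos_le_one _
      _ = _ := by ring
  · have h2 : HasDerivAt (fun s : ℝ => 2 * s * Real.cos θ) (2 * Real.cos θ) s := by
      simpa using ((hasDerivAt_id s).const_mul 2).mul_const (Real.cos θ)
    exact h2.exp.const_mul _

/-! ### The Szegő recursion -/

/-- `V n t m` is the mean of `z ^ m Φ_n(z)` against the weight `exp (2 t cos θ)` on the circle, where
`Φ_n` is the `n`-th monic orthogonal polynomial. The recursion is the Szegő recursion
`Φ_{n+1} = z Φ_n + α_{n+1} Φ_n^*` with `Φ_n^*(z) = z^n Φ_n(1/z)`; as the weight is even in `θ`, the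
mean of `z ^ m Φ_n^*` is `V n t (-n - m)`. -/
def V : ℕ → ℝ → ℤ → ℝ
  | 0, t, m => phi m t
  | n + 1, t, m => V n t (m + 1) + -(V n t 1) / V n t (-n) * V n t (-n - m)

/-- The squared norm of the monic orthogonal polynomial `Φ_n`. -/
def kap (n : ℕ) (t : ℝ) : ℝ := V n t (-n)

/-- The Verblunsky coefficient `α_n = Φ_n(0)`, for `n ≥ 1` the one value making `Φ_n` orthogonal to `1`;
moreover `α_0 = 1`. -/
def alp : ℕ → ℝ → ℝ
  | 0, _ => 1
  | n + 1, t => -(V n t 1) / kap n t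

lemma V_succ (n : ℕ) (t : ℝ) (m : ℤ) :
    V (n + 1) t m = V n t (m + 1) + alp (n + 1) t * V n t (-n - m) := rfl

/-- The `n × n` Toeplitz determinant of the weight `exp (2 t cos θ)`. -/
def toep (n : ℕ) (t : ℝ) : ℝ := (Matrix.of fun i j : Fin n => phi ((i : ℤ) - j) t).det

/-- `A` lists the coefficients of the monic polynomial `Φ_n`. -/
lemma V_expand (n : ℕ) (t : ℝ) : ∃ A : ℕ → ℝ, A n = 1 ∧ (∀ k, n < k → A k = 0) ∧
    ∀ m, V n t m = ∑ k ∈ Finset.range (n + 1), A k * phi (m + k) t := by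
  induction n with
  | zero => exact ⟨fun k => if k = 0 then 1 else 0, by simp, by intro k hk; simp; omega,
      by simp [V]⟩
  | succ n ih =>
    obtain ⟨A, h1, h2, h3⟩ := ih
    refine ⟨fun k => (if k = 0 then 0 else A (k - 1)) +
      alp (n + 1) t * (if k ≤ n then A (n - k) else 0), ?_, ?_, ?_⟩
    · simp [h1]
    · intro k hk
      have : ¬ k ≤ n := by omega
      have h0 : k ≠ 0 := by omega
      simp [this, h0, h2 (k - 1) (by omega)]
    · intro m
      simp only [add_mul, Finset.sum_add_distrib]
      rw [V_succ, h3, h3]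
      congr 1
      · rw [Finset.sum_range_succ' _ (n + 1)]
        simp
        refine Finset.sum_congr rfl fun k _ => ?_
        congr 2; ring
      · rw [Finset.sum_range_succ _ (n + 1)]
        simp only [add_le_iff_nonpos_right, nonpos_iff_eq_zero, one_ne_zero, if_false, mul_zero,
          zero_mul, add_zero]
        rw [Finset.mul_sum, ← Finset.sum_range_reflect]
        refine Finset.sum_congr rfl fun k hk => ?_
        rw [Finset.mem_range] at hk
        rw [if_pos (by omega), show n + 1 - 1 - k = n - k by omega, mul_assoc]
        congr 2
        rw [← phi_neg]
        congr 1
        rw [Nat.cast_sub (by omega)]; ring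

/-- If the polynomials are orthogonal up to degree `n - 1`, the unitriangular matrix of their
coefficients brings the Toeplitz matrix to triangular form with diagonal `kap`. -/
lemma toep_eq_prod (n : ℕ) (t : ℝ) (h : ∀ i < n, ∀ j < i, V i t (-(j : ℤ)) = 0) :
    toep n t = ∏ i ∈ Finset.range n, kap i t := by
  choose A h1 h2 h3 using fun n => V_expand n t
  have hA : (Matrix.of fun i k : Fin n => A i k).det = 1 := by
    rw [Matrix.det_of_isLowerTriangular]
    · simp [h1]
    · intro i k hik
      exact h2 _ _ hik
  have hU : (Matrix.of fun i k : Fin n => A i k) * (Matrix.of fun i j : Fin n => phi ((i : ℤ) - j) t)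
      = Matrix.of fun i j : Fin n => V i t (-(j : ℤ)) := by
    ext i j
    rw [Matrix.mul_apply]
    simp only [Matrix.of_apply]
    rw [h3, Fin.sum_univ_eq_sum_range (fun k => A i k * phi ((k : ℤ) - j) t)]
    symm
    refine Finset.sum_subset_zero_on_sdiff ?_ ?_ ?_
    · intro k; simp; omega
    · intro k hk
      simp at hk
      rw [h2 _ _ (by omega), zero_mul]
    · intro k _
      congr 2; ring
  have := congrArg Matrix.det hU
  rw [Matrix.det_mul, hA, one_mul] at this
  rw [toep, this, Matrix.det_of_isUpperTriangular, Finset.prod_range]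
  · rfl
  · intro i j hij
    exact h i i.2 j hij

/-- Orthogonality `⟨Φ_n, z^j⟩ = 0` for `j < n`, and positivity of the norms. The two are proved
together, since orthogonality of `Φ_{n+1}` to `1` needs `kap n t ≠ 0`, while positivity of `kap n t`
comes from `toep (n + 1) t = ∏ kap` and positivity of the Toeplitz determinants. -/
lemma V_orth (hD : ∀ n t, 0 < toep n t) (n : ℕ) (t : ℝ) : (∀ j < n, V n t (-(j : ℤ)) = 0) ∧ 0 < kap n t := by
  induction n using Nat.strong_induction_on with
  | _ n ih =>
    have h0 : ∀ j < n, V n t (-(j : ℤ)) = 0 := by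
      intro j hj
      obtain _ | n := n
      · omega
      obtain ⟨i1, i2⟩ := ih n (by omega)
      obtain _ | j := j
      · have : V n t (-n) ≠ 0 := i2.ne'
        rw [V_succ, alp, kap]; simp; field_simp; simp
      · rw [V_succ]
        have e1 : -((j + 1 : ℕ) : ℤ) + 1 = -(j : ℤ) := by push_cast; ring
        have e2 : -(n : ℤ) - -((j + 1 : ℕ) : ℤ) = -((n - (j + 1) : ℕ) : ℤ) := by
          rw [Nat.cast_sub (by omega)]; ring
        rw [e1, e2, i1 _ (by omega), i1 _ (by omega)]; simp
    refine ⟨h0, ?_⟩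
    have h1 := toep_eq_prod (n + 1) t (by
      intro i hi
      rcases Nat.lt_succ_iff_lt_or_eq.1 hi with h | rfl
      · exact (ih i h).1
      · exact h0)
    have h2 := hD (n + 1) t
    rw [h1, Finset.prod_range_succ] at h2
    exact pos_of_mul_pos_right h2 (Finset.prod_nonneg fun i hi =>
      (ih i (Finset.mem_range.1 hi)).2.le)

lemma toep_eq (hD : ∀ n t, 0 < toep n t) (n : ℕ) (t : ℝ) : toep n t = ∏ i ∈ Finset.range n, kap i t :=
  toep_eq_prod n t fun i _ => (V_orth hD i t).1

lemma V_one (hD : ∀ n t, 0 < toep n t) (n : ℕ) (t : ℝ) : V n t 1 = -alp (n + 1) t * kap n t := by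
  have := (V_orth hD n t).2.ne'
  rw [alp]; field_simp

lemma kap_succ (hD : ∀ n t, 0 < toep n t) (n : ℕ) (t : ℝ) : kap (n + 1) t = kap n t * (1 - alp (n + 1) t ^ 2) := by
  have h := V_one hD n t
  have e : V (n + 1) t (-((n + 1 : ℕ) : ℤ)) = V n t (-n) + alp (n + 1) t * V n t 1 := by
    rw [V_succ]; congr 2
    · push_cast; ring
    · congr 1; push_cast; ring
  rw [kap, e, h]; unfold kap; ring

/-! ### The flow and the string equation -/

/-- The `t`-evolution: `∂_t` of the moments `V n`, and the Ablowitz–Ladik flow of the Verblunsky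
coefficients. Each formula for `V n` yields the one for `α_{n+1}` by differentiating the
orthogonality relation `V (n + 1) t 0 = 0`. -/
lemma flow (hD : ∀ n t, 0 < toep n t) (n : ℕ) : (∀ t m, HasDerivAt (fun t => V n t m)
      (V n t (m + 1) - alp n t * alp (n + 1) t * V n t m + alp (n + 1) t * V n t (-n - m)
        + alp n t * V n t (-n - m + 1)) t) ∧
    ∀ t, HasDerivAt (fun t => alp (n + 1) t)
      ((1 - alp (n + 1) t ^ 2) * (alp (n + 2) t - alp n t)) t := by
  have step : ∀ n, (∀ t m, HasDerivAt (fun t => V n t m)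
      (V n t (m + 1) - alp n t * alp (n + 1) t * V n t m + alp (n + 1) t * V n t (-n - m)
        + alp n t * V n t (-n - m + 1)) t) → ∀ t, HasDerivAt (fun t => alp (n + 1) t)
      ((1 - alp (n + 1) t ^ 2) * (alp (n + 2) t - alp n t)) t := by
    intro n hV t
    have hk := (V_orth hD n t).2.ne'
    have hd : DifferentiableAt ℝ (fun t => alp (n + 1) t) t := by
      have : (fun t => alp (n + 1) t) = fun t => -(V n t 1) / V n t (-n) := rfl
      rw [this]
      exact (hV t 1).differentiableAt.neg.div (hV t (-n)).differentiableAt hk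
    have ha := hd.hasDerivAt
    refine ha.congr_deriv ?_
    set a' := deriv (fun t => alp (n + 1) t) t
    have h0 := (hV t (0 + 1)).add (ha.mul (hV t (-n - 0)))
    have hz : (fun t => V n t (0 + 1)) + (fun t => alp (n + 1) t) * (fun t => V n t (-n - 0))
        = fun _ => (0 : ℝ) := by
      funext s
      have := (V_orth hD (n + 1) s).1 0 (by omega)
      simpa [V_succ] using this
    rw [hz] at h0
    have h1 := h0.unique (hasDerivAt_const t 0)
    have o1 : V (n + 1) t (-(n : ℤ)) = 0 := (V_orth hD (n + 1) t).1 n (by omega)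
    have o2 := V_one hD (n + 1) t
    rw [kap_succ hD, V_succ] at o2
    rw [V_succ] at o1
    have o3 := V_one hD n t
    rw [show -(n : ℤ) - -(n : ℤ) = 0 by ring] at o1
    rw [show (1 : ℤ) + 1 = 2 by ring] at o2
    have e1 : -(n : ℤ) - (0 + 1) = -n - 1 := by ring
    have e2 : -(n : ℤ) - (-n - 0) = 0 := by ring
    have e3 : -(n : ℤ) - (0 + 1) + 1 = -n := by ring
    rw [e3, e1, e2, show -(n : ℤ) - 0 = -n by ring, show (0 : ℤ) + 1 + 1 = 2 by ring,
      show (0 : ℤ) + 1 = 1 by ring] at h1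
    apply mul_right_cancel₀ hk
    unfold kap at *
    linear_combination h1 - o2 - alp (n + 1) t * o1
  induction n with
  | zero =>
    have : ∀ t m, HasDerivAt (fun t => V 0 t m)
      (V 0 t (m + 1) - alp 0 t * alp (0 + 1) t * V 0 t m + alp (0 + 1) t * V 0 t (-(0 : ℕ) - m)
        + alp 0 t * V 0 t (-(0 : ℕ) - m + 1)) t := by
      intro t m
      refine (phi_hasDerivAt m t).congr_deriv ?_
      rw [show alp 0 t = 1 from rfl]
      simp only [V]
      have e1 : phi (-((0 : ℕ) : ℤ) - m) t = phi m t := by rw [← phi_neg]; congr 1; simp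
      have e2 : phi (-((0 : ℕ) : ℤ) - m + 1) t = phi (m - 1) t := by
        rw [← phi_neg]; congr 1; push_cast; ring
      rw [e1, e2]; ring
    exact ⟨this, step 0 this⟩
  | succ n ih =>
    refine (fun h => ⟨h, step (n + 1) h⟩) ?_
    intro t m
    have h := (ih.1 t (m + 1)).add ((ih.2 t).mul (ih.1 t (-n - m)))
    refine h.congr_deriv ?_
    simp only [V_succ]
    have e1 : -(n : ℤ) - (m + 1) = -n - m - 1 := by ring
    have e2 : -(n : ℤ) - (-n - m) = m := by ring
    have e3 : -(n : ℤ) - (m + 1) + 1 = -n - m := by ring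
    have e4 : -((n + 1 : ℕ) : ℤ) - m + 1 = -n - m := by push_cast; ring
    have e5 : -(n : ℤ) - (-((n + 1 : ℕ) : ℤ) - m) = m + 1 := by push_cast; ring
    have e6 : -(n : ℤ) - (-n - m) = m := by ring
    rw [e3, e1, e2, e4, e5, e6]
    ring

/-- The string equation, expressing that the weight satisfies a first order differential equation
in `z`, and its consequence for the Verblunsky coefficients, the discrete Painlevé II equation. -/
lemma string_eq (hD : ∀ n t, 0 < toep n t) (n : ℕ) : (∀ (t : ℝ) (m : ℤ), (m + n) * V n t m = t * (-V n t (m + 1)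
      + alp n t * alp (n + 1) t * V n t m - alp (n + 1) t * V n t (-n - m)
        + alp n t * V n t (-n - m + 1))) ∧
    ∀ t, -((n : ℝ) + 1) * alp (n + 1) t =
      t * (1 - alp (n + 1) t ^ 2) * (alp (n + 2) t + alp n t) := by
  have step : ∀ n, (∀ (t : ℝ) (m : ℤ), (m + n) * V n t m = t * (-V n t (m + 1)
      + alp n t * alp (n + 1) t * V n t m - alp (n + 1) t * V n t (-n - m)
        + alp n t * V n t (-n - m + 1))) →
     ∀ t, -((n : ℝ) + 1) * alp (n + 1) t =
      t * (1 - alp (n + 1) t ^ 2) * (alp (n + 2) t + alp n t) := by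
    intro n hV t
    have hk := (V_orth hD n t).2.ne'
    have h1 := hV t 1
    have h2 := hV t (-n)
    have o1 : V (n + 1) t (-(n : ℤ)) = 0 := (V_orth hD (n + 1) t).1 n (by omega)
    have o2 := V_one hD (n + 1) t
    rw [kap_succ hD, V_succ] at o2
    rw [V_succ] at o1
    have o3 := V_one hD n t
    have e1 : -(n : ℤ) - -(n : ℤ) = 0 := by ring
    have e3 : -(n : ℤ) - 1 + 1 = -n := by ring
    rw [e1] at o1 h2
    rw [e3, show (1 : ℤ) + 1 = 2 by ring] at h1
    rw [show (1 : ℤ) + 1 = 2 by ring] at o2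
    push_cast at h1 h2
    apply mul_right_cancel₀ hk
    unfold kap at *
    linear_combination h1 - alp (n + 1) t * h2 - (n + 1) * o3 - t * o2 + t * alp (n + 1) t * o1
  induction n with
  | zero =>
    refine (fun h => ⟨h, step 0 h⟩) ?_
    intro t m
    have := phi_rec m t
    rw [show alp 0 t = 1 from rfl]
    simp only [V]
    have e1 : phi (-((0 : ℕ) : ℤ) - m) t = phi m t := by rw [← phi_neg]; congr 1; simp
    have e2 : phi (-((0 : ℕ) : ℤ) - m + 1) t = phi (m - 1) t := by
      rw [← phi_neg]; congr 1; push_cast; ring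
    rw [e1, e2]; push_cast; linear_combination this
  | succ n ih =>
    refine (fun h => ⟨h, step (n + 1) h⟩) ?_
    intro t m
    have h1 := ih.1 t (m + 1)
    have h2 := ih.1 t (-n - m)
    have h3 := ih.2 t
    simp only [V_succ]
    have e1 : -(n : ℤ) - (m + 1) = -n - m - 1 := by ring
    have e2 : -(n : ℤ) - (-n - m) = m := by ring
    have e3 : -(n : ℤ) - (m + 1) + 1 = -n - m := by ring
    have e4 : -((n + 1 : ℕ) : ℤ) - m + 1 = -n - m := by push_cast; ring
    have e5 : -(n : ℤ) - (-((n + 1 : ℕ) : ℤ) - m) = m + 1 := by push_cast; ring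
    have e6 : -(n : ℤ) - (-n - m) = m := by ring
    rw [e3, e1] at h1
    rw [e2] at h2
    rw [e4, e5, e1, e2]
    push_cast at h1 h2 ⊢
    linear_combination h1 - alp (n + 1) t * h2 - V n t (-n - m) * h3


/-! ### The equation of Painlevé V for Toeplitz determinants -/

lemma kap_hasDerivAt (hD : ∀ n t, 0 < toep n t) (n : ℕ) (t : ℝ) :
    HasDerivAt (fun t => kap n t) (-2 * (alp n t * alp (n + 1) t) * kap n t) t := by
  refine ((flow hD n).1 t (-n)).congr_deriv ?_
  have o := V_one hD n t
  rw [show -(n : ℤ) - -n = 0 by ring, show (0 : ℤ) + 1 = 1 by ring, o]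
  have : V n t (-(n : ℤ) + 1) + alp (n + 1) t * V n t 0 = 0 := by
    have := (V_orth hD (n + 1) t).1 n (by omega)
    rw [V_succ] at this
    rwa [show -(n : ℤ) - -n = 0 by ring] at this
  unfold kap
  linear_combination this

/-- The flow of `α_n` with `α_{n-1}` eliminated by the string equation. -/
lemma alp_up (hD : ∀ n t, 0 < toep n t) (n : ℕ) {t : ℝ} (ht : 0 < t) :
    HasDerivAt (fun t => alp n t)
      (n / t * alp n t + 2 * alp (n + 1) t * (1 - alp n t ^ 2)) t := by
  obtain _ | n := n
  · simpa [alp] using hasDerivAt_const t (1 : ℝ)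
  · refine ((flow hD n).2 t).congr_deriv ?_
    have := (string_eq hD n).2 t
    field_simp
    push_cast
    linear_combination this

/-- The flow of `α_{n+1}` with `α_{n+2}` eliminated by the string equation. -/
lemma alp_down (hD : ∀ n t, 0 < toep n t) (n : ℕ) {t : ℝ} (ht : 0 < t) :
    HasDerivAt (fun t => alp (n + 1) t)
      (-((n + 1) / t) * alp (n + 1) t - 2 * alp n t * (1 - alp (n + 1) t ^ 2)) t := by
  refine ((flow hD n).2 t).congr_deriv ?_
  have := (string_eq hD n).2 t
  field_simp
  linear_combination -this

lemma sum_hasDerivAt (hD : ∀ n t, 0 < toep n t) (n : ℕ) {t : ℝ} (ht : 0 < t) :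
    HasDerivAt (fun t => t * ∑ j ∈ Finset.range n, alp j t * alp (j + 1) t)
      (-2 * t * (1 - alp n t ^ 2)) t := by
  induction n with
  | zero => simpa [alp] using hasDerivAt_const t (0 : ℝ)
  | succ n ih =>
    have h := ih.add ((hasDerivAt_id t).mul ((alp_up hD n ht).mul (alp_down hD n ht)))
    have e : (fun t => t * ∑ j ∈ Finset.range (n + 1), alp j t * alp (j + 1) t) =
        (fun t => t * ∑ j ∈ Finset.range n, alp j t * alp (j + 1) t) +
          id * ((fun t => alp n t) * fun t => alp (n + 1) t) := by
      funext s; simp [Finset.sum_range_succ, mul_add]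
    rw [e]
    refine h.congr_deriv ?_
    simp only [id, Pi.mul_apply]
    field_simp
    ring

lemma log_toep_hasDerivAt (hD : ∀ n t, 0 < toep n t) (n : ℕ) (t : ℝ) :
    HasDerivAt (fun t => Real.log (toep n t))
      (-2 * ∑ j ∈ Finset.range n, alp j t * alp (j + 1) t) t := by
  have e : (fun t => Real.log (toep n t)) =
      fun t => ∑ j ∈ Finset.range n, Real.log (kap j t) := by
    funext s
    rw [toep_eq hD, Real.log_prod fun i _ => (V_orth hD i s).2.ne']
  rw [e, Finset.mul_sum]
  refine HasDerivAt.fun_sum fun j _ => ?_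
  have hk := (V_orth hD j t).2.ne'
  refine ((kap_hasDerivAt hD j t).log hk).congr_deriv ?_
  field_simp

/-- Painlevé V for Toeplitz determinants: `g = 1 - α_n²` at `t = √x`, and `alp_down`, `alp_up` form a
closed system for `(α_n, α_{n-1})`. -/
lemma painleve_of_toep (hD : ∀ n t, 0 < toep n t) (n : ℕ) (hn : 1 ≤ n) (F g : ℝ → ℝ)
    (hF : ∀ x, F x = Real.log (toep n (Real.sqrt x)))
    (hg : ∀ x, g x = deriv (fun y => y * deriv F y) x) :
    ∀ x : ℝ, 0 < x → g x ≠ 0 → g x ≠ 1 →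
      iteratedDeriv 2 g x - ((deriv g x) ^ 2 / 2) * (1 / (g x - 1) + 1 / g x)
        + deriv g x / x + (2 / x) * g x * (g x - 1)
        - ((n : ℝ) ^ 2 / (2 * x ^ 2)) * (g x - 1) / g x = 0 := by
  obtain ⟨n, rfl⟩ : ∃ k, n = k + 1 := ⟨n - 1, by omega⟩
  have hs : ∀ x : ℝ, 0 < x → HasDerivAt Real.sqrt (1 / (2 * Real.sqrt x)) x :=
    fun x hx => Real.hasDerivAt_sqrt hx.ne'
  have hs0 : ∀ x : ℝ, 0 < x → 0 < Real.sqrt x := fun x hx => Real.sqrt_pos.2 hx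
  have ev : ∀ x : ℝ, 0 < x → ∀ᶠ y in nhds x, 0 < y := fun x hx => lt_mem_nhds hx
  set B : ℝ → ℝ := fun t => ∑ j ∈ Finset.range (n + 1), alp j t * alp (j + 1) t with hB
  have hF1 : ∀ x, 0 < x → x * deriv F x = -(Real.sqrt x * B (Real.sqrt x)) := by
    intro x hx
    have h := (log_toep_hasDerivAt hD (n + 1) (Real.sqrt x)).comp x (hs x hx)
    rw [show F = (fun t => Real.log (toep (n + 1) t)) ∘ Real.sqrt from funext hF, h.deriv]
    have := hs0 x hx
    have h2 := Real.sq_sqrt hx.le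
    simp only [hB]
    field_simp
    rw [h2]
    ring
  have g0 : ∀ x, 0 < x → g x = 1 - alp (n + 1) (Real.sqrt x) ^ 2 := by
    intro x hx
    have h := ((sum_hasDerivAt hD (n + 1) (hs0 x hx)).comp x (hs x hx)).neg
    rw [hg, Filter.EventuallyEq.deriv_eq ((ev x hx).mono fun y hy => hF1 y hy)]
    refine h.deriv.trans ?_
    have := hs0 x hx
    field_simp
  have g1 : ∀ x, 0 < x → deriv g x =
      ((fun t => ((n + 1) * alp (n + 1) t ^ 2 + 2 * t * alp n t * alp (n + 1) t *
        (1 - alp (n + 1) t ^ 2)) / t ^ 2) ∘ Real.sqrt) x := by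
    intro x hx
    have h := (((alp_down hD n (hs0 x hx)).pow 2).const_sub 1).comp x (hs x hx)
    rw [Filter.EventuallyEq.deriv_eq ((ev x hx).mono fun y hy => g0 y hy)]
    refine h.deriv.trans ?_
    have := hs0 x hx
    simp only [Function.comp]
    field_simp
    ring
  intro x hx hx0 hx1
  have ht := hs0 x hx
  have hP := alp_down hD n ht
  have hQ := alp_up hD n ht
  have hd := ((((((hP.pow 2).const_mul ((n : ℝ) + 1)).add
      (((((hasDerivAt_id _).const_mul 2).mul hQ).mul hP).mul ((hP.pow 2).const_sub 1))).div
      ((hasDerivAt_id _).pow 2) (pow_ne_zero 2 ht.ne')).comp x (hs x hx)))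
  have g2 := show iteratedDeriv 2 g x = deriv ((fun t => ((n + 1) * alp (n + 1) t ^ 2 +
      2 * t * alp n t * alp (n + 1) t * (1 - alp (n + 1) t ^ 2)) / t ^ 2) ∘ Real.sqrt) x by
    rw [iteratedDeriv_succ, iteratedDeriv_one,
      Filter.EventuallyEq.deriv_eq ((ev x hx).mono fun y hy => g1 y hy)]
  replace g2 := g2.trans hd.deriv
  rw [g2, g1 x hx]
  rw [g0 x hx] at hx0 hx1 ⊢
  simp only [Function.comp, Pi.mul_apply, Pi.pow_apply, Pi.add_apply, id] at *
  have hx2 : x = Real.sqrt x ^ 2 := (Real.sq_sqrt hx.le).symm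
  generalize Real.sqrt x = t at *
  generalize alp (n + 1) t = p at *
  generalize alp n t = q at *
  subst hx2
  have hp : p ≠ 0 := by rintro rfl; simp at hx1
  push_cast
  rw [show 1 - p ^ 2 - 1 = -p ^ 2 by ring]
  field_simp
  ring


/-! ### A Jacobi–Trudi type identity -/

open Polynomial


/-- The complete homogeneous symmetric function `h_k` of the variables `z i`, `i ∈ s`, as a
coefficient of `∏ 1 / (1 - z i T)`. -/
def hom {ι : Type*} (z : ι → ℂ) (s : Finset ι) (k : ℕ) : ℂ :=
  PowerSeries.coeff k (∏ i ∈ s, PowerSeries.mk fun m => z i ^ m)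

/-- `h_k` for an integer index, with `h_k = 0` for `k < 0`. -/
def homZ {ι : Type*} (z : ι → ℂ) (s : Finset ι) (k : ℤ) : ℂ :=
  if 0 ≤ k then hom z s k.toNat else 0

lemma homZ_insert {ι : Type*} [DecidableEq ι] (z : ι → ℂ) (s : Finset ι) (a : ι) (ha : a ∉ s) (k : ℤ) :
    homZ z (insert a s) k = homZ z s k + z a * homZ z (insert a s) (k - 1) := by
  set H := ∏ i ∈ s, PowerSeries.mk fun m => z i ^ m with hH
  set G := PowerSeries.mk fun m => z a ^ m with hG
  have h1 : G = 1 + PowerSeries.C (z a) * (PowerSeries.X * G) := by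
    ext m
    obtain _ | m := m
    · simp [hG]
    · simp [hG, PowerSeries.coeff_one, pow_succ', PowerSeries.coeff_succ_X_mul]
  have h2 : G * H = H + PowerSeries.C (z a) * (PowerSeries.X * (G * H)) := by
    linear_combination H * h1
  have h3 : ∀ m, hom z (insert a s) m = PowerSeries.coeff m (G * H) := fun m => by
    rw [hom, Finset.prod_insert ha]
  rcases lt_trichotomy k 0 with hk | rfl | hk
  · simp [homZ, hk.not_ge, show ¬ (1 ≤ k) by omega]
  · simp only [homZ, le_refl, if_true, Int.toNat_zero, h3]
    rw [h2, if_neg (by omega)]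
    simp [hom, hH]
  · obtain ⟨m, rfl⟩ : ∃ m : ℕ, k = m + 1 := ⟨(k - 1).toNat, by omega⟩
    have e : ((m : ℤ) + 1).toNat = m + 1 := by omega
    have e' : ((m : ℤ) + 1 - 1).toNat = m := by omega
    rw [homZ, homZ, homZ, if_pos (by omega), if_pos (by omega), if_pos (by omega), e, e', h3, h3,
      h2, map_add, PowerSeries.coeff_C_mul, PowerSeries.coeff_succ_X_mul, ← h2]
    rfl

/-- The divided difference functional `f ↦ f[z_i : i ∈ s]`, given on monomials by
`X ^ k ↦ h_{k - |s| + 1}`; this form makes sense also when some of the `z i` coincide. -/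
def dd {ι : Type*} (z : ι → ℂ) (s : Finset ι) : ℂ[X] →ₗ[ℂ] ℂ :=
  Polynomial.lsum fun k => LinearMap.toSpanSingleton ℂ ℂ (homZ z s (k - s.card + 1))

lemma dd_apply {ι : Type*} (z : ι → ℂ) (s : Finset ι) (f : ℂ[X]) :
    dd z s f = f.sum fun k c => c * homZ z s (k - s.card + 1) := by
  simp [dd, Polynomial.lsum]

lemma dd_monomial {ι : Type*} (z : ι → ℂ) (s : Finset ι) (k : ℕ) (c : ℂ) :
    dd z s (monomial k c) = c * homZ z s (k - s.card + 1) := by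
  rw [dd_apply, sum_monomial_index]; simp

lemma dd_mul_sub {ι : Type*} [DecidableEq ι] (z : ι → ℂ) (s : Finset ι) (a : ι) (ha : a ∉ s)
    (f : ℂ[X]) : dd z (insert a s) ((X - C (z a)) * f) = dd z s f := by
  induction f using Polynomial.induction_on' with
  | add p q hp hq => rw [mul_add, map_add, map_add, hp, hq]
  | monomial k c =>
    rw [sub_mul, X_mul_monomial, C_mul_monomial, map_sub, dd_monomial, dd_monomial, dd_monomial,
      Finset.card_insert_of_notMem ha]
    have := homZ_insert z s a ha (k - s.card + 1)
    rw [show ((k + 1 : ℕ) : ℤ) - ((s.card + 1 : ℕ) : ℤ) + 1 = k - s.card + 1 by push_cast; ring,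
      show ((k : ℕ) : ℤ) - ((s.card + 1 : ℕ) : ℤ) + 1 = k - s.card + 1 - 1 by push_cast; ring]
    linear_combination c * this

lemma dd_mul_prod {ι : Type*} [DecidableEq ι] (z : ι → ℂ) (s t : Finset ι) (h : Disjoint t s)
    (f : ℂ[X]) : dd z (t ∪ s) ((∏ l ∈ t, (X - C (z l))) * f) = dd z s f := by
  induction t using Finset.induction_on generalizing f with
  | empty => simp
  | insert a t ha ih =>
    rw [Finset.disjoint_insert_left] at h
    rw [Finset.insert_union, Finset.prod_insert ha, mul_assoc, dd_mul_sub _ _ _ (by simp [ha, h.1]),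
      ih h.2]

lemma dd_empty {ι : Type*} (z : ι → ℂ) (f : ℂ[X]) : dd z ∅ f = 0 := by
  rw [dd_apply]
  refine Finset.sum_eq_zero fun k _ => ?_
  simp only [homZ, hom, Finset.prod_empty, PowerSeries.coeff_one]
  rw [if_pos (by simp; omega), if_neg (by simp), mul_zero]

lemma dd_singleton {ι : Type*} (z : ι → ℂ) (i : ι) (f : ℂ[X]) : dd z {i} f = f.eval (z i) := by
  rw [dd_apply, Polynomial.eval_eq_sum]
  refine Finset.sum_congr rfl fun k _ => ?_
  have e : ((k : ℤ) - (({i} : Finset ι).card : ℤ) + 1) = k := by simp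
  simp only [e]
  simp [homZ, hom]

/-- With `N_i = ∏_{l<i} (X - z_l)` and `Q_j = ∏_{l>j} (X - z_l)`, the matrix of divided differences
of `N_i Q_j P` at all the points is triangular with diagonal entries `P(z_i)`. Expanding `N_i` and
`Q_j` in monomials shows that it is the matrix on the right-hand side multiplied by unitriangular
matrices. -/
lemma jacobi_trudi {n : ℕ} (z : Fin n → ℂ) (P : ℂ[X]) :
    ∏ i, P.eval (z i) = (Matrix.of fun i j : Fin n =>
      P.sum fun m c => c * homZ z Finset.univ (m + i - j)).det := by
  set N : Fin n → ℂ[X] := fun i => ∏ l ∈ Finset.Iio i, (X - C (z l)) with hN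
  set N' : Fin n → ℂ[X] := fun j => ∏ l ∈ Finset.Ioi j, (X - C (z l)) with hN'
  have degN : ∀ i, (N i).natDegree = i := fun i => by
    rw [hN, natDegree_prod_of_monic _ _ fun l _ => monic_X_sub_C _]
    simp
  have degN' : ∀ j, (N' j).natDegree = n - 1 - j := fun j => by
    rw [hN', natDegree_prod_of_monic _ _ fun l _ => monic_X_sub_C _]
    simp
  have monN : ∀ i, (N i).Monic := fun i => monic_prod_of_monic _ _ fun l _ => monic_X_sub_C _
  have monN' : ∀ i, (N' i).Monic := fun i => monic_prod_of_monic _ _ fun l _ => monic_X_sub_C _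
  set U : Matrix (Fin n) (Fin n) ℂ := Matrix.of fun i a => (N i).coeff a with hU
  set W : Matrix (Fin n) (Fin n) ℂ := Matrix.of fun b j => (N' j).coeff (n - 1 - b) with hW
  set G : Matrix (Fin n) (Fin n) ℂ := Matrix.of fun i j : Fin n =>
      P.sum fun m c => c * homZ z Finset.univ (m + i - j) with hG
  have dU : U.det = 1 := by
    rw [Matrix.det_of_isLowerTriangular]
    · refine Finset.prod_eq_one fun i _ => ?_
      have := monN i
      rw [Monic, leadingCoeff, degN] at this
      exact this
    · intro i j hij
      have : (i : ℕ) < j := hij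
      exact coeff_eq_zero_of_natDegree_lt ((degN i).trans_lt this)
  have dW : W.det = 1 := by
    rw [Matrix.det_of_isLowerTriangular]
    · refine Finset.prod_eq_one fun i _ => ?_
      have := monN' i
      rw [Monic, leadingCoeff, degN'] at this
      exact this
    · intro i j hij
      have : (i : ℕ) < j := hij
      exact coeff_eq_zero_of_natDegree_lt ((degN' j).trans_lt (by omega))
  have key : U * G * W = Matrix.of fun i j => dd z Finset.univ (N i * (N' j * P)) := by
    ext i j
    have e1 : N i = ∑ a : Fin n, monomial a ((N i).coeff a) := by
      conv_lhs => rw [(N i).as_sum_range' n (by rw [degN]; exact i.2)]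
      rw [Finset.sum_range]
    have e2 : N' j = ∑ b : Fin n, monomial (n - 1 - b) ((N' j).coeff (n - 1 - b)) := by
      conv_lhs => rw [(N' j).as_sum_range' n (by rw [degN']; omega)]
      rw [← Finset.sum_range_reflect, Finset.sum_range]
    have e3 : ∀ (a b : Fin n) (c d : ℂ), dd z Finset.univ (monomial a c * (monomial (n - 1 - b) d * P)) =
        c * G a b * d := by
      intro a b c d
      rw [← mul_assoc, monomial_mul_monomial, hG]
      simp only [of_apply]
      conv_lhs => rw [P.as_sum_support, Finset.mul_sum, map_sum]
      simp only [monomial_mul_monomial, dd_monomial, Polynomial.sum, Finset.mul_sum, Finset.sum_mul]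
      refine Finset.sum_congr rfl fun m _ => ?_
      have : ((a + (n - 1 - b) + m : ℕ) : ℤ) - ((Finset.univ : Finset (Fin n)).card : ℤ) + 1 = m + a - b := by
        simp; omega
      rw [this]; ring
    rw [of_apply]
    conv_rhs => rw [e1, e2, Finset.sum_mul, map_sum]
    simp only [Finset.sum_mul, Finset.mul_sum, map_sum, e3]
    rw [mul_apply]
    simp only [mul_apply, Finset.sum_mul]
    rw [Finset.sum_comm]
    rfl
  have dG : G.det = (U * G * W).det := by rw [det_mul, det_mul, dU, dW]; simp
  rw [dG, key, Matrix.det_of_isUpperTriangular]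
  · refine Finset.prod_congr rfl fun i _ => ?_
    rw [of_apply, ← mul_assoc, hN, hN', ← Finset.prod_union, ← dd_singleton z i, ← dd_mul_prod z {i}]
    · congr 2
      ext l; simp [lt_or_ge]
    · simp
    · rw [Finset.disjoint_left]; intro l; simp; exact fun h => h.le
  · intro i j hij
    have hij : j < i := hij
    have h1 : N' j = (∏ l ∈ Finset.Ioi j \ Finset.Ici i, (X - C (z l))) *
        ∏ l ∈ Finset.Ici i, (X - C (z l)) :=
      (Finset.prod_sdiff (fun l hl => Finset.mem_Ioi.2 (hij.trans_le (Finset.mem_Ici.1 hl)))).symm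
    have h2 : N i * ∏ l ∈ Finset.Ici i, (X - C (z l)) = ∏ l, (X - C (z l)) := by
      rw [hN, ← Finset.prod_union]
      · congr 1; ext l; simp [lt_or_ge]
      · rw [Finset.disjoint_left]; intro l; simp
    rw [of_apply, h1, show ∀ a b c d : ℂ[X], a * (b * c * d) = (a * c) * (b * d) by intros; ring, h2]
    have := dd_mul_prod z ∅ Finset.univ (by simp)
      ((∏ l ∈ Finset.Ioi j \ Finset.Ici i, (X - C (z l))) * P)
    rwa [Finset.union_empty, dd_empty] at this

/-! ### Tensor products of symmetric powers -/

/-- The action `p(Y) ↦ p(Y M)` of a matrix `M` on polynomials in the entries of `Y`. -/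
def subst {n : ℕ} (M : Matrix (Fin n) (Fin n) ℂ) :
    MvPolynomial (Fin n × Fin n) ℂ →ₐ[ℂ] MvPolynomial (Fin n × Fin n) ℂ :=
  MvPolynomial.aeval fun ij => ∑ l, MvPolynomial.X (ij.1, l) * MvPolynomial.C (M l ij.2)

/-- Evaluation of a polynomial in the matrix entries at the matrix `Y`. -/
def evm {n : ℕ} (Y : Matrix (Fin n) (Fin n) ℂ) : MvPolynomial (Fin n × Fin n) ℂ →ₐ[ℂ] ℂ :=
  MvPolynomial.aeval fun ij => Y ij.1 ij.2

lemma evm_subst {n : ℕ} (Y M : Matrix (Fin n) (Fin n) ℂ) (p : MvPolynomial (Fin n × Fin n) ℂ) :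
    evm Y (subst M p) = evm (Y * M) p := by
  suffices h : (evm Y).comp (subst M) = evm (Y * M) by rw [← h]; rfl
  refine MvPolynomial.algHom_ext fun ij => ?_
  simp [evm, subst, mul_apply]

lemma subst_mul {n : ℕ} (M M' : Matrix (Fin n) (Fin n) ℂ) (p : MvPolynomial (Fin n × Fin n) ℂ) :
    subst (M * M') p = subst M (subst M' p) := by
  suffices h : subst (M * M') = (subst M).comp (subst M') by rw [h]; rfl
  refine MvPolynomial.algHom_ext fun ij => ?_
  simp only [subst, mul_apply, AlgHom.comp_apply, MvPolynomial.aeval_X, map_sum, map_mul,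
    Finset.mul_sum, Finset.sum_mul, MvPolynomial.algHom_C, MvPolynomial.algebraMap_eq]
  rw [Finset.sum_comm]
  simp only [mul_assoc]

/-- The multigrading of polynomials in the entries of `Y` by the degrees in each row. -/
def rowWt {n : ℕ} (ij : Fin n × Fin n) : Fin n → ℕ := Pi.single ij.1 1

lemma weight_rowWt {n : ℕ} (β : Fin n × Fin n →₀ ℕ) (i : Fin n) :
    Finsupp.weight rowWt β i = ∑ j, β (i, j) := by
  rw [Finsupp.weight_apply, Finsupp.sum_fintype _ _ (by simp), Finset.sum_apply,
    Fintype.sum_prod_type, Finset.sum_eq_single i]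
  · simp [rowWt]
  · intro b _ hb; simp [rowWt, hb.symm]
  · simp

lemma subst_hom {n : ℕ} (M : Matrix (Fin n) (Fin n) ℂ) (β : Fin n × Fin n →₀ ℕ) (k : Fin n → ℕ)
    (hβ : Finsupp.weight rowWt β = k) :
    MvPolynomial.IsWeightedHomogeneous rowWt (subst M (MvPolynomial.monomial β 1)) k := by
  have h : subst M (MvPolynomial.monomial β 1) = ∏ ij, (subst M (MvPolynomial.X ij)) ^ β ij := by
    rw [MvPolynomial.monomial_eq, Finsupp.prod_fintype _ _ (by simp)]
    simp
  rw [h, ← hβ, Finsupp.weight_apply, Finsupp.sum_fintype _ _ (by simp)]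
  refine MvPolynomial.IsWeightedHomogeneous.prod _ _ _ fun ij _ =>
    MvPolynomial.IsWeightedHomogeneous.pow ?_ _
  rw [subst, MvPolynomial.aeval_X]
  refine MvPolynomial.IsWeightedHomogeneous.sum _ _ _ fun l _ => ?_
  have := (MvPolynomial.isWeightedHomogeneous_X ℂ rowWt (ij.1, l)).mul
    (MvPolynomial.isWeightedHomogeneous_C rowWt (M l ij.2))
  simpa [rowWt] using this

/-- A monomial in the matrix entries as a tuple of monomials, one for each row. -/
def expo {n : ℕ} : (Fin n → Fin n →₀ ℕ) ≃ (Fin n × Fin n →₀ ℕ) where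
  toFun b := Finsupp.equivFunOnFinite.symm fun ij => b ij.1 ij.2
  invFun β := fun i => Finsupp.equivFunOnFinite.symm fun j => β (i, j)
  left_inv b := by ext; simp
  right_inv β := by ext; simp

lemma expo_apply {n : ℕ} (b : Fin n → Fin n →₀ ℕ) (ij : Fin n × Fin n) : expo b ij = b ij.1 ij.2 := by
  simp [expo]

/-- The monomials of degree `k i` in the `i`-th row for every `i`. -/
def rowB {n : ℕ} (k : Fin n → ℕ) : Finset (Fin n × Fin n →₀ ℕ) :=
  (Fintype.piFinset fun i => Finset.finsuppAntidiag Finset.univ (k i)).map expo.toEmbedding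

lemma mem_rowB {n : ℕ} (k : Fin n → ℕ) (β : Fin n × Fin n →₀ ℕ) :
    β ∈ rowB k ↔ Finsupp.weight rowWt β = k := by
  obtain ⟨b, rfl⟩ := expo.surjective β
  rw [rowB, Finset.mem_map_equiv, Equiv.symm_apply_apply]
  simp [funext_iff, weight_rowWt, expo_apply]

lemma hom_expand {n : ℕ} (k : Fin n → ℕ) (p : MvPolynomial (Fin n × Fin n) ℂ)
    (hp : MvPolynomial.IsWeightedHomogeneous rowWt p k) :
    p = ∑ β ∈ rowB k, MvPolynomial.coeff β p • MvPolynomial.monomial β 1 := by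
  conv_lhs => rw [p.as_sum]
  rw [Finset.sum_subset (s₂ := rowB k)]
  · refine Finset.sum_congr rfl fun β _ => ?_
    rw [MvPolynomial.smul_monomial, smul_eq_mul, mul_one]
  · intro β hβ
    rw [mem_rowB]
    exact hp (MvPolynomial.mem_support_iff.1 hβ)
  · intro β _ hβ
    rw [MvPolynomial.notMem_support_iff.1 hβ, MvPolynomial.monomial_zero]

/-- The trace of `subst M` on the polynomials of degree `k i` in the `i`-th row, i.e. the character
of `⨂_i Sym^{k_i} ℂⁿ` at `M`. -/
def symTr {n : ℕ} (k : Fin n → ℕ) (M : Matrix (Fin n) (Fin n) ℂ) : ℂ :=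
  ∑ β ∈ rowB k, MvPolynomial.coeff β (subst M (MvPolynomial.monomial β 1))

lemma symTr_mul_comm {n : ℕ} (k : Fin n → ℕ) (M M' : Matrix (Fin n) (Fin n) ℂ) :
    symTr k (M * M') = symTr k (M' * M) := by
  have h : ∀ M M' : Matrix (Fin n) (Fin n) ℂ, symTr k (M * M') = ∑ β ∈ rowB k, ∑ γ ∈ rowB k,
      MvPolynomial.coeff γ (subst M' (MvPolynomial.monomial β 1)) *
        MvPolynomial.coeff β (subst M (MvPolynomial.monomial γ 1)) := by
    intro M M'
    refine Finset.sum_congr rfl fun β hβ => ?_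
    rw [mem_rowB] at hβ
    rw [subst_mul, hom_expand k _ (subst_hom M' β k hβ), map_sum, MvPolynomial.coeff_sum]
    refine Finset.sum_congr rfl fun γ _ => ?_
    rw [← hom_expand k _ (subst_hom M' β k hβ), map_smul, MvPolynomial.coeff_smul, smul_eq_mul]
  rw [h, h, Finset.sum_comm]
  simp only [mul_comm]

lemma symTr_diagonal {n : ℕ} (k : Fin n → ℕ) (z : Fin n → ℂ) :
    symTr k (diagonal z) = ∏ i, hom z Finset.univ (k i) := by
  have h : ∀ β : Fin n × Fin n →₀ ℕ, MvPolynomial.coeff β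
      (subst (diagonal z) (MvPolynomial.monomial β 1)) = ∏ ij, z ij.2 ^ β ij := by
    intro β
    have : subst (diagonal z) (MvPolynomial.monomial β 1) =
        MvPolynomial.C (∏ ij, z ij.2 ^ β ij) * MvPolynomial.monomial β 1 := by
      rw [MvPolynomial.monomial_eq, Finsupp.prod_fintype _ _ (by simp)]
      simp only [map_prod, map_pow, map_one, one_mul]
      rw [← Finset.prod_mul_distrib]
      refine Finset.prod_congr rfl fun ij _ => ?_
      rw [← mul_pow, subst, MvPolynomial.aeval_X, Finset.sum_eq_single ij.2]
      · simp [mul_comm]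
      · intro b _ hb; simp [diagonal_apply_ne _ hb]
      · simp
    rw [this, MvPolynomial.coeff_C_mul]
    simp
  simp only [symTr, h, rowB, Finset.sum_map, hom, PowerSeries.coeff_prod, PowerSeries.coeff_mk]
  rw [Finset.prod_univ_sum]
  refine Finset.sum_congr rfl fun b _ => ?_
  rw [Fintype.prod_prod_type]
  simp [expo_apply]

/-! ### Zariski density of the unitary group -/

open scoped ComplexOrder

lemma infinite_unitCircle : (Metric.sphere (0 : ℂ) 1).Infinite := by
  refine (isPreconnected_sphere (by rw [Complex.rank_real_complex]; norm_num) 0 1).infinite_of_nontrivial ?_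
  exact ⟨1, by simp, -1, by simp, by norm_num⟩

lemma diagonal_mem_unitary {n : ℕ} (d : Fin n → ℂ) (hd : ∀ i, ‖d i‖ = 1) :
    diagonal d ∈ Matrix.unitaryGroup (Fin n) ℂ := by
  rw [Matrix.mem_unitaryGroup_iff, star_eq_conjTranspose, diagonal_conjTranspose,
    diagonal_mul_diagonal, ← diagonal_one]
  congr 1
  funext i
  simp [Complex.mul_conj, Complex.normSq_eq_norm_sq, hd]

/-- A singular value decomposition. -/
lemma exists_UDW {n : ℕ} (Y : Matrix (Fin n) (Fin n) ℂ) (hY : Y.det ≠ 0) :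
    ∃ U ∈ Matrix.unitaryGroup (Fin n) ℂ, ∃ W ∈ Matrix.unitaryGroup (Fin n) ℂ, ∃ d : Fin n → ℂ,
      Y = U * diagonal d * W := by
  have hu : IsUnit Y := (Matrix.isUnit_iff_isUnit_det Y).2 hY.isUnit
  have hP : (Yᴴ * Y).PosDef := Matrix.PosDef.conjTranspose_mul_self Y
    (Matrix.mulVec_injective_iff_isUnit.2 hu)
  have hpos := hP.eigenvalues_pos
  set W := hP.isHermitian.eigenvectorUnitary with hW
  set e : Fin n → ℝ := hP.isHermitian.eigenvalues with he
  have hsp := hP.isHermitian.spectral_theorem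
  rw [Unitary.conjStarAlgAut_apply] at hsp
  set d : Fin n → ℂ := fun i => (Real.sqrt (e i) : ℂ) with hd
  have hd0 : ∀ i, d i ≠ 0 := fun i => by
    simp [hd, Real.sqrt_ne_zero'.2 (hpos i)]
  have hW1 : star (W : Matrix (Fin n) (Fin n) ℂ) * W = 1 := Unitary.star_mul_self_of_mem W.2
  have hW2 : (W : Matrix (Fin n) (Fin n) ℂ) * star (W : Matrix (Fin n) (Fin n) ℂ) = 1 :=
    Unitary.mul_star_self_of_mem W.2
  have hdd : diagonal (fun i => (d i)⁻¹) * diagonal d = (1 : Matrix (Fin n) (Fin n) ℂ) := by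
    rw [diagonal_mul_diagonal, ← diagonal_one]; congr 1; funext i; exact inv_mul_cancel₀ (hd0 i)
  refine ⟨Y * W * diagonal (fun i => (d i)⁻¹), ?_, star (W : Matrix (Fin n) (Fin n) ℂ),
    Unitary.star_mem W.2, d, ?_⟩
  · rw [Matrix.mem_unitaryGroup_iff', star_eq_conjTranspose, conjTranspose_mul, conjTranspose_mul,
      diagonal_conjTranspose]
    have h1 : star (W : Matrix (Fin n) (Fin n) ℂ) * (Yᴴ * Y) * W = diagonal (fun i => (e i : ℂ)) := by
      rw [hsp, ← hW, show ∀ a b c : Matrix (Fin n) (Fin n) ℂ, a * (b * c * a) * b = (a * b) * c * (a * b)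
        by intros; simp only [mul_assoc], hW1, one_mul, mul_one]
      rfl
    have h2 : ∀ a b c d e f : Matrix (Fin n) (Fin n) ℂ,
        a * (b * c) * (d * e * f) = a * (b * (c * d) * e) * f := by
      intros; simp only [mul_assoc]
    rw [h2, ← star_eq_conjTranspose (W : Matrix (Fin n) (Fin n) ℂ), h1, diagonal_mul_diagonal,
      diagonal_mul_diagonal, ← diagonal_one]
    congr 1
    funext i
    have h3 : (e i : ℂ) = d i * d i := by
      rw [hd, ← Complex.ofReal_mul, Real.mul_self_sqrt (hpos i).le]
    have h4 : star (d i) = d i := by simp [hd]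
    have h5 := hd0 i
    simp only [Pi.star_apply, star_inv₀, h3, h4]
    field_simp
  · rw [mul_assoc (Y * _), hdd, mul_one, mul_assoc, hW2, mul_one]

/-- The unitary group is Zariski dense in the space of matrices. An invertible matrix is
`U diag(d) W` with `U`, `W` unitary; for `d` in the torus this is unitary, and the torus is Zariski
dense in `ℂⁿ`. -/
lemma evm_eq_zero {n : ℕ} (f : MvPolynomial (Fin n × Fin n) ℂ)
    (hf : ∀ V ∈ Matrix.unitaryGroup (Fin n) ℂ, evm V f = 0) : f = 0 := by
  have h1 : ∀ Y : Matrix (Fin n) (Fin n) ℂ, Y.det ≠ 0 → evm Y f = 0 := by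
    intro Y hY
    obtain ⟨U, hU, W, hW, d, rfl⟩ := exists_UDW Y hY
    set g : MvPolynomial (Fin n) ℂ := MvPolynomial.aeval
      (fun ij : Fin n × Fin n => ∑ l, MvPolynomial.C (U ij.1 l * W l ij.2) * MvPolynomial.X l) f with hg
    have hev : ∀ d : Fin n → ℂ, MvPolynomial.eval d g = evm (U * diagonal d * W) f := by
      intro d
      suffices h : (MvPolynomial.aeval d).comp (MvPolynomial.aeval
          (fun ij : Fin n × Fin n => ∑ l, MvPolynomial.C (U ij.1 l * W l ij.2) * MvPolynomial.X l)) =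
          evm (U * diagonal d * W) by rw [← h]; rfl
      refine MvPolynomial.algHom_ext fun ij => ?_
      simp only [AlgHom.comp_apply, MvPolynomial.aeval_X, map_sum, map_mul, evm,
        MvPolynomial.algHom_C]
      rw [mul_apply]
      refine Finset.sum_congr rfl fun l _ => ?_
      rw [mul_diagonal]
      simp; ring
    have hg0 : g = 0 := by
      refine MvPolynomial.funext_set (fun _ => Metric.sphere (0 : ℂ) 1)
        (fun _ => infinite_unitCircle) fun d hd => ?_
      rw [hev, map_zero]
      refine hf _ (mul_mem (mul_mem hU (diagonal_mem_unitary d fun i => ?_)) hW)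
      simpa using hd i (Set.mem_univ i)
    rw [← hev, hg0, map_zero]
  set D : MvPolynomial (Fin n × Fin n) ℂ := (Matrix.mvPolynomialX (Fin n) (Fin n) ℂ).det with hD
  have hDe : ∀ Y : Matrix (Fin n) (Fin n) ℂ, evm Y D = Y.det := by
    intro Y
    rw [hD, AlgHom.map_det]
    congr 1
    ext i j; simp [evm]
  have hD0 : D ≠ 0 := fun h => by
    have := hDe 1
    rw [h] at this; simp at this
  have : f * D = 0 := by
    refine MvPolynomial.funext fun y => ?_
    have e : ∀ p, MvPolynomial.eval y p = evm (Matrix.of fun i j => y (i, j)) p := fun p => rfl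
    rw [map_zero, map_mul, e, e, hDe]
    by_cases h : (Matrix.of fun i j => y (i, j)).det = 0
    · rw [h, mul_zero]
    · rw [h1 _ h, zero_mul]
  exact (mul_eq_zero.1 this).resolve_right hD0

lemma evm_mvPolynomialX {n : ℕ} (Y : Matrix (Fin n) (Fin n) ℂ) :
    evm Y (Matrix.mvPolynomialX (Fin n) (Fin n) ℂ).det = Y.det := by
  rw [AlgHom.map_det]
  congr 1
  ext i j; simp [evm]

/-! ### Averages over the unitary group -/

lemma isClosed_unitaryGroup (n : ℕ) :
    IsClosed ((Matrix.unitaryGroup (Fin n) ℂ : Submonoid (Matrix (Fin n) (Fin n) ℂ)) :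
      Set (Matrix (Fin n) (Fin n) ℂ)) := by
  have : ((Matrix.unitaryGroup (Fin n) ℂ : Submonoid (Matrix (Fin n) (Fin n) ℂ)) :
      Set (Matrix (Fin n) (Fin n) ℂ)) = {M | M * star M = 1} := by
    ext M; exact Matrix.mem_unitaryGroup_iff
  rw [this]
  exact isClosed_eq (by fun_prop) continuous_const

instance compactSpace_unitaryGroup (n : ℕ) : CompactSpace (Matrix.unitaryGroup (Fin n) ℂ) := by
  have hK : IsCompact (Set.pi Set.univ fun _ : Fin n => Set.pi Set.univ fun _ : Fin n =>
      Metric.closedBall (0 : ℂ) 1) :=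
    isCompact_univ_pi fun _ => isCompact_univ_pi fun _ => isCompact_closedBall 0 1
  refine isCompact_iff_compactSpace.1 (hK.of_isClosed_subset (isClosed_unitaryGroup n) ?_)
  intro M hM i _ j _
  simpa using entry_norm_bound_of_unitary hM i j

instance borelSpace_unitaryGroup (n : ℕ) : BorelSpace (Matrix.unitaryGroup (Fin n) ℂ) := ⟨rfl⟩

lemma integrable_of_continuous {n : ℕ} (μ : Measure (Matrix.unitaryGroup (Fin n) ℂ))
    [IsProbabilityMeasure μ] (f : Matrix.unitaryGroup (Fin n) ℂ → ℂ) (hf : Continuous f) :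
    Integrable f μ :=
  hf.integrable_of_hasCompactSupport (HasCompactSupport.of_compactSpace f)

lemma continuous_coeff_subst {n : ℕ} (α : Fin n × Fin n →₀ ℕ) (p : MvPolynomial (Fin n × Fin n) ℂ) :
    Continuous fun M : Matrix (Fin n) (Fin n) ℂ => MvPolynomial.coeff α (subst M p) := by
  induction p using MvPolynomial.induction_on generalizing α with
  | C a => simp [subst]; exact continuous_const
  | add p q hp hq => simp only [map_add, MvPolynomial.coeff_add]; exact (hp α).add (hq α)
  | mul_X p ij hp =>
    have : ∀ M : Matrix (Fin n) (Fin n) ℂ, MvPolynomial.coeff α (subst M (p * MvPolynomial.X ij)) =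
        ∑ l, M l ij.2 * if (ij.1, l) ∈ α.support then
          MvPolynomial.coeff (α - Finsupp.single (ij.1, l) 1) (subst M p) else 0 := by
      intro M
      rw [map_mul, show subst M (MvPolynomial.X ij) = _ from MvPolynomial.aeval_X _ _, Finset.mul_sum,
        MvPolynomial.coeff_sum]
      refine Finset.sum_congr rfl fun l _ => ?_
      rw [← mul_assoc, mul_comm _ (MvPolynomial.C _), MvPolynomial.coeff_C_mul,
        MvPolynomial.coeff_mul_X']
    simp only [this]
    refine continuous_finsetSum _ fun l _ => Continuous.mul (by fun_prop) ?_
    split_ifs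
    · exact hp _
    · exact continuous_const

lemma continuous_evm {n : ℕ} (p : MvPolynomial (Fin n × Fin n) ℂ) :
    Continuous fun M : Matrix (Fin n) (Fin n) ℂ => evm M p := by
  have : Continuous fun y : Fin n × Fin n → ℂ => MvPolynomial.eval y p := MvPolynomial.continuous_eval p
  exact this.comp (f := fun (M : Matrix (Fin n) (Fin n) ℂ) (ij : Fin n × Fin n) => M ij.1 ij.2) (by fun_prop)

/-- The multiplicity of `det ^ N` in `⨂_i Sym^{k_i} ℂⁿ`. -/
lemma integral_symTr {n : ℕ} (μ : Measure (Matrix.unitaryGroup (Fin n) ℂ)) [IsProbabilityMeasure μ]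
    [μ.IsMulLeftInvariant] (N : ℕ) (k : Fin n → ℕ) :
    ∫ M : Matrix.unitaryGroup (Fin n) ℂ, star (M : Matrix (Fin n) (Fin n) ℂ).det ^ N *
      symTr k (M : Matrix (Fin n) (Fin n) ℂ) ∂μ = if ∀ i, k i = N then 1 else 0 := by
  set D : MvPolynomial (Fin n × Fin n) ℂ := (Matrix.mvPolynomialX (Fin n) (Fin n) ℂ).det with hD
  have cont_det : Continuous fun M : Matrix.unitaryGroup (Fin n) ℂ =>
      star (M : Matrix (Fin n) (Fin n) ℂ).det ^ N := by fun_prop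
  have cont_R : ∀ α β : Fin n × Fin n →₀ ℕ, Continuous fun M : Matrix.unitaryGroup (Fin n) ℂ =>
      star (M : Matrix (Fin n) (Fin n) ℂ).det ^ N *
        MvPolynomial.coeff α (subst (M : Matrix (Fin n) (Fin n) ℂ) (MvPolynomial.monomial β 1)) :=
    fun α β => cont_det.mul ((continuous_coeff_subst α _).comp continuous_subtype_val)
  have cont_E : ∀ p : MvPolynomial (Fin n × Fin n) ℂ, Continuous fun M : Matrix.unitaryGroup (Fin n) ℂ =>
      star (M : Matrix (Fin n) (Fin n) ℂ).det ^ N * evm (M : Matrix (Fin n) (Fin n) ℂ) p :=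
    fun p => cont_det.mul ((continuous_evm p).comp continuous_subtype_val)
  have det_unit : ∀ V ∈ Matrix.unitaryGroup (Fin n) ℂ, V.det * star V.det = 1 := fun V hV =>
    Unitary.mul_star_self_of_mem (Matrix.det_of_mem_unitary hV)
  -- the average of `conj (det M) ^ N • (subst M (Y ^ β))`
  set q : (Fin n × Fin n →₀ ℕ) → MvPolynomial (Fin n × Fin n) ℂ := fun β =>
    ∑ α ∈ rowB k, MvPolynomial.monomial α (∫ M : Matrix.unitaryGroup (Fin n) ℂ,
      star (M : Matrix (Fin n) (Fin n) ℂ).det ^ N *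
        MvPolynomial.coeff α (subst (M : Matrix (Fin n) (Fin n) ℂ) (MvPolynomial.monomial β 1)) ∂μ) with hq
  have hq_coeff : ∀ α ∈ rowB k, ∀ β, MvPolynomial.coeff α (q β) = ∫ M : Matrix.unitaryGroup (Fin n) ℂ,
      star (M : Matrix (Fin n) (Fin n) ℂ).det ^ N *
        MvPolynomial.coeff α (subst (M : Matrix (Fin n) (Fin n) ℂ) (MvPolynomial.monomial β 1)) ∂μ := by
    intro α hα β
    rw [hq, MvPolynomial.coeff_sum, Finset.sum_eq_single α]
    · simp
    · intro γ _ hγ; rw [MvPolynomial.coeff_monomial, if_neg hγ]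
    · intro h; exact absurd hα h
  have hq_ev : ∀ β ∈ rowB k, ∀ Y : Matrix (Fin n) (Fin n) ℂ, evm Y (q β) =
      ∫ M : Matrix.unitaryGroup (Fin n) ℂ, star (M : Matrix (Fin n) (Fin n) ℂ).det ^ N *
        evm (Y * (M : Matrix (Fin n) (Fin n) ℂ)) (MvPolynomial.monomial β 1) ∂μ := by
    intro β hβ Y
    rw [mem_rowB] at hβ
    rw [hq, map_sum]
    have h1 : ∀ M : Matrix (Fin n) (Fin n) ℂ, evm (Y * M) (MvPolynomial.monomial β 1) =
        ∑ α ∈ rowB k, MvPolynomial.coeff α (subst M (MvPolynomial.monomial β 1)) *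
          evm Y (MvPolynomial.monomial α 1) := by
      intro M
      rw [← evm_subst]
      conv_lhs => rw [hom_expand k _ (subst_hom M β k hβ)]
      simp only [map_sum, map_smul, smul_eq_mul]
    simp only [h1, Finset.mul_sum]
    rw [integral_finsetSum]
    · refine Finset.sum_congr rfl fun α _ => ?_
      simp only [← mul_assoc]
      rw [integral_mul_const, ← mul_one (∫ M : Matrix.unitaryGroup (Fin n) ℂ, _ ∂μ), ← smul_eq_mul, ← MvPolynomial.smul_monomial,
        map_smul, smul_eq_mul, smul_eq_mul, mul_one]
    · intro α _
      simp only [← mul_assoc]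
      exact (integrable_of_continuous μ _ (cont_R α β)).mul_const _
  -- left invariance makes `q β` a semi-invariant on the unitary group, hence everywhere
  have hq_eq : ∀ β ∈ rowB k, q β = MvPolynomial.C (∫ M : Matrix.unitaryGroup (Fin n) ℂ,
      star (M : Matrix (Fin n) (Fin n) ℂ).det ^ N *
        evm (M : Matrix (Fin n) (Fin n) ℂ) (MvPolynomial.monomial β 1) ∂μ) * D ^ N := by
    intro β hβ
    rw [← sub_eq_zero]
    refine evm_eq_zero _ fun V hV => ?_
    rw [map_sub, sub_eq_zero, map_mul, map_pow, hD, evm_mvPolynomialX, MvPolynomial.algHom_C, hq_ev β hβ]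
    have h2 := integral_mul_left_eq_self (μ := μ) (fun M : Matrix.unitaryGroup (Fin n) ℂ =>
      star ((V⁻¹ * (M : Matrix (Fin n) (Fin n) ℂ))).det ^ N *
        evm (M : Matrix (Fin n) (Fin n) ℂ) (MvPolynomial.monomial β 1)) ⟨V, hV⟩
    have hVdet : IsUnit V.det := by
      have := det_unit V hV
      exact IsUnit.of_mul_eq_one _ this
    have e1 : ∀ M : Matrix.unitaryGroup (Fin n) ℂ, V⁻¹ * (((⟨V, hV⟩ : Matrix.unitaryGroup (Fin n) ℂ) * M :
        Matrix.unitaryGroup (Fin n) ℂ) : Matrix (Fin n) (Fin n) ℂ) = M := by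
      intro M
      rw [Submonoid.coe_mul, ← mul_assoc, Matrix.nonsing_inv_mul _ hVdet, one_mul]
    simp only [e1] at h2
    refine Eq.trans ?_ (h2.trans ?_)
    · rfl
    · rw [Algebra.algebraMap_self_apply, mul_comm, ← integral_const_mul]
      refine integral_congr_ae (Filter.Eventually.of_forall fun M => ?_)
      simp only
      have : star (V⁻¹).det = V.det := by
        have h3 := det_unit V hV
        have h4 : (V⁻¹).det * V.det = 1 := by rw [← det_mul, Matrix.nonsing_inv_mul _ hVdet, det_one]
        have h5 : (V⁻¹).det = star V.det := by
          linear_combination star V.det * h4 - (V⁻¹).det * h3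
        rw [h5, star_star]
      rw [det_mul, star_mul, this, mul_pow]
      ring
  have hDhom : MvPolynomial.IsWeightedHomogeneous rowWt (D ^ N) (fun _ : Fin n => N) := by
    have : MvPolynomial.IsWeightedHomogeneous rowWt D (fun _ : Fin n => 1) := by
      rw [hD, det_apply]
      refine MvPolynomial.IsWeightedHomogeneous.sum _ _ _ fun σ _ => ?_
      have h1 : MvPolynomial.IsWeightedHomogeneous rowWt
          (∏ i, Matrix.mvPolynomialX (Fin n) (Fin n) ℂ (σ i) i) (∑ i, rowWt (σ i, i)) :=
        MvPolynomial.IsWeightedHomogeneous.prod _ _ _ fun i _ =>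
          MvPolynomial.isWeightedHomogeneous_X ℂ rowWt (σ i, i)
      have h2 : (∑ i, rowWt (σ i, i)) = fun _ : Fin n => 1 := by
        funext l
        rw [Finset.sum_apply]
        refine (Equiv.sum_comp σ fun i => (Pi.single i 1 : Fin n → ℕ) l).trans ?_
        simp [Pi.single_apply]
      rw [h2] at h1
      exact (MvPolynomial.weightedHomogeneousSubmodule ℂ rowWt (fun _ : Fin n => 1)).smul_of_tower_mem _ h1
    have := this.pow N
    convert this using 1
    funext i; simp
  have h1 : ∫ M : Matrix.unitaryGroup (Fin n) ℂ, star (M : Matrix (Fin n) (Fin n) ℂ).det ^ N *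
      symTr k (M : Matrix (Fin n) (Fin n) ℂ) ∂μ = ∑ β ∈ rowB k, MvPolynomial.coeff β (q β) := by
    simp only [symTr, Finset.mul_sum]
    rw [integral_finsetSum _ fun β _ => integrable_of_continuous μ _ (cont_R β β)]
    exact Finset.sum_congr rfl fun β hβ => (hq_coeff β hβ β).symm
  rw [h1]
  split_ifs with hk
  · have hk' : k = fun _ => N := funext hk
    have h3 : ∀ M : Matrix.unitaryGroup (Fin n) ℂ, ∑ β ∈ rowB k, star (M : Matrix (Fin n) (Fin n) ℂ).det ^ N *
        evm (M : Matrix (Fin n) (Fin n) ℂ) (MvPolynomial.monomial β 1) * MvPolynomial.coeff β (D ^ N) = 1 := by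
      intro M
      have h4 : ∑ β ∈ rowB k, evm (M : Matrix (Fin n) (Fin n) ℂ) (MvPolynomial.monomial β 1) *
          MvPolynomial.coeff β (D ^ N) = (M : Matrix (Fin n) (Fin n) ℂ).det ^ N := by
        rw [← evm_mvPolynomialX, ← map_pow, ← hD, hk']
        conv_rhs => rw [hom_expand _ _ hDhom, map_sum]
        exact Finset.sum_congr rfl fun β _ => by rw [map_smul, smul_eq_mul, mul_comm]
      simp only [mul_assoc]
      rw [← Finset.mul_sum, h4, ← mul_pow, mul_comm, det_unit _ M.2, one_pow]
    calc _ = ∑ β ∈ rowB k, ∫ M : Matrix.unitaryGroup (Fin n) ℂ, star (M : Matrix (Fin n) (Fin n) ℂ).det ^ N *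
        evm (M : Matrix (Fin n) (Fin n) ℂ) (MvPolynomial.monomial β 1) * MvPolynomial.coeff β (D ^ N) ∂μ := by
          refine Finset.sum_congr rfl fun β hβ => ?_
          rw [hq_eq β hβ, MvPolynomial.coeff_C_mul, integral_mul_const]
      _ = _ := by
          rw [← integral_finsetSum _ fun β _ => (integrable_of_continuous μ _ (cont_E _)).mul_const _]
          simp only [h3]; simp
  · refine Finset.sum_eq_zero fun β hβ => ?_
    rw [hq_eq β hβ, MvPolynomial.coeff_C_mul, hDhom.coeff_eq_zero, mul_zero]
    rw [(mem_rowB k β).1 hβ]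
    exact fun h => hk fun i => congrFun h i

/-! ### Eigenvalues and the Heine identity -/

lemma unitary_diagonalizable {n : ℕ} (M : Matrix (Fin n) (Fin n) ℂ)
    (hM : M ∈ Matrix.unitaryGroup (Fin n) ℂ) :
    ∃ (P P' : Matrix (Fin n) (Fin n) ℂ) (z : Fin n → ℂ), P' * P = 1 ∧ M = P * (diagonal z * P') ∧
      ∀ i, ‖z i‖ = 1 := by
  set f : Module.End ℂ (EuclideanSpace ℂ (Fin n)) := Matrix.toEuclideanLin M with hf
  have hin : ∀ v w, inner ℂ (f v) (f w) = inner ℂ v w := by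
    intro v w
    rw [hf, ← LinearMap.adjoint_inner_right, ← Matrix.toEuclideanLin_conjTranspose_eq_adjoint]
    have : Mᴴ * M = 1 := Matrix.mem_unitaryGroup_iff'.1 hM
    congr 1
    simp [Matrix.toLpLin_apply, this]
  have hnorm : ∀ v, ‖f v‖ = ‖v‖ := by
    intro v
    rw [@norm_eq_sqrt_re_inner ℂ, @norm_eq_sqrt_re_inner ℂ, hin]
  have hinj : Function.Injective f := by
    rw [← LinearMap.ker_eq_bot, LinearMap.ker_eq_bot']
    intro v hv
    rw [← norm_eq_zero, ← hnorm, hv, norm_zero]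
  have hss : f.IsSemisimple := by
    rw [Module.End.isSemisimple_iff]
    intro p hp
    refine ⟨pᗮ, ?_, p.isCompl_orthogonal⟩
    rw [Module.End.mem_invtSubmodule] at hp ⊢
    have hmap : p.map f = p := by
      refine Submodule.eq_of_le_of_finrank_le (Submodule.map_le_iff_le_comap.2 hp) ?_
      rw [(Submodule.equivMapOfInjective f hinj p).finrank_eq]
    intro v hv
    rw [Submodule.mem_comap, Submodule.mem_orthogonal]
    intro u hu
    rw [← hmap] at hu
    obtain ⟨w, hw, rfl⟩ := hu
    rw [hin]
    exact hv w hw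
  have hInt : DirectSum.IsInternal f.eigenspace :=
    DirectSum.isInternal_submodule_of_iSupIndep_of_iSup_eq_top f.eigenspaces_iSupIndep
      hss.iSup_eigenspace_eq_top
  set b0 := hInt.collectedBasis fun μ => Module.finBasis ℂ (f.eigenspace μ) with hb0
  set e := (EuclideanSpace.basisFun (Fin n) ℂ).toBasis with he
  set φ := b0.indexEquiv e with hφ
  set b := b0.reindex φ with hb
  set z : Fin n → ℂ := fun j => (φ.symm j).1 with hz
  have hfb : ∀ j, f (b j) = z j • b j := by
    intro j
    have := hInt.collectedBasis_mem (fun μ => Module.finBasis ℂ (f.eigenspace μ)) (φ.symm j)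
    rw [hb, Module.Basis.reindex_apply]
    exact Module.End.mem_eigenspace_iff.1 this
  refine ⟨e.toMatrix b, b.toMatrix e, z, Module.Basis.toMatrix_mul_toMatrix_flip _ _, ?_, ?_⟩
  · have h1 := basis_toMatrix_mul_linearMap_toMatrix_mul_basis_toMatrix e b e b f
    have h2 : LinearMap.toMatrix b b f = diagonal z := by
      ext i j
      rw [LinearMap.toMatrix_apply, hfb, map_smul, Finsupp.smul_apply, Module.Basis.repr_self,
        diagonal_apply, Finsupp.single_apply]
      by_cases h : j = i
      · simp [h]
      · simp [h, Ne.symm h]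
    rw [h2, mul_assoc] at h1
    rw [h1]
    ext i j
    simp [LinearMap.toMatrix_apply, he, hf, Matrix.toLpLin_apply]
  · intro j
    have h1 := hnorm (b j)
    rw [hfb, norm_smul] at h1
    have h2 : ‖b j‖ ≠ 0 := norm_ne_zero_iff.2 (b.ne_zero j)
    exact mul_right_cancel₀ h2 (h1.trans (one_mul _).symm)

/-- The eigenvalues `z` of a unitary matrix lie on the circle, and its characters are symmetric
functions of `z`. -/
lemma exists_eigenvalues {n : ℕ} (M : Matrix (Fin n) (Fin n) ℂ)
    (hM : M ∈ Matrix.unitaryGroup (Fin n) ℂ) :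
    ∃ z : Fin n → ℂ, (∀ i, ‖z i‖ = 1) ∧ M.trace = ∑ i, z i ∧ M.det = ∏ i, z i ∧
      ∀ k, symTr k M = ∏ i, hom z Finset.univ (k i) := by
  obtain ⟨P, P', z, h1, h2, h3⟩ := unitary_diagonalizable M hM
  refine ⟨z, h3, ?_, ?_, fun k => ?_⟩
  · rw [h2, trace_mul_comm, mul_assoc, h1, mul_one, trace_diagonal]
  · rw [h2, det_mul_comm, mul_assoc, h1, mul_one, det_diagonal]
  · rw [h2, symTr_mul_comm, mul_assoc, h1, mul_one, symTr_diagonal]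

/-- `symTr` for integer degrees, zero as soon as one of them is negative. -/
def symTrZ {n : ℕ} (k : Fin n → ℤ) (M : Matrix (Fin n) (Fin n) ℂ) : ℂ :=
  if ∀ i, 0 ≤ k i then symTr (fun i => (k i).toNat) M else 0

lemma symTrZ_eq {n : ℕ} (k : Fin n → ℤ) (M : Matrix (Fin n) (Fin n) ℂ) (z : Fin n → ℂ)
    (hz : ∀ k, symTr k M = ∏ i, hom z Finset.univ (k i)) :
    symTrZ k M = ∏ i, homZ z Finset.univ (k i) := by
  unfold symTrZ
  split_ifs with h
  · rw [hz]
    exact Finset.prod_congr rfl fun i _ => by rw [homZ, if_pos (h i)]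
  · push Not at h
    obtain ⟨i, hi⟩ := h
    rw [Finset.prod_eq_zero (Finset.mem_univ i)]
    rw [homZ, if_neg (not_le.2 hi)]

lemma continuous_symTrZ {n : ℕ} (k : Fin n → ℤ) :
    Continuous fun M : Matrix (Fin n) (Fin n) ℂ => symTrZ k M := by
  unfold symTrZ
  split_ifs
  · exact continuous_finsetSum _ fun β _ => continuous_coeff_subst β _
  · exact continuous_const

lemma integral_symTrZ {n : ℕ} (μ : Measure (Matrix.unitaryGroup (Fin n) ℂ)) [IsProbabilityMeasure μ]
    [μ.IsMulLeftInvariant] (N : ℕ) (k : Fin n → ℤ) :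
    ∫ M : Matrix.unitaryGroup (Fin n) ℂ, star (M : Matrix (Fin n) (Fin n) ℂ).det ^ N *
      symTrZ k (M : Matrix (Fin n) (Fin n) ℂ) ∂μ = ∏ i, if k i = N then 1 else 0 := by
  unfold symTrZ
  rw [Finset.prod_ite_zero]
  split_ifs with h h' h'
  · rw [integral_symTr, if_pos]
    · simp
    · intro i; rw [h' i (Finset.mem_univ i)]; simp
  · rw [integral_symTr, if_neg]
    intro h2
    refine h' fun i _ => ?_
    rw [← h2 i, Int.toNat_of_nonneg (h i)]
  · exact absurd (fun i => by rw [h' i (Finset.mem_univ i)]; simp) h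
  · simp

/-- The class function `M ↦ det P(M)`, written as a combination of the characters `symTrZ` by
expanding the determinant in `jacobi_trudi`; see `detPoly_eq`. -/
def detPoly {n : ℕ} (P : ℂ[X]) (M : Matrix (Fin n) (Fin n) ℂ) : ℂ :=
  ∑ σ : Equiv.Perm (Fin n), (Equiv.Perm.sign σ : ℂ) * ∑ m ∈ Fintype.piFinset fun _ : Fin n => P.support,
    (∏ i, P.coeff (m i)) * symTrZ (fun i => (m i : ℤ) + (σ i : ℕ) - (i : ℕ)) M

lemma sum_support_det {n : ℕ} (P : ℂ[X]) (a : Fin n → Fin n → ℕ → ℂ) :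
    (Matrix.of fun i j : Fin n => P.sum fun m c => c * a i j m).det =
    ∑ σ : Equiv.Perm (Fin n), (Equiv.Perm.sign σ : ℂ) *
      ∑ m ∈ Fintype.piFinset fun _ : Fin n => P.support,
        (∏ i, P.coeff (m i)) * ∏ i, a (σ i) i (m i) := by
  rw [det_apply']
  refine Finset.sum_congr rfl fun σ _ => ?_
  simp only [of_apply, Polynomial.sum]
  rw [Finset.prod_univ_sum]
  simp only [Finset.prod_mul_distrib]

lemma detPoly_eq {n : ℕ} (P : ℂ[X]) (M : Matrix (Fin n) (Fin n) ℂ) (z : Fin n → ℂ)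
    (hz : ∀ k, symTr k M = ∏ i, hom z Finset.univ (k i)) :
    detPoly P M = ∏ i, P.eval (z i) := by
  rw [jacobi_trudi, sum_support_det P fun i j m => homZ z Finset.univ ((m : ℤ) + (i : ℕ) - (j : ℕ))]
  simp only [detPoly, symTrZ_eq _ M z hz]

lemma continuous_detPoly {n : ℕ} (P : ℂ[X]) :
    Continuous fun M : Matrix (Fin n) (Fin n) ℂ => detPoly P M := by
  unfold detPoly
  exact continuous_finsetSum _ fun σ _ => continuous_const.mul <| continuous_finsetSum _ fun m _ =>
    continuous_const.mul (continuous_symTrZ _)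

/-- The Heine identity: the mean of `conj (det M) ^ N det P(M)` is the Toeplitz determinant of the
coefficients of `z ^ (-N) P(z)`. -/
lemma heine {n : ℕ} (μ : Measure (Matrix.unitaryGroup (Fin n) ℂ)) [IsProbabilityMeasure μ]
    [μ.IsMulLeftInvariant] (N : ℕ) (P : ℂ[X]) :
    ∫ M : Matrix.unitaryGroup (Fin n) ℂ, star (M : Matrix (Fin n) (Fin n) ℂ).det ^ N *
      detPoly P (M : Matrix (Fin n) (Fin n) ℂ) ∂μ =
    (Matrix.of fun i j : Fin n => P.sum fun m c =>
      c * if (m : ℤ) + (i : ℕ) - (j : ℕ) = N then 1 else 0).det := by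
  rw [sum_support_det P fun i j m => if (m : ℤ) + (i : ℕ) - (j : ℕ) = N then 1 else 0]
  have hc : ∀ k : Fin n → ℤ, Integrable (fun M : Matrix.unitaryGroup (Fin n) ℂ =>
      star (M : Matrix (Fin n) (Fin n) ℂ).det ^ N * symTrZ k (M : Matrix (Fin n) (Fin n) ℂ)) μ :=
    fun k => integrable_of_continuous μ _ (Continuous.mul (by fun_prop)
      ((continuous_symTrZ k).comp continuous_subtype_val))
  simp only [detPoly, Finset.mul_sum, mul_left_comm (star _ ^ N)]
  rw [integral_finsetSum _ fun σ _ => integrable_finsetSum _ fun m _ =>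
    ((hc _).const_mul _).const_mul _]
  refine Finset.sum_congr rfl fun σ _ => ?_
  rw [integral_finsetSum _ fun m _ => ((hc _).const_mul _).const_mul _]
  refine Finset.sum_congr rfl fun m _ => ?_
  rw [integral_const_mul, integral_const_mul, integral_symTrZ]

/-! ### The exponential symbol -/

/-- The exponential series truncated after degree `K`. -/
def texp (K : ℕ) (w : ℂ) : ℂ := ∑ a ∈ Finset.range (K + 1), w ^ a / a.factorial

/-- The Laurent polynomial `e_K(t z) e_K(t / z)` on the unit circle, where `e_K = texp K`. -/
def sym (K : ℕ) (t : ℝ) (z : ℂ) : ℂ := texp K (t * z) * star (texp K (t * z))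

/-- The polynomial `z ^ K e_K(t z) e_K(t / z)`. -/
def symPoly (K : ℕ) (t : ℝ) : ℂ[X] :=
  (∑ a ∈ Finset.range (K + 1), monomial a ((t : ℂ) ^ a / a.factorial)) *
    ∑ b ∈ Finset.range (K + 1), monomial (K - b) ((t : ℂ) ^ b / b.factorial)

lemma symPoly_eval (K : ℕ) (t : ℝ) (z : ℂ) (hz : ‖z‖ = 1) :
    star z ^ K * (symPoly K t).eval z = sym K t z := by
  have hzz : star z * z = 1 := by
    rw [mul_comm]; simp [Complex.mul_conj, Complex.normSq_eq_norm_sq, hz]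
  rw [symPoly, eval_mul, mul_left_comm, sym]
  congr 1
  · simp only [texp, eval_finsetSum, eval_monomial, mul_pow]
    exact Finset.sum_congr rfl fun a _ => by ring
  · simp only [texp, eval_finsetSum, eval_monomial, star_sum, Finset.mul_sum]
    refine Finset.sum_congr rfl fun b hb => ?_
    have hb : b ≤ K := Nat.lt_succ_iff.1 (Finset.mem_range.1 hb)
    have h1 : star z ^ K * z ^ (K - b) = star z ^ b := by
      obtain ⟨c, rfl⟩ := Nat.exists_eq_add_of_le hb
      rw [Nat.add_sub_cancel_left, pow_add, mul_assoc, ← mul_pow, hzz, one_pow, mul_one]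
    have h2 : star ((t * z) ^ b / (b.factorial : ℂ)) = (t : ℂ) ^ b * star z ^ b / b.factorial := by
      simp [mul_pow]
    rw [h2, ← h1]; ring

lemma norm_texp_le (K : ℕ) (w : ℂ) : ‖texp K w‖ ≤ Real.exp ‖w‖ := by
  refine (norm_sum_le _ _).trans ?_
  simp only [norm_div, norm_pow, Complex.norm_natCast]
  exact Real.sum_le_exp_of_nonneg (norm_nonneg _) _

lemma norm_sym_le (K : ℕ) (t : ℝ) (z : ℂ) (hz : ‖z‖ = 1) : ‖sym K t z‖ ≤ Real.exp |t| ^ 2 := by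
  have := norm_texp_le K (t * z)
  rw [norm_mul, hz, mul_one, Complex.norm_real, Real.norm_eq_abs] at this
  rw [sym, norm_mul, norm_star, sq]
  exact mul_le_mul this this (norm_nonneg _) (Real.exp_pos _).le

lemma tendsto_sym (t : ℝ) (z : ℂ) : Filter.Tendsto (fun K => sym K t z) Filter.atTop
    (nhds ((Real.exp (2 * t * z.re) : ℝ) : ℂ)) := by
  have h1 : Filter.Tendsto (fun K => texp K (t * z)) Filter.atTop (nhds (Complex.exp (t * z))) := by
    have := (NormedSpace.expSeries_div_hasSum_exp (𝔸 := ℂ) (t * z : ℂ)).tendsto_sum_nat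
    rw [← Complex.exp_eq_exp_ℂ] at this
    exact this.comp (Filter.tendsto_add_atTop_nat 1)
  have h2 := h1.mul ((continuous_star.tendsto _).comp h1)
  have h3 : Complex.exp (t * z) * star (Complex.exp (t * z)) = ((Real.exp (2 * t * z.re) : ℝ) : ℂ) := by
    have : star (Complex.exp (t * z)) = Complex.exp (t * star z) := by
      rw [Complex.star_def, ← Complex.exp_conj]; simp
    rw [this, ← Complex.exp_add, Complex.ofReal_exp, ← mul_add, Complex.star_def, Complex.add_conj]
    congr 1
    push_cast; ring
  rw [h3] at h2
  exact h2

/-- The Heine identity for `symPoly K t` as `K → ∞`, by dominated convergence over `U(n)`. -/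
lemma tendsto_heine {n : ℕ} (μ : Measure (Matrix.unitaryGroup (Fin n) ℂ)) [IsProbabilityMeasure μ]
    [μ.IsMulLeftInvariant] (t : ℝ) :
    Filter.Tendsto (fun K => (Matrix.of fun i j : Fin n => (symPoly K t).sum fun m c =>
      c * if (m : ℤ) + (i : ℕ) - (j : ℕ) = K then 1 else 0).det) Filter.atTop
      (nhds (((∫ M : Matrix.unitaryGroup (Fin n) ℂ,
        Real.exp (t * (2 * (M : Matrix (Fin n) (Fin n) ℂ).trace.re)) ∂μ : ℝ)) : ℂ)) := by
  have key : ∀ M : Matrix.unitaryGroup (Fin n) ℂ, ∃ z : Fin n → ℂ, (∀ i, ‖z i‖ = 1) ∧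
      (M : Matrix (Fin n) (Fin n) ℂ).trace = ∑ i, z i ∧
      ∀ K, star (M : Matrix (Fin n) (Fin n) ℂ).det ^ K * detPoly (symPoly K t) (M : Matrix (Fin n) (Fin n) ℂ) =
        ∏ i, sym K t (z i) := by
    intro M
    obtain ⟨z, h1, h2, h3, h4⟩ := exists_eigenvalues (M : Matrix (Fin n) (Fin n) ℂ) M.2
    refine ⟨z, h1, h2, fun K => ?_⟩
    rw [detPoly_eq _ _ z h4, h3, star_prod, ← Finset.prod_pow, ← Finset.prod_mul_distrib]
    exact Finset.prod_congr rfl fun i _ => symPoly_eval K t (z i) (h1 i)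
  simp only [← heine μ]
  rw [← integral_complex_ofReal]
  refine tendsto_integral_of_dominated_convergence (fun _ => (Real.exp |t| ^ 2) ^ n) ?_ ?_ ?_ ?_
  · intro K
    refine Continuous.aestronglyMeasurable (Continuous.mul (by fun_prop) ?_)
    exact (continuous_detPoly _).comp continuous_subtype_val
  · exact integrable_const _
  · intro K
    refine Filter.Eventually.of_forall fun M => ?_
    obtain ⟨z, h1, h2, h3⟩ := key M
    rw [h3, norm_prod]
    refine (Finset.prod_le_prod (fun _ _ => norm_nonneg _)
      fun i _ => norm_sym_le K t (z i) (h1 i)).trans ?_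
    simp
  · refine Filter.Eventually.of_forall fun M => ?_
    obtain ⟨z, h1, h2, h3⟩ := key M
    simp only [h3]
    have h4 := tendsto_finsetProd Finset.univ fun i _ => tendsto_sym t (z i)
    convert h4 using 2
    rw [← Complex.ofReal_prod, ← Real.exp_sum, h2, Complex.re_sum, ← Finset.mul_sum]
    congr 2; ring

lemma integral_exp_int (k : ℤ) : ∫ θ in (0 : ℝ)..(2 * Real.pi), Complex.exp (k * θ * Complex.I) =
    if k = 0 then (2 * Real.pi : ℂ) else 0 := by
  split_ifs with h
  · simp [h]
  · have h1 : (k * Complex.I : ℂ) ≠ 0 := mul_ne_zero (Int.cast_ne_zero.2 h) Complex.I_ne_zero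
    have h2 := integral_exp_mul_complex (a := 0) (b := 2 * Real.pi) h1
    have h3 : Complex.exp (k * Complex.I * ((2 * Real.pi : ℝ) : ℂ)) = 1 := by
      rw [← Complex.exp_int_mul_two_pi_mul_I k]; congr 1; push_cast; ring
    rw [h3] at h2
    simp only [Complex.ofReal_zero, mul_zero, Complex.exp_zero, sub_self, zero_div] at h2
    rw [← h2]
    refine intervalIntegral.integral_congr fun θ _ => ?_
    congr 1; ring

lemma coeff_eq_integral (K : ℕ) (t : ℝ) (d : ℤ) :
    ((symPoly K t).sum fun m c => c * if (m : ℤ) + d = K then 1 else 0) =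
      (2 * Real.pi : ℂ)⁻¹ * ∫ θ in (0 : ℝ)..(2 * Real.pi),
        sym K t (Complex.exp (θ * Complex.I)) * Complex.exp (d * θ * Complex.I) := by
  have h1 : ∀ θ : ℝ, sym K t (Complex.exp (θ * Complex.I)) * Complex.exp (d * θ * Complex.I) =
      ∑ m ∈ (symPoly K t).support, (symPoly K t).coeff m *
        Complex.exp (((m + d - K : ℤ) : ℂ) * θ * Complex.I) := by
    intro θ
    rw [← symPoly_eval _ _ _ (Complex.norm_exp_ofReal_mul_I θ), eval_eq_sum, Polynomial.sum, Finset.mul_sum,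
      Finset.sum_mul]
    refine Finset.sum_congr rfl fun m _ => ?_
    have : star (Complex.exp (θ * Complex.I)) = Complex.exp (-(θ * Complex.I)) := by
      rw [Complex.star_def, ← Complex.exp_conj]; simp
    rw [this, ← Complex.exp_nat_mul, ← Complex.exp_nat_mul,
      show ((m + d - K : ℤ) : ℂ) * θ * Complex.I = K * (-(θ * Complex.I)) + m * (θ * Complex.I) + d * θ * Complex.I by
        push_cast; ring, Complex.exp_add, Complex.exp_add]
    ring
  simp only [h1]
  rw [intervalIntegral.integral_finsetSum]
  · simp only [intervalIntegral.integral_const_mul, integral_exp_int]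
    rw [Polynomial.sum, Finset.mul_sum]
    refine Finset.sum_congr rfl fun m _ => ?_
    have : (2 * Real.pi : ℂ) ≠ 0 := by simp [Real.pi_ne_zero]
    simp only [sub_eq_zero]
    split_ifs
    · field_simp
    · simp
  · intro m _
    exact Continuous.intervalIntegrable (by fun_prop) _ _

lemma integral_eq_phi (t : ℝ) (d : ℤ) : (2 * Real.pi : ℂ)⁻¹ * ∫ θ in (0 : ℝ)..(2 * Real.pi),
    ((Real.exp (2 * t * Real.cos θ) : ℝ) : ℂ) * Complex.exp (d * θ * Complex.I) = (phi d t : ℂ) := by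
  have h0 : ∫ θ in (0 : ℝ)..(2 * Real.pi), Real.sin (d * θ) * Real.exp (2 * t * Real.cos θ) = 0 := by
    have h := intervalIntegral.integral_comp_sub_left (a := 0) (b := 2 * Real.pi)
      (fun θ => Real.sin (d * θ) * Real.exp (2 * t * Real.cos θ)) (2 * Real.pi)
    have e : ∀ θ : ℝ, Real.sin (d * (2 * Real.pi - θ)) * Real.exp (2 * t * Real.cos (2 * Real.pi - θ)) =
        -(Real.sin (d * θ) * Real.exp (2 * t * Real.cos θ)) := by
      intro θ
      rw [mul_sub, Real.sin_int_mul_two_pi_sub, Real.cos_two_pi_sub]; ring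
    simp only [e, sub_self, sub_zero, intervalIntegral.integral_neg] at h
    linarith
  have h1 : ∀ θ : ℝ, ((Real.exp (2 * t * Real.cos θ) : ℝ) : ℂ) * Complex.exp (d * θ * Complex.I) =
      ((Real.cos (d * θ) * Real.exp (2 * t * Real.cos θ) : ℝ) : ℂ) +
      ((Real.sin (d * θ) * Real.exp (2 * t * Real.cos θ) : ℝ) : ℂ) * Complex.I := by
    intro θ
    rw [Complex.exp_mul_I]; push_cast; ring
  simp only [h1]
  rw [intervalIntegral.integral_add, intervalIntegral.integral_mul_const, intervalIntegral.integral_ofReal,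
    intervalIntegral.integral_ofReal, h0, phi]
  · push_cast; simp
  · exact Continuous.intervalIntegrable (by fun_prop) _ _
  · exact Continuous.intervalIntegrable (by fun_prop) _ _

/-- The Laurent coefficients of `sym K t` converge to those of the weight. -/
lemma tendsto_coeff (t : ℝ) (d : ℤ) :
    Filter.Tendsto (fun K : ℕ => (symPoly K t).sum fun m c => c * if (m : ℤ) + d = K then 1 else 0)
      Filter.atTop (nhds (phi d t : ℂ)) := by
  simp only [coeff_eq_integral]
  rw [← integral_eq_phi]
  refine Filter.Tendsto.const_mul _ ?_
  refine intervalIntegral.tendsto_integral_filter_of_dominated_convergence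
    (fun _ => Real.exp |t| ^ 2) ?_ ?_ ?_ ?_
  · refine Filter.Eventually.of_forall fun K => Continuous.aestronglyMeasurable ?_
    unfold sym texp
    fun_prop
  · refine Filter.Eventually.of_forall fun K => Filter.Eventually.of_forall fun θ _ => ?_
    have : ‖Complex.exp (d * θ * Complex.I)‖ = 1 := by
      have := Complex.norm_exp_ofReal_mul_I (d * θ)
      push_cast at this; exact this
    rw [norm_mul, this, mul_one]
    exact norm_sym_le K t _ (Complex.norm_exp_ofReal_mul_I θ)
  · exact intervalIntegrable_const
  · refine Filter.Eventually.of_forall fun θ _ => Filter.Tendsto.mul_const _ ?_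
    have := tendsto_sym t (Complex.exp (θ * Complex.I))
    rwa [Complex.exp_ofReal_mul_I_re] at this

/-- The mean of `exp (t (tr M + conj (tr M)))` is the Toeplitz determinant of `exp (2 t cos θ)`. -/
lemma integral_eq_toep {n : ℕ} (μ : Measure (Matrix.unitaryGroup (Fin n) ℂ)) [IsProbabilityMeasure μ]
    [μ.IsMulLeftInvariant] (t : ℝ) :
    ∫ M : Matrix.unitaryGroup (Fin n) ℂ,
      Real.exp (t * (2 * (M : Matrix (Fin n) (Fin n) ℂ).trace.re)) ∂μ = toep n t := by
  have h1 := tendsto_heine μ t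
  have h2 : Filter.Tendsto (fun K => (Matrix.of fun i j : Fin n => (symPoly K t).sum fun m c =>
      c * if (m : ℤ) + (i : ℕ) - (j : ℕ) = K then 1 else 0).det) Filter.atTop
      (nhds ((toep n t : ℝ) : ℂ)) := by
    have h3 : ((toep n t : ℝ) : ℂ) = (Matrix.of fun i j : Fin n => (phi ((i : ℤ) - j) t : ℂ)).det := by
      rw [toep]
      exact (RingHom.map_det Complex.ofRealHom _)
    rw [h3]
    simp only [det_apply', of_apply]
    refine tendsto_finsetSum _ fun σ _ => Filter.Tendsto.const_mul _ ?_
    refine tendsto_finsetProd _ fun i _ => ?_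
    simpa only [add_sub_assoc] using tendsto_coeff t ((σ i : ℕ) - (i : ℕ))
  exact_mod_cast tendsto_nhds_unique h1 h2

/-- The Toeplitz determinant is the mean of a positive function. -/
lemma toep_pos (n : ℕ) (t : ℝ) : 0 < toep n t := by
  set μ : Measure (Matrix.unitaryGroup (Fin n) ℂ) := Measure.haarMeasure ⊤ with hμ
  have : IsProbabilityMeasure μ := ⟨by
    simpa using Measure.haarMeasure_self (K₀ := (⊤ : TopologicalSpace.PositiveCompacts (Matrix.unitaryGroup (Fin n) ℂ)))⟩
  rw [← integral_eq_toep μ t]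
  refine integral_exp_pos ?_
  refine Continuous.integrable_of_hasCompactSupport ?_ (HasCompactSupport.of_compactSpace _)
  have : Continuous fun M : Matrix.unitaryGroup (Fin n) ℂ => (M : Matrix (Fin n) (Fin n) ℂ).trace.re :=
    Complex.continuous_re.comp (Continuous.matrix_trace continuous_subtype_val)
  fun_prop

end PV

theorem unitary_integral_painleveV (n : ℕ) (hn : 1 ≤ n)
    (μ : Measure (Matrix.unitaryGroup (Fin n) ℂ)) [IsProbabilityMeasure μ]
    [μ.IsMulLeftInvariant]
    (F : ℝ → ℝ)
    -- `F(x) = log E_{U(n)}[exp(√x·(tr M + conj(tr M)))]`; the integrand is the positive real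
    -- number `exp(√x · 2·Re(tr M))` since `tr M + conj(tr M) = 2·Re(tr M)`.
    (hF : ∀ x, F x = Real.log (∫ M : Matrix.unitaryGroup (Fin n) ℂ,
      Real.exp (Real.sqrt x *
        (2 * (Matrix.trace (M : Matrix (Fin n) (Fin n) ℂ)).re)) ∂μ))
    (g : ℝ → ℝ) (hg : ∀ x, g x = deriv (fun y => y * deriv F y) x) :
    ∀ x : ℝ, 0 < x → g x ≠ 0 → g x ≠ 1 →
      iteratedDeriv 2 g x - ((deriv g x) ^ 2 / 2) * (1 / (g x - 1) + 1 / g x)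
        + deriv g x / x + (2 / x) * g x * (g x - 1)
        - ((n : ℝ) ^ 2 / (2 * x ^ 2)) * (g x - 1) / g x = 0 := by
  exact PV.painleve_of_toep PV.toep_pos n hn F g
    (fun x => by rw [hF x, PV.integral_eq_toep μ (Real.sqrt x)]) hg

end
end
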